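/- Calabi-type C¹ estimate (Proposition 4.1 in coordinates): let (g, β) be a smooth solution of the coordinate pluriclosed flow on [0,τ)×B_R(0) ⊆ ℝ×ℂⁿ with τ ≤ 1 and 0 < R ≤ 1, with generalized metric G := G(g,β); let G̃ := G(g̃,β̃) be the generalized metric of a fixed smooth background (g̃,β̃) on B_R(0), and fix Λ ≥ 1 with Λ⁻¹·G̃ ≤ G ≤ Λ·G̃ (Loewner order) on [0,τ)×B_R(0). Then there exists a constant K, depending only on n, Λ, and upper bounds on B_R(0) for the entries of g̃, g̃⁻¹, β̃ and their Wirtinger derivatives up to order two, such that for every t ∈ (0,τ) and every x ∈ B_{R/2}(0): |Υ|²_{g⁻¹,G⁻¹,G}(x,t) ≤ K·(1/t + R⁻⁴), where Υ is the difference of the Chern connections of G and G̃. -/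

import Mathlib

open Matrix
open scoped ComplexOrder

noncomputable section

/-- Spatial Wirtinger derivative `∂ᵢ f = ½(∂f/∂xᵢ − i·∂f/∂yᵢ)` of `f : ℝ × ℂⁿ → ℂ`,
computed via the real Fréchet derivative in the spatial directions. -/
def wdP {n : ℕ} (i : Fin n) (f : ℝ × (Fin n → ℂ) → ℂ) (p : ℝ × (Fin n → ℂ)) : ℂ :=
  (fderiv ℝ f p (0, Pi.single i 1) - Complex.I * fderiv ℝ f p (0, Pi.single i Complex.I)) / 2

/-- Spatial conjugate Wirtinger derivative `∂_{ī} f = ½(∂f/∂xᵢ + i·∂f/∂yᵢ)`. -/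
def wdbP {n : ℕ} (i : Fin n) (f : ℝ × (Fin n → ℂ) → ℂ) (p : ℝ × (Fin n → ℂ)) : ℂ :=
  (fderiv ℝ f p (0, Pi.single i 1) + Complex.I * fderiv ℝ f p (0, Pi.single i Complex.I)) / 2

/-- Time derivative `∂ₜ f` of `f : ℝ × ℂⁿ → ℂ`. -/
def dtP {n : ℕ} (f : ℝ × (Fin n → ℂ) → ℂ) (p : ℝ × (Fin n → ℂ)) : ℂ :=
  fderiv ℝ f p (1, 0)

/-- Entrywise spatial Wirtinger derivative of a matrix-valued map. -/
def wdPM {n : ℕ} {ι κ : Type*} (i : Fin n) (A : ℝ × (Fin n → ℂ) → Matrix ι κ ℂ)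
    (p : ℝ × (Fin n → ℂ)) : Matrix ι κ ℂ :=
  Matrix.of fun a b => wdP i (fun q => A q a b) p

/-- Entrywise spatial conjugate Wirtinger derivative of a matrix-valued map. -/
def wdbPM {n : ℕ} {ι κ : Type*} (i : Fin n) (A : ℝ × (Fin n → ℂ) → Matrix ι κ ℂ)
    (p : ℝ × (Fin n → ℂ)) : Matrix ι κ ℂ :=
  Matrix.of fun a b => wdbP i (fun q => A q a b) p

/-- Entrywise time derivative of a matrix-valued map. -/
def dtPM {n : ℕ} {ι κ : Type*} (A : ℝ × (Fin n → ℂ) → Matrix ι κ ℂ)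
    (p : ℝ × (Fin n → ℂ)) : Matrix ι κ ℂ :=
  Matrix.of fun a b => dtP (fun q => A q a b) p

/-- The generalized metric associated to a Hermitian metric `g` and a `(2,0)`-form
(antisymmetric matrix) `β`, as a `2n × 2n` block matrix on `T ⊕ T*`. -/
def genMetric {n : ℕ} (g β : Matrix (Fin n) (Fin n) ℂ) :
    Matrix (Fin n ⊕ Fin n) (Fin n ⊕ Fin n) ℂ :=
  Matrix.fromBlocks (g + β * (g⁻¹).map (starRingEnd ℂ) * βᴴ) (β * (g⁻¹).map (starRingEnd ℂ))
    ((g⁻¹).map (starRingEnd ℂ) * βᴴ) ((g⁻¹).map (starRingEnd ℂ))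

/-- Lowered Chern curvature `Ω^h_{ij̄αβ̄} = −∂ᵢ∂_{j̄}h_{αβ̄} + Σ ∂ᵢh_{αγ̄}·h^{γ̄δ}·∂_{j̄}h_{δβ̄}`
of a (time-dependent) Hermitian matrix field `h`, where `h^{γ̄δ} = (h⁻¹) γ δ`. -/
def chernP {n : ℕ} {ι : Type*} [Fintype ι] [DecidableEq ι]
    (h : ℝ × (Fin n → ℂ) → Matrix ι ι ℂ) (i j : Fin n) (a b : ι) (p : ℝ × (Fin n → ℂ)) : ℂ :=
  - wdP i (fun q => wdbP j (fun r => h r a b) q) p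
    + ∑ c : ι, ∑ d : ι, wdP i (fun q => h q a c) p * (h p)⁻¹ c d * wdbP j (fun q => h q d b) p

/-- Chern torsion `T_{ijk̄} = ∂ᵢ g_{jk̄} − ∂ⱼ g_{ik̄}`. -/
def torsionP {n : ℕ} (g : ℝ × (Fin n → ℂ) → Matrix (Fin n) (Fin n) ℂ)
    (i j k : Fin n) (p : ℝ × (Fin n → ℂ)) : ℂ :=
  wdP i (fun q => g q j k) p - wdP j (fun q => g q i k) p

/-- Trace with respect to `g` of the lowered Chern curvature of `h`:
`Σ g^{j̄i}·Ω^h_{ij̄ab̄}`. -/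
def traceChernP {n : ℕ} {ι : Type*} [Fintype ι] [DecidableEq ι]
    (g : ℝ × (Fin n → ℂ) → Matrix (Fin n) (Fin n) ℂ)
    (h : ℝ × (Fin n → ℂ) → Matrix ι ι ℂ) (a b : ι) (p : ℝ × (Fin n → ℂ)) : ℂ :=
  ∑ i : Fin n, ∑ j : Fin n, (g p)⁻¹ j i * chernP h i j a b p

/-- `T²_{ab̄} = Σ T_{aln̄}·conj(T_{bkm̄})·g^{k̄l}·g^{n̄m}`. -/
def torsionSqP {n : ℕ} (g : ℝ × (Fin n → ℂ) → Matrix (Fin n) (Fin n) ℂ)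
    (a b : Fin n) (p : ℝ × (Fin n → ℂ)) : ℂ :=
  ∑ k : Fin n, ∑ l : Fin n, ∑ m : Fin n, ∑ m' : Fin n,
    torsionP g a l m' p * (starRingEnd ℂ) (torsionP g b k m p) * (g p)⁻¹ k l * (g p)⁻¹ m' m

/-- Second Chern covariant derivative
`∇ᵢ∇_{j̄}β_{ab} = ∂ᵢ∂_{j̄}β_{ab} − Σ g^{k̄l}·∂ᵢg_{ak̄}·∂_{j̄}β_{lb} − Σ g^{k̄l}·∂ᵢg_{bk̄}·∂_{j̄}β_{al}`. -/
def nabla2betaP {n : ℕ} (g β : ℝ × (Fin n → ℂ) → Matrix (Fin n) (Fin n) ℂ)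
    (i j a b : Fin n) (p : ℝ × (Fin n → ℂ)) : ℂ :=
  wdP i (fun q => wdbP j (fun r => β r a b) q) p
    - ∑ k : Fin n, ∑ l : Fin n,
        (g p)⁻¹ k l * wdP i (fun q => g q a k) p * wdbP j (fun q => β q l b) p
    - ∑ k : Fin n, ∑ l : Fin n,
        (g p)⁻¹ k l * wdP i (fun q => g q b k) p * wdbP j (fun q => β q a l) p

/-- `Δ_g β_{ab} = Σ g^{j̄i}·∇ᵢ∇_{j̄}β_{ab}`. -/
def lapBetaP {n : ℕ} (g β : ℝ × (Fin n → ℂ) → Matrix (Fin n) (Fin n) ℂ)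
    (a b : Fin n) (p : ℝ × (Fin n → ℂ)) : ℂ :=
  ∑ i : Fin n, ∑ j : Fin n, (g p)⁻¹ j i * nabla2betaP g β i j a b p


/-- The Wirtinger derivative `∂ᵢ f` of a function `f : ℂⁿ → ℂ`. -/
def wd {n : ℕ} (i : Fin n) (f : (Fin n → ℂ) → ℂ) (z : Fin n → ℂ) : ℂ :=
  (fderiv ℝ f z (Pi.single i 1) - Complex.I * fderiv ℝ f z (Pi.single i Complex.I)) / 2

/-- The conjugate Wirtinger derivative `∂_{ī} f` of a function `f : ℂⁿ → ℂ`. -/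
def wdb {n : ℕ} (i : Fin n) (f : (Fin n → ℂ) → ℂ) (z : Fin n → ℂ) : ℂ :=
  (fderiv ℝ f z (Pi.single i 1) + Complex.I * fderiv ℝ f z (Pi.single i Complex.I)) / 2


/-- The Laplacian `Δ f = Σ g^{n̄m}·∂_m∂_{n̄} f` associated to `g`. -/
def lapP {n : ℕ} (g : ℝ × (Fin n → ℂ) → Matrix (Fin n) (Fin n) ℂ)
    (f : ℝ × (Fin n → ℂ) → ℂ) (p : ℝ × (Fin n → ℂ)) : ℂ :=
  ∑ m' : Fin n, ∑ n' : Fin n, (g p)⁻¹ n' m' * wdP m' (fun q => wdbP n' f q) p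

/-- Difference of Chern connections `Υᵢ{}_A{}^D = Σ_C (∂ᵢG_{AC̄}·G^{C̄D} − ∂ᵢG̃_{AC̄}·G̃^{C̄D})`. -/
def UpsP {n : ℕ} {ι : Type*} [Fintype ι] [DecidableEq ι]
    (G Gt : ℝ × (Fin n → ℂ) → Matrix ι ι ℂ) (i : Fin n) (A D : ι)
    (p : ℝ × (Fin n → ℂ)) : ℂ :=
  ∑ C : ι, (wdP i (fun q => G q A C) p * (G p)⁻¹ C D
    - wdP i (fun q => Gt q A C) p * (Gt p)⁻¹ C D)

/-- `|Υ|²_{g⁻¹,G⁻¹,H} = Σ g^{j̄i}·G^{B̄A}·H_{DĒ}·Υᵢ{}_A{}^D·conj(Υⱼ{}_B{}^E)`. -/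
def upsNormP {n : ℕ} {ι : Type*} [Fintype ι] [DecidableEq ι]
    (g : ℝ × (Fin n → ℂ) → Matrix (Fin n) (Fin n) ℂ)
    (G Gt H : ℝ × (Fin n → ℂ) → Matrix ι ι ℂ) (p : ℝ × (Fin n → ℂ)) : ℂ :=
  ∑ i : Fin n, ∑ j : Fin n, ∑ A : ι, ∑ B : ι, ∑ D : ι, ∑ E : ι,
    (g p)⁻¹ j i * (G p)⁻¹ B A * H p D E * UpsP G Gt i A D p *
      (starRingEnd ℂ) (UpsP G Gt j B E p)


/-- `f` and its Wirtinger derivatives up to order two are bounded by `B` at `z`. -/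
def BoundedDerivs2 {n : ℕ} (B : ℝ) (f : (Fin n → ℂ) → ℂ) (z : Fin n → ℂ) : Prop :=
  ‖f z‖ ≤ B ∧ (∀ i : Fin n, ‖wd i f z‖ ≤ B ∧ ‖wdb i f z‖ ≤ B) ∧
    (∀ i j : Fin n, ‖wd i (wd j f) z‖ ≤ B ∧ ‖wd i (wdb j f) z‖ ≤ B ∧
      ‖wdb i (wd j f) z‖ ≤ B ∧ ‖wdb i (wdb j f) z‖ ≤ B)

/-- The Euclidean ball `B_R(0) ⊆ ℂⁿ`. -/
def eball {n : ℕ} (R : ℝ) : Set (Fin n → ℂ) :=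
  {z : Fin n → ℂ | ∑ i : Fin n, Complex.normSq (z i) < R ^ 2}

namespace Calabi
set_option linter.all false

section algebra
variable {A : Type*} [CommRing A] [Algebra ℂ A]
variable {ι κ μ ν : Type*} [Fintype ι] [DecidableEq ι] [Fintype κ] [DecidableEq κ]

lemma md_mul (d : Derivation ℂ A A) (M : Matrix μ κ A) (N : Matrix κ ν A) :
    (M * N).map d = M.map d * N + M * N.map d := by
  ext a b
  simp only [Matrix.map_apply, Matrix.mul_apply, Matrix.add_apply, map_sum, Derivation.leibniz,
    smul_eq_mul, Finset.sum_add_distrib]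
  rw [add_comm]
  congr 1
  exact Finset.sum_congr rfl fun _ _ => mul_comm _ _

lemma md_one (d : Derivation ℂ A A) : (1 : Matrix κ κ A).map d = 0 := by
  ext a b
  by_cases h : a = b <;> simp [Matrix.one_apply, h]

lemma md_add (d : Derivation ℂ A A) (M N : Matrix μ ν A) :
    (M + N).map d = M.map d + N.map d := by ext; simp
lemma md_sub (d : Derivation ℂ A A) (M N : Matrix μ ν A) :
    (M - N).map d = M.map d - N.map d := by ext; simp
lemma md_neg (d : Derivation ℂ A A) (M : Matrix μ ν A) :
    (- M).map d = - M.map d := by ext; simp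
lemma md_sum {σ : Type*} (s : Finset σ) (d : Derivation ℂ A A) (M : σ → Matrix μ ν A) :
    (∑ i ∈ s, M i).map d = ∑ i ∈ s, (M i).map d := by ext; simp [Matrix.sum_apply]
lemma md_smul (d : Derivation ℂ A A) (x : A) (M : Matrix μ ν A) :
    (x • M).map d = x • M.map d + d x • M := by
  ext; simp [mul_comm]
lemma md_transpose (d : Derivation ℂ A A) (M : Matrix μ ν A) :
    (Mᵀ).map d = (M.map d)ᵀ := rfl
lemma md_trace (d : Derivation ℂ A A) (M : Matrix κ κ A) :
    d (trace M) = trace (M.map d) := by simp [Matrix.trace]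

lemma md_inv (d : Derivation ℂ A A) {g h : Matrix κ κ A} (gh : g * h = 1) (hg : h * g = 1) :
    h.map d = - (h * g.map d * h) := by
  have h1 := md_mul d g h
  rw [gh, md_one] at h1
  have h2 : h * (g.map d * h + g * h.map d) = 0 := by rw [← h1, mul_zero]
  rw [mul_add, ← mul_assoc h g, hg, one_mul, ← mul_assoc] at h2
  exact eq_neg_of_add_eq_zero_right h2

/-- raised antiholomorphic derivation -/
def Dr (h : Matrix ι ι A) (db : ι → Derivation ℂ A A) (i : ι) : Derivation ℂ A A :=
  ∑ j, h j i • db j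

lemma Dr_apply (h : Matrix ι ι A) (db : ι → Derivation ℂ A A) (i : ι) (x : A) :
    Dr h db i x = ∑ j, h j i * db j x := by
  have := map_sum (Derivation.coeFnAddMonoidHom (R := ℂ) (A := A) (M := A))
    (fun j => h j i • db j) Finset.univ
  have h2 := congrFun this x
  rw [Finset.sum_apply] at h2
  exact h2

/-- Algebraic data of a coordinate flow. -/
structure Fl (ι κ A : Type*) [Fintype ι] [DecidableEq ι] [Fintype κ] [DecidableEq κ]
    [CommRing A] [Algebra ℂ A] where
  dt : Derivation ℂ A A
  d : ι → Derivation ℂ A A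
  db : ι → Derivation ℂ A A
  d_d : ∀ i j x, d i (d j x) = d j (d i x)
  d_db : ∀ i j x, d i (db j x) = db j (d i x)
  db_db : ∀ i j x, db i (db j x) = db j (db i x)
  dt_d : ∀ i x, dt (d i x) = d i (dt x)
  dt_db : ∀ i x, dt (db i x) = db i (dt x)
  g : Matrix ι ι A
  h : Matrix ι ι A
  G : Matrix κ κ A
  H : Matrix κ κ A
  gh : g * h = 1
  hg : h * g = 1
  GH : G * H = 1
  HG : H * G = 1

namespace Fl
variable (S : Fl ι κ A)

def D (i : ι) : Derivation ℂ A A := Dr S.h S.db i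
def a (k : ι) : Matrix ι ι A := S.g.map (S.d k) * S.h
def Γ (k : ι) : Matrix κ κ A := S.G.map (S.d k) * S.H
def Γb (k : ι) : Matrix κ κ A := S.G.map (S.D k) * S.H
def B (i k : ι) : Matrix κ κ A := (S.Γ i).map (S.D k)
def X (i k : ι) : Matrix κ κ A := (S.Γ k).map (S.d i) - (S.Γ i * S.Γ k - S.Γ k * S.Γ i)
  - ∑ l, S.a i k l • S.Γ l
def E : Matrix κ κ A := ∑ i, S.B i i
def τ (k i c : ι) : A := (S.g.map (S.D i) * S.h) c k - (S.g.map (S.D k) * S.h) c i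
def f : A := ∑ k, trace (S.Γ k * S.Γb k)
def Δ (x : A) : A := ∑ i, S.D i (S.d i x)
def Y (l k : ι) : Matrix κ κ A := S.B l k - ∑ c, S.τ c k l • S.Γ c
def Z (k l : ι) : Matrix κ κ A := S.B k l - ∑ m, (S.a k m l - S.a m k l) • S.Γb m

lemma D_apply (i : ι) (x : A) : S.D i x = ∑ j, S.h j i * S.db j x := Dr_apply _ _ _ _

lemma db_eq (l : ι) (x : A) : S.db l x = ∑ c, S.g c l * S.D c x := by
  simp only [D_apply, Finset.mul_sum]
  rw [Finset.sum_comm]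
  have h1 : ∀ j, ∑ c, S.g c l * (S.h j c * S.db j x) = (S.h * S.g) j l * S.db j x := by
    intro j
    rw [Matrix.mul_apply, Finset.sum_mul]
    exact Finset.sum_congr rfl fun _ _ => by ring
  simp [h1, S.hg, Matrix.one_apply]

lemma d_D (k i : ι) (x : A) :
    S.d k (S.D i x) = S.D i (S.d k x) - ∑ c, S.a k c i * S.D c x := by
  have h1 : ∀ j, S.d k (S.h j i) = - ∑ c, S.h j c * S.a k c i := by
    intro j
    have := congrFun (congrFun (md_inv (S.d k) S.gh S.hg) j) i
    rw [mul_assoc] at this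
    simpa [Matrix.mul_apply, a] using this
  have h2 : ∑ c, S.a k c i * S.D c x = ∑ j, (∑ c, S.h j c * S.a k c i) * S.db j x := by
    simp only [D_apply, Finset.mul_sum, Finset.sum_mul]
    rw [Finset.sum_comm]
    exact Finset.sum_congr rfl fun _ _ => Finset.sum_congr rfl fun _ _ => by ring
  rw [h2, D_apply, D_apply, map_sum, ← Finset.sum_sub_distrib]
  refine Finset.sum_congr rfl fun j _ => ?_
  rw [Derivation.leibniz, S.d_db, h1]
  simp only [smul_eq_mul]; ring

lemma dt_D (i : ι) (x : A) :
    S.dt (S.D i x) = S.D i (S.dt x) - ∑ c, (S.g.map S.dt * S.h) c i * S.D c x := by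
  have h1 : ∀ j, S.dt (S.h j i) = - ∑ c, S.h j c * (S.g.map S.dt * S.h) c i := by
    intro j
    have := congrFun (congrFun (md_inv S.dt S.gh S.hg) j) i
    rw [mul_assoc] at this
    rw [Matrix.map_apply] at this
    rw [this, Matrix.neg_apply, Matrix.mul_apply]
  have h2 : ∑ c, (S.g.map S.dt * S.h) c i * S.D c x
      = ∑ j, (∑ c, S.h j c * (S.g.map S.dt * S.h) c i) * S.db j x := by
    simp only [D_apply, Finset.mul_sum, Finset.sum_mul]
    rw [Finset.sum_comm]
    exact Finset.sum_congr rfl fun _ _ => Finset.sum_congr rfl fun _ _ => by ring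
  rw [h2, D_apply, D_apply, map_sum, ← Finset.sum_sub_distrib]
  refine Finset.sum_congr rfl fun j _ => ?_
  rw [Derivation.leibniz, S.dt_db, h1]
  simp only [smul_eq_mul]; ring

/-- `D k` applied to the coefficients of `D i`. -/
lemma D_h (k i : ι) (x : A) :
    ∑ j, S.D k (S.h j i) * S.db j x = - ∑ c, (S.g.map (S.D k) * S.h) c i * S.D c x := by
  have h1 : ∀ j, S.D k (S.h j i) = - ∑ c, S.h j c * (S.g.map (S.D k) * S.h) c i := by
    intro j
    have := congrFun (congrFun (md_inv (S.D k) S.gh S.hg) j) i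
    rw [mul_assoc] at this
    rw [Matrix.map_apply] at this
    rw [this, Matrix.neg_apply, Matrix.mul_apply]
  simp only [h1, D_apply _ _ x, Finset.mul_sum, Finset.sum_mul, neg_mul, Finset.sum_neg_distrib]
  rw [Finset.sum_comm]
  congr 1
  exact Finset.sum_congr rfl fun _ _ => Finset.sum_congr rfl fun _ _ => by ring

lemma D_D (k i : ι) (x : A) :
    S.D k (S.D i x) = S.D i (S.D k x) + ∑ c, S.τ k i c * S.D c x := by
  have key : ∀ k i, S.D k (S.D i x) = ∑ j, S.D k (S.h j i) * S.db j x
      + ∑ j, ∑ l, S.h j i * S.h l k * S.db l (S.db j x) := by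
    intro k i
    rw [D_apply _ i, map_sum, ← Finset.sum_add_distrib]
    refine Finset.sum_congr rfl fun j _ => ?_
    rw [Derivation.leibniz, D_apply _ k (S.db j x)]
    simp only [smul_eq_mul, Finset.mul_sum, mul_assoc]
    rw [add_comm]; congr 1; ring
  rw [key k i, key i k, S.D_h, S.D_h]
  have h3 : ∑ j, ∑ l, S.h j i * S.h l k * S.db l (S.db j x)
      = ∑ j, ∑ l, S.h j k * S.h l i * S.db l (S.db j x) := by
    rw [Finset.sum_comm]
    refine Finset.sum_congr rfl fun _ _ => Finset.sum_congr rfl fun _ _ => ?_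
    rw [S.db_db]; ring
  rw [h3]
  simp only [τ, sub_mul, Finset.sum_sub_distrib]
  ring

lemma md_d_D (k i : ι) (M : Matrix μ ν A) :
    (M.map (S.D i)).map (S.d k) = (M.map (S.d k)).map (S.D i)
      - ∑ c, S.a k c i • M.map (S.D c) := by
  ext; simp [Matrix.sum_apply, d_D]
lemma md_dt_D (i : ι) (M : Matrix μ ν A) :
    (M.map (S.D i)).map S.dt = (M.map S.dt).map (S.D i)
      - ∑ c, (S.g.map S.dt * S.h) c i • M.map (S.D c) := by
  ext; simp [Matrix.sum_apply, dt_D]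
lemma md_D_D (k i : ι) (M : Matrix μ ν A) :
    (M.map (S.D i)).map (S.D k) = (M.map (S.D k)).map (S.D i)
      + ∑ c, S.τ k i c • M.map (S.D c) := by
  ext u v
  have := S.D_D k i (M u v)
  simpa only [Matrix.map_apply, Matrix.add_apply, Matrix.sum_apply, Matrix.smul_apply,
    smul_eq_mul] using this
lemma md_d_d (k i : ι) (M : Matrix μ ν A) :
    (M.map (S.d i)).map (S.d k) = (M.map (S.d k)).map (S.d i) := by
  ext; simp [S.d_d k i]
lemma md_dt_d (i : ι) (M : Matrix μ ν A) :
    (M.map (S.d i)).map S.dt = (M.map S.dt).map (S.d i) := by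
  ext; simp [S.dt_d]

lemma dG (k : ι) : S.G.map (S.d k) = S.Γ k * S.G := by
  rw [Γ, mul_assoc, S.HG, mul_one]
lemma DG (k : ι) : S.G.map (S.D k) = S.Γb k * S.G := by
  rw [Γb, mul_assoc, S.HG, mul_one]

lemma dH (k : ι) : S.H.map (S.d k) = - (S.H * S.Γ k) := by
  rw [md_inv _ S.GH S.HG, Γ, mul_assoc]
lemma DH (k : ι) : S.H.map (S.D k) = - (S.H * S.Γb k) := by
  rw [md_inv _ S.GH S.HG, Γb, mul_assoc]

lemma L1 (i k : ι) : (S.Γb k).map (S.d i) = S.B i k + S.Γ i * S.Γb k - S.Γb k * S.Γ i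
    - ∑ l, S.a i l k • S.Γb l := by
  have e1 : (∑ c, S.a i c k • S.G.map (S.D c)) * S.H = ∑ l, S.a i l k • S.Γb l := by
    rw [Finset.sum_mul]; simp only [Matrix.smul_mul, Γb]
  rw [Γb, md_mul, md_d_D, sub_mul, e1, dH, dG, md_mul, DG]
  rw [add_mul, mul_assoc _ S.G S.H, S.GH, mul_one, mul_assoc (S.Γ i), mul_assoc (S.Γb k) S.G S.H,
    S.GH, mul_one, mul_neg, mul_assoc, ← mul_assoc S.G, S.GH, one_mul, B]
  abel

lemma L2 (i k : ι) : (S.Γ k).map (S.d i) = S.X i k + (S.Γ i * S.Γ k - S.Γ k * S.Γ i)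
    + ∑ l, S.a i k l • S.Γ l := by rw [X]; abel

lemma L4 (i k : ι) : (S.Γ i).map (S.d k) = (S.Γ k).map (S.d i)
    + (S.Γ k * S.Γ i - S.Γ i * S.Γ k) := by
  have key : ∀ i k, (S.Γ i).map (S.d k) = (S.G.map (S.d i)).map (S.d k) * S.H - S.Γ i * S.Γ k := by
    intro i k
    conv_lhs => rw [Γ]
    rw [md_mul, dH, mul_neg, dG, mul_assoc, ← mul_assoc S.G, S.GH, one_mul]
    abel
  rw [key, key, md_d_d]; abel

lemma L3 (i : ι) : S.d i S.f = ∑ k, trace (S.X i k * S.Γb k + S.Γ k * S.B i k) := by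
  have h1 : ∀ k, S.d i (trace (S.Γ k * S.Γb k)) = trace (S.X i k * S.Γb k + S.Γ k * S.B i k)
      + ∑ l, S.a i k l * trace (S.Γ l * S.Γb k) - ∑ l, S.a i l k * trace (S.Γ k * S.Γb l) := by
    intro k
    rw [md_trace, md_mul, L1, L2]
    have e1 : trace ((∑ l, S.a i k l • S.Γ l) * S.Γb k)
        = ∑ l, S.a i k l * trace (S.Γ l * S.Γb k) := by
      simp [Finset.sum_mul, trace_sum]
    have e2 : trace (S.Γ k * (∑ l, S.a i l k • S.Γb l))
        = ∑ l, S.a i l k * trace (S.Γ k * S.Γb l) := by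
      simp [Finset.mul_sum, trace_sum]
    rw [← e1, ← e2, ← trace_add, ← trace_sub]
    have e3 : trace (S.Γ k * S.Γb k * S.Γ i) = trace (S.Γ i * S.Γ k * S.Γb k) := by
      rw [trace_mul_comm, mul_assoc]
    simp only [mul_add, add_mul, mul_sub, sub_mul, trace_add, trace_sub, ← mul_assoc, e3]
    ring
  rw [f, map_sum]
  simp only [h1, Finset.sum_add_distrib, Finset.sum_sub_distrib]
  rw [Finset.sum_comm (f := fun k l => S.a i l k * trace (S.Γ k * S.Γb l))]
  ring

/-- The flow equation of `G`. -/
def FlowG : Prop := S.G.map S.dt = ∑ i, ((S.G.map (S.d i)).map (S.D i)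
  - S.G.map (S.d i) * S.H * S.G.map (S.D i))

/-- The flow equation of `g`, written with the torsion square. -/
def Flowg : Prop := S.g.map S.dt * S.h = ∑ i, (S.a i).map (S.D i)
  + Matrix.of fun m c => ∑ k, ∑ l, S.τ c k l * (S.a k m l - S.a m k l)

variable {S}
lemma flowG' (hG : S.FlowG) : S.G.map S.dt = S.E * S.G := by
  rw [FlowG] at hG
  rw [hG, E, Finset.sum_mul]
  refine Finset.sum_congr rfl fun i _ => ?_
  rw [B]
  conv_rhs => rw [Γ, md_mul, DH]
  rw [add_mul, mul_assoc _ S.H S.G, S.HG, mul_one, DG, mul_neg, neg_mul]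
  simp only [mul_assoc]; abel

lemma L5 (hG : S.FlowG) (k : ι) : (S.Γ k).map S.dt = S.E.map (S.d k)
    + S.E * S.Γ k - S.Γ k * S.E := by
  rw [Γ, md_mul, md_dt_d, flowG' hG, md_mul, md_inv S.dt S.GH S.HG, flowG' hG, dG]
  have : S.Γ k * S.G * -(S.H * (S.E * S.G) * S.H) = - (S.Γ k * (S.G * S.H) * S.E * (S.G * S.H)) := by
    simp only [mul_neg, mul_assoc]
  rw [this, S.GH, add_mul, mul_assoc, mul_assoc, mul_assoc, mul_assoc, S.GH]
  simp only [mul_one, mul_assoc, S.GH, one_mul]; abel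

lemma L6 (hG : S.FlowG) (k : ι) : (S.Γb k).map S.dt = S.E.map (S.D k)
    + S.E * S.Γb k - S.Γb k * S.E - ∑ c, (S.g.map S.dt * S.h) c k • S.Γb c := by
  have e1 : (∑ c, (S.g.map S.dt * S.h) c k • S.G.map (S.D c)) * S.H
      = ∑ c, (S.g.map S.dt * S.h) c k • S.Γb c := by
    rw [Finset.sum_mul]; simp only [Matrix.smul_mul, Γb]
  rw [Γb, md_mul, md_dt_D, sub_mul, e1, flowG' hG, md_mul, md_inv S.dt S.GH S.HG, flowG' hG, DG]
  have : S.Γb k * S.G * -(S.H * (S.E * S.G) * S.H)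
      = - (S.Γb k * (S.G * S.H) * S.E * (S.G * S.H)) := by
    simp only [mul_neg, mul_assoc]
  rw [this, S.GH, add_mul, mul_assoc, mul_assoc, mul_assoc, mul_assoc, S.GH]
  simp only [mul_one, mul_assoc, S.GH, one_mul]; abel

variable (S)
lemma L7 (k : ι) : S.E.map (S.d k) = ∑ i, (S.X i k).map (S.D i)
    + ∑ i, ∑ l, (S.a i k l - S.a k i l) • S.B l i + ∑ l, (∑ i, S.D i (S.a i k l)) • S.Γ l := by
  have h1 : ∀ i, (S.B i i).map (S.d k) = (S.X i k).map (S.D i)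
      + ∑ l, S.a i k l • S.B l i + ∑ l, (S.D i (S.a i k l)) • S.Γ l
      - ∑ c, S.a k c i • S.B i c := by
    intro i
    rw [B, md_d_D, L4, X, md_sub, md_sub, md_sum, md_add]
    have e : (S.Γ k * S.Γ i - S.Γ i * S.Γ k).map (S.D i)
      = - (S.Γ i * S.Γ k - S.Γ k * S.Γ i).map (S.D i) := by rw [← md_neg, neg_sub]
    rw [e]
    simp only [md_smul, Finset.sum_add_distrib, B]
    abel
  rw [E, md_sum]
  simp only [h1, Finset.sum_add_distrib, Finset.sum_sub_distrib, sub_smul, Finset.sum_smul]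
  rw [Finset.sum_comm (f := fun i c => S.a k c i • S.B i c),
    Finset.sum_comm (f := fun l i => S.D i (S.a i k l) • S.Γ l)]
  abel

lemma L8 (k : ι) : S.E.map (S.D k) = ∑ i, (S.B i k).map (S.D i)
    + ∑ i, ∑ c, S.τ k i c • S.B i c := by
  rw [E, md_sum, ← Finset.sum_add_distrib]
  refine Finset.sum_congr rfl fun i _ => ?_
  conv_lhs => rw [B]
  rw [md_D_D]; rfl

variable {S}
/-- Evolution of `f`. -/
theorem evol_f (hG : S.FlowG) (hg : S.Flowg) :
    S.dt S.f - S.Δ S.f = - ∑ l, ∑ k, trace (S.Y l k * S.Z k l)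
      - ∑ i, ∑ k, trace (S.X i k * (S.Γb k).map (S.D i)) := by
  have hdt : S.dt S.f = ∑ k, (trace (S.E.map (S.d k) * S.Γb k) + trace (S.Γ k * S.E.map (S.D k))
      - ∑ c, (S.g.map S.dt * S.h) c k * trace (S.Γ k * S.Γb c)) := by
    rw [f, map_sum]
    refine Finset.sum_congr rfl fun k _ => ?_
    have e2 : trace (S.Γ k * (∑ c, (S.g.map S.dt * S.h) c k • S.Γb c))
        = ∑ c, (S.g.map S.dt * S.h) c k * trace (S.Γ k * S.Γb c) := by
      simp [Finset.mul_sum, trace_sum]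
    have e3 : trace (S.Γ k * S.Γb k * S.E) = trace (S.E * S.Γ k * S.Γb k) := by
      rw [trace_mul_comm, mul_assoc]
    rw [md_trace, md_mul, L5 hG, L6 hG, ← e2]
    simp only [mul_add, add_mul, mul_sub, sub_mul, trace_add, trace_sub, ← mul_assoc, e3]
    ring
  have hΔ : S.Δ S.f = ∑ i, ∑ k, (trace ((S.X i k).map (S.D i) * S.Γb k)
      + trace (S.X i k * (S.Γb k).map (S.D i)) + trace (S.B k i * S.B i k)
      + trace (S.Γ k * (S.B i k).map (S.D i))) := by
    rw [Δ]
    refine Finset.sum_congr rfl fun i _ => ?_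
    rw [L3, map_sum]
    refine Finset.sum_congr rfl fun k _ => ?_
    rw [md_trace, md_add, md_mul, md_mul]
    simp only [trace_add, B]; ring
  have h7 : ∀ k, trace (S.E.map (S.d k) * S.Γb k) = ∑ i, trace ((S.X i k).map (S.D i) * S.Γb k)
      + ∑ i, ∑ l, (S.a i k l - S.a k i l) * trace (S.B l i * S.Γb k)
      + ∑ l, (∑ i, S.D i (S.a i k l)) * trace (S.Γ l * S.Γb k) := by
    intro k
    rw [L7]
    simp [add_mul, Finset.sum_mul, trace_add, trace_sum, sub_mul, sub_smul]
  have h8 : ∀ k, trace (S.Γ k * S.E.map (S.D k)) = ∑ i, trace (S.Γ k * (S.B i k).map (S.D i))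
      + ∑ i, ∑ c, S.τ k i c * trace (S.Γ k * S.B i c) := by
    intro k
    rw [L8]
    simp [mul_add, Finset.mul_sum, trace_add, trace_sum]
  have h9 : ∀ c k, (S.g.map S.dt * S.h) c k = ∑ i, S.D i (S.a i c k)
      + ∑ p, ∑ l, S.τ k p l * (S.a p c l - S.a c p l) := by
    intro c k
    have := congrFun (congrFun hg c) k
    rw [this]; simp [Matrix.sum_apply]
  have hYZ : ∀ l k, trace (S.Y l k * S.Z k l) = trace (S.B l k * S.B k l)
      - ∑ m, (S.a k m l - S.a m k l) * trace (S.B l k * S.Γb m)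
      - ∑ c, S.τ c k l * trace (S.Γ c * S.B k l)
      + ∑ c, ∑ m, S.τ c k l * (S.a k m l - S.a m k l) * trace (S.Γ c * S.Γb m) := by
    intro l k
    rw [Y, Z, sub_mul, mul_sub, mul_sub, trace_sub, trace_sub, trace_sub]
    simp only [Finset.mul_sum, Finset.sum_mul, trace_sum, Matrix.smul_mul, Matrix.mul_smul,
      trace_smul, smul_eq_mul]
    rw [Finset.sum_comm (f := fun m c => (S.a k m l - S.a m k l) * (S.τ c k l * trace (S.Γ c * S.Γb m)))]
    have : ∀ c m, (S.a k m l - S.a m k l) * (S.τ c k l * trace (S.Γ c * S.Γb m)) = 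
      S.τ c k l * (S.a k m l - S.a m k l) * trace (S.Γ c * S.Γb m) := by intros; ring
    simp only [this]
    ring
  rw [hdt, hΔ]
  simp only [h7, h8, h9, hYZ, Finset.sum_add_distrib, Finset.sum_sub_distrib, add_mul]
  have s1 := Finset.sum_comm (s := Finset.univ) (t := Finset.univ)
    (f := fun k i => trace ((S.X i k).map (S.D i) * S.Γb k))
  have s3 := Finset.sum_comm (s := Finset.univ) (t := Finset.univ)
    (f := fun k l => (∑ i, S.D i (S.a i k l)) * trace (S.Γ l * S.Γb k))
  have s4 := Finset.sum_comm (s := Finset.univ) (t := Finset.univ)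
    (f := fun k i => trace (S.Γ k * (S.B i k).map (S.D i)))
  have s7 := Finset.sum_comm (s := Finset.univ) (t := Finset.univ)
    (f := fun k i => trace (S.B k i * S.B i k))
  have s2 : ∑ k, ∑ i, ∑ l, (S.a i k l - S.a k i l) * trace (S.B l i * S.Γb k)
      = ∑ l, ∑ k, ∑ m, (S.a k m l - S.a m k l) * trace (S.B l k * S.Γb m) := by
    rw [Finset.sum_comm]
    rw [Finset.sum_comm (f := fun l k => ∑ m, (S.a k m l - S.a m k l) * trace (S.B l k * S.Γb m))]
    refine Finset.sum_congr rfl fun i _ => ?_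
    rw [Finset.sum_comm]
  have s5 : ∑ k, ∑ i, ∑ c, S.τ k i c * trace (S.Γ k * S.B i c)
      = ∑ l, ∑ k, ∑ c, S.τ c k l * trace (S.Γ c * S.B k l) := by
    rw [Finset.sum_comm]
    rw [Finset.sum_comm (f := fun l k => ∑ c, S.τ c k l * trace (S.Γ c * S.B k l))]
    refine Finset.sum_congr rfl fun i _ => ?_
    rw [Finset.sum_comm]
  have s6 : ∑ k, ∑ c, (∑ p, ∑ l, S.τ k p l * (S.a p c l - S.a c p l)) * trace (S.Γ k * S.Γb c)
      = ∑ l, ∑ k, ∑ c, ∑ m, S.τ c k l * (S.a k m l - S.a m k l) * trace (S.Γ c * S.Γb m) := by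
    simp only [Finset.sum_mul]
    have e1 : ∀ k, ∑ c, ∑ p, ∑ l, S.τ k p l * (S.a p c l - S.a c p l) * trace (S.Γ k * S.Γb c)
       = ∑ l, ∑ p, ∑ c, S.τ k p l * (S.a p c l - S.a c p l) * trace (S.Γ k * S.Γb c) := by
      intro k
      rw [Finset.sum_comm]
      rw [Finset.sum_comm (f := fun l p => ∑ c, S.τ k p l * (S.a p c l - S.a c p l) * trace (S.Γ k * S.Γb c))]
      refine Finset.sum_congr rfl fun i _ => ?_
      rw [Finset.sum_comm]
    simp only [e1]
    rw [Finset.sum_comm]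
    refine Finset.sum_congr rfl fun l _ => ?_
    rw [Finset.sum_comm]
  linear_combination s1 + s2 + s3 + s4 + s5 - s6 + s7

end Fl
end algebra
end Calabi


namespace Calabi
set_option linter.all false
section staralgebra
variable {A : Type*} [CommRing A] [Algebra ℂ A] [StarRing A]
variable {ι κ μ ν : Type*} [Fintype ι] [DecidableEq ι] [Fintype κ] [DecidableEq κ]
namespace Fl
variable (S : Fl ι κ A)

/-- compatibility with the star operation -/
structure Herm : Prop where
  sd : ∀ i x, star (S.d i x) = S.db i (star x)
  sdb : ∀ i x, star (S.db i x) = S.d i (star x)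
  g : S.gᴴ = S.g
  h : S.hᴴ = S.h
  G : S.Gᴴ = S.G
  H : S.Hᴴ = S.H

lemma md_D (i : ι) (M : Matrix μ ν A) : M.map (S.D i) = ∑ j, S.h j i • M.map (S.db j) := by
  ext; simp [Matrix.sum_apply, D_apply]

variable {S}
lemma Herm.md_d (hS : S.Herm) (i : ι) (M : Matrix μ ν A) :
    (M.map (S.d i))ᴴ = (Mᴴ).map (S.db i) := by
  ext; simp [Matrix.conjTranspose_apply, hS.sd]
lemma Herm.md_db (hS : S.Herm) (i : ι) (M : Matrix μ ν A) :
    (M.map (S.db i))ᴴ = (Mᴴ).map (S.d i) := by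
  ext; simp [Matrix.conjTranspose_apply, hS.sdb]

lemma Herm.Γs (hS : S.Herm) (l : ι) : (S.Γ l)ᴴ = S.H * S.G.map (S.db l) := by
  rw [Γ, conjTranspose_mul, hS.md_d, hS.G, hS.H]

lemma Herm.as (hS : S.Herm) (l : ι) : (S.a l)ᴴ = S.h * S.g.map (S.db l) := by
  rw [a, conjTranspose_mul, hS.md_d, hS.g, hS.h]

lemma Herm.Γb_eq (hS : S.Herm) (k : ι) : S.Γb k = ∑ l, S.h l k • (S.G * (S.Γ l)ᴴ * S.H) := by
  rw [Γb, md_D, Finset.sum_mul]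
  refine Finset.sum_congr rfl fun l _ => ?_
  rw [hS.Γs, ← mul_assoc, S.GH, one_mul, Matrix.smul_mul]

lemma Herm.dbG (hS : S.Herm) (l : ι) : S.G.map (S.db l) = S.G * (S.Γ l)ᴴ := by
  rw [hS.Γs, ← mul_assoc, S.GH, one_mul]
lemma Herm.dbH (hS : S.Herm) (l : ι) : S.H.map (S.db l) = - ((S.Γ l)ᴴ * S.H) := by
  rw [md_inv _ S.GH S.HG, hS.Γs]
lemma Herm.dbh (hS : S.Herm) (j l k : ι) : S.db j (S.h l k) = - ∑ m, star (S.a j m l) * S.h m k := by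
  have := congrFun (congrFun (md_inv (S.db j) S.gh S.hg) l) k
  rw [← hS.as] at this
  simpa [Matrix.mul_apply, conjTranspose_apply] using this

lemma Herm.W_eq (hS : S.Herm) (i k : ι) : (S.Γb k).map (S.D i)
    = ∑ j, ∑ l, (S.h j i * S.h l k) • (S.G * (S.X j l)ᴴ * S.H) := by
  rw [md_D]
  refine Finset.sum_congr rfl fun j _ => ?_
  simp only [mul_smul, ← Finset.smul_sum]
  congr 1
  rw [hS.Γb_eq, md_sum]
  simp only [md_smul, Finset.sum_add_distrib, hS.dbh, neg_smul, Finset.sum_smul,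
    Finset.sum_neg_distrib]
  rw [Finset.sum_comm (f := fun l m => (star (S.a j m l) * S.h m k) • (S.G * (S.Γ l)ᴴ * S.H)),
    ← sub_eq_add_neg, ← Finset.sum_sub_distrib]
  refine Finset.sum_congr rfl fun l _ => ?_
  have e1 : (S.X j l)ᴴ = ((S.Γ l)ᴴ).map (S.db j) - ((S.Γ l)ᴴ * (S.Γ j)ᴴ - (S.Γ j)ᴴ * (S.Γ l)ᴴ)
     - ∑ m, star (S.a j l m) • (S.Γ m)ᴴ := by
    rw [X, conjTranspose_sub, conjTranspose_sub, conjTranspose_sub, conjTranspose_mul,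
      conjTranspose_mul, hS.md_d, conjTranspose_sum]
    simp only [conjTranspose_smul]
  rw [e1, md_mul, md_mul, hS.dbG, hS.dbH]
  simp only [mul_sub, sub_mul, smul_sub, Finset.mul_sum, Finset.sum_mul, Finset.smul_sum, smul_smul,
    Matrix.mul_smul, Matrix.smul_mul, add_mul, mul_neg, smul_add, smul_neg, mul_assoc, mul_comm (S.h l k)]
  abel

variable (S) in
/-- the completed square, lower indices -/
def y (l i : ι) : Matrix κ κ A := (S.Γ l).map (S.db i)
  + ∑ c, (∑ j, S.h j c * (S.db j (S.g l i) - S.db i (S.g l j))) • S.Γ c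

variable (S) in
lemma Y_eq (l k : ι) : S.Y l k = ∑ i, S.h i k • S.y l i := by
  simp only [y, smul_add, Finset.sum_add_distrib, Finset.smul_sum]
  rw [Finset.sum_comm, Y, B, md_D, sub_eq_add_neg, ← Finset.sum_neg_distrib]
  congr 1
  refine Finset.sum_congr rfl fun c _ => ?_
  simp only [smul_smul, ← Finset.sum_smul, ← neg_smul]
  congr 1
  simp only [τ, Matrix.mul_apply, Matrix.map_apply, D_apply, mul_sub, Finset.sum_sub_distrib,
    Finset.mul_sum, Finset.sum_mul]
  rw [neg_sub]
  congr 1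
  · exact Finset.sum_congr rfl fun _ _ => Finset.sum_congr rfl fun _ _ => by ring
  · rw [Finset.sum_comm]
    exact Finset.sum_congr rfl fun _ _ => Finset.sum_congr rfl fun _ _ => by ring

lemma Herm.bs (hS : S.Herm) (m k : ι) :
    S.G * ((S.Γ m).map (S.db k))ᴴ * S.H = (S.Γ k).map (S.db m) := by
  rw [hS.md_db, hS.Γs, md_mul, dH, mul_add, add_mul, ← mul_assoc, ← mul_assoc, S.GH, one_mul]
  conv_rhs => rw [Γ, md_mul, hS.dbH, hS.Γs]
  have : (S.G.map (S.db m)).map (S.d k) = (S.G.map (S.d k)).map (S.db m) := by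
    ext; simp [S.d_db]
  rw [this, dG]
  have e : S.G * -(S.H * S.Γ k) * S.G.map (S.db m) = - (S.G * S.H * (S.Γ k * S.G.map (S.db m))) := by
    simp only [mul_neg, neg_mul, mul_assoc]
  have e' : S.Γ k * S.G * -(S.H * S.G.map (S.db m) * S.H)
      = - (S.Γ k * (S.G * S.H) * S.G.map (S.db m) * S.H) := by
    simp only [mul_neg, neg_mul, mul_assoc]
  rw [e, e', S.GH]
  simp only [one_mul, mul_one, neg_mul, mul_assoc]; abel

lemma Herm.Z_eq (hS : S.Herm) (k l : ι) : S.Z k l = ∑ m, S.h m l • (S.G * (S.y m k)ᴴ * S.H) := by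
  have hst : ∀ i j, star (S.h i j) = S.h j i := fun i j => by
    have := congrFun (congrFun hS.h j) i; simpa using this
  have gst : ∀ i j, star (S.g i j) = S.g j i := fun i j => by
    have := congrFun (congrFun hS.g j) i; simpa using this
  simp only [y, conjTranspose_add, mul_add, add_mul, hS.bs, smul_add, Finset.sum_add_distrib,
    conjTranspose_sum, conjTranspose_smul, star_sum, star_mul, star_sub, hS.sdb, hst, gst]
  rw [Z, B, md_D, sub_eq_add_neg, ← Finset.sum_neg_distrib]
  congr 1
  simp only [hS.Γb_eq, Finset.smul_sum, Finset.sum_mul, Finset.mul_sum, smul_smul, ← neg_smul,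
    Matrix.mul_smul, Matrix.smul_mul, ← Finset.sum_neg_distrib]
  have key : ∀ c, ∑ m, -(S.a k m l - S.a m k l) * S.h c m
     = ∑ m, S.h m l * ∑ j, (S.d j (S.g k m) - S.d k (S.g j m)) * S.h c j := by
    intro c
    simp only [a, Matrix.mul_apply, Matrix.map_apply, Finset.mul_sum]
    rw [Finset.sum_comm (f := fun m j => S.h m l * ((S.d j (S.g k m) - S.d k (S.g j m)) * S.h c j))]
    refine Finset.sum_congr rfl fun _ _ => ?_
    rw [← Finset.sum_sub_distrib, ← Finset.sum_neg_distrib, Finset.sum_mul]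
    exact Finset.sum_congr rfl fun _ _ => by ring
  rw [Finset.sum_comm]
  conv_rhs => rw [Finset.sum_comm]
  refine Finset.sum_congr rfl fun c _ => ?_
  rw [← Finset.sum_smul, ← Finset.sum_smul]
  have := key c
  simp only [Finset.mul_sum, neg_mul] at this
  rw [this]

variable (S) in
/-- torsion -/
def T (i j k : ι) : A := S.d i (S.g j k) - S.d j (S.g i k)

variable (S) in
/-- torsion squared -/
def T2 : Matrix ι ι A := Matrix.of fun a b => ∑ k, ∑ l, ∑ m, ∑ m',
    S.T a l m' * star (S.T b k m) * S.h k l * S.h m' m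

/-- The flow of `g` in the original form implies `Flowg`. -/
lemma Herm.flowg (hS : S.Herm)
    (hg : S.g.map S.dt = ∑ i, ((S.g.map (S.d i)).map (S.D i) - S.g.map (S.d i) * S.h * S.g.map (S.D i))
      + S.T2) : S.Flowg := by
  have gst : ∀ i j, star (S.g i j) = S.g j i := fun i j => by
    have := congrFun (congrFun hS.g j) i; simpa using this
  rw [Flowg, hg, add_mul, Finset.sum_mul]
  congr 1
  · refine Finset.sum_congr rfl fun i _ => ?_
    rw [a, md_mul, md_inv (S.D i) S.gh S.hg, sub_mul, mul_neg]
    simp only [mul_assoc]; abel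
  · ext m c
    rw [Matrix.mul_apply]
    simp only [T2, Matrix.of_apply]
    have eτ : ∀ k l, S.τ c k l = - ∑ q, ∑ p, S.h p k * S.h q c * star (S.T q p l) := by
      intro k l
      have e : ∀ q p, star (S.T q p l) = S.db q (S.g l p) - S.db p (S.g l q) := by
        intro q p; rw [T, star_sub, hS.sd, hS.sd, gst, gst]
      simp only [e, τ, Matrix.mul_apply, Matrix.map_apply, D_apply, mul_sub, Finset.sum_sub_distrib,
        Finset.mul_sum, Finset.sum_mul]
      rw [neg_sub]
      congr 1
      · exact Finset.sum_congr rfl fun _ _ => Finset.sum_congr rfl fun _ _ => by ring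
      · rw [Finset.sum_comm]
        exact Finset.sum_congr rfl fun _ _ => Finset.sum_congr rfl fun _ _ => by ring
    have ea : ∀ k l, S.a k m l - S.a m k l = - ∑ n, S.T m k n * S.h n l := by
      intro k l
      simp only [a, Matrix.mul_apply, Matrix.map_apply, T]
      rw [← Finset.sum_sub_distrib, ← Finset.sum_neg_distrib]
      exact Finset.sum_congr rfl fun _ _ => by ring
    simp only [eτ, ea, neg_mul_neg, Finset.sum_mul]
    simp only [Finset.mul_sum]
    have c1 : ∀ q, ∑ p, ∑ k, ∑ l, ∑ n, S.T m k n * star (S.T q p l) * S.h p k * S.h n l * S.h q c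
      = ∑ k, ∑ l, ∑ p, ∑ n, S.T m k n * star (S.T q p l) * S.h p k * S.h n l * S.h q c := by
      intro q
      rw [Finset.sum_comm]
      refine Finset.sum_congr rfl fun k _ => ?_
      rw [Finset.sum_comm]
    simp only [c1]
    rw [Finset.sum_comm]
    refine Finset.sum_congr rfl fun k _ => ?_
    rw [Finset.sum_comm]
    refine Finset.sum_congr rfl fun l _ => Finset.sum_congr rfl fun q _ =>
      Finset.sum_congr rfl fun p _ => Finset.sum_congr rfl fun n _ => by ring

end Fl
end staralgebra
end Calabi


namespace Calabi
set_option linter.all false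
section blocks
variable {A : Type*} [CommRing A] [Algebra ℂ A]
variable {ι : Type*} [Fintype ι] [DecidableEq ι]

def bG (g h β γ : Matrix ι ι A) : Matrix (ι ⊕ ι) (ι ⊕ ι) A :=
  fromBlocks (g + β * hᵀ * γ) (β * hᵀ) (hᵀ * γ) hᵀ
def bH (g h β γ : Matrix ι ι A) : Matrix (ι ⊕ ι) (ι ⊕ ι) A :=
  fromBlocks h (-(h * β)) (-(γ * h)) (gᵀ + γ * h * β)
def bU (β : Matrix ι ι A) : Matrix (ι ⊕ ι) (ι ⊕ ι) A := fromBlocks 1 β 0 1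
def bV (γ : Matrix ι ι A) : Matrix (ι ⊕ ι) (ι ⊕ ι) A := fromBlocks 1 0 γ 1

lemma bU_inv (β : Matrix ι ι A) : bU β * bU (-β) = 1 := by
  simp [bU, fromBlocks_multiply, ← fromBlocks_one]
lemma bU_inv' (β : Matrix ι ι A) : bU (-β) * bU β = 1 := by
  simp [bU, fromBlocks_multiply, ← fromBlocks_one]
lemma bV_inv (β : Matrix ι ι A) : bV β * bV (-β) = 1 := by
  simp [bV, fromBlocks_multiply, ← fromBlocks_one]

lemma bG_eq (g h β γ : Matrix ι ι A) : bG g h β γ = bU β * fromBlocks g 0 0 hᵀ * bV γ := by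
  simp [bG, bU, bV, fromBlocks_multiply]
lemma bH_eq (g h β γ : Matrix ι ι A) :
    bH g h β γ = bV (-γ) * fromBlocks h 0 0 gᵀ * bU (-β) := by
  simp [bH, bU, bV, fromBlocks_multiply, add_comm]

lemma tr_inv {g h : Matrix ι ι A} (gh : g * h = 1) : hᵀ * gᵀ = 1 := by
  rw [← transpose_mul, gh, transpose_one]

lemma bG_mul_bH {g h : Matrix ι ι A} (gh : g * h = 1) (β γ : Matrix ι ι A) :
    bG g h β γ * bH g h β γ = 1 := by
  have e : (fromBlocks g 0 0 hᵀ : Matrix (ι ⊕ ι) (ι ⊕ ι) A) * fromBlocks h 0 0 gᵀ = 1 := by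
    simp [fromBlocks_multiply, gh, tr_inv gh]
  rw [bG_eq, bH_eq]
  calc _ = bU β * fromBlocks g 0 0 hᵀ * (bV γ * bV (-γ)) * fromBlocks h 0 0 gᵀ * bU (-β) := by
        simp only [mul_assoc]
    _ = 1 := by rw [bV_inv, mul_one, mul_assoc (bU β), e, mul_one, bU_inv]

def bN (x : Matrix ι ι A) : Matrix (ι ⊕ ι) (ι ⊕ ι) A := fromBlocks 0 x 0 0

lemma bU_map (δ : Derivation ℂ A A) (β : Matrix ι ι A) :
    (bU β).map δ = bU β * bN (β.map δ) := by
  rw [bU, bN, fromBlocks_map, md_one]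
  simp [fromBlocks_multiply]
lemma bUi_map (δ : Derivation ℂ A A) (β : Matrix ι ι A) :
    (bU (-β)).map δ = - (bN (β.map δ) * bU (-β)) := by
  rw [bU, bN, fromBlocks_map, md_one, md_neg]
  simp [fromBlocks_multiply, fromBlocks_neg]
lemma bV_map (δ : Derivation ℂ A A) (β : Matrix ι ι A) :
    (bV β).map δ = fromBlocks 0 0 (β.map δ) 0 * bV β := by
  rw [bV, fromBlocks_map, md_one]
  simp [fromBlocks_multiply]

def bM (δ : Derivation ℂ A A) (g h β γ : Matrix ι ι A) : Matrix (ι ⊕ ι) (ι ⊕ ι) A :=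
  fromBlocks (g.map δ * h) (β.map δ) (hᵀ * γ.map δ * h) (- (g.map δ * h)ᵀ)

lemma bΓ {g h : Matrix ι ι A} (gh : g * h = 1) (hg : h * g = 1) (β γ : Matrix ι ι A)
    (δ : Derivation ℂ A A) :
    (bG g h β γ).map δ * bH g h β γ = bU β * bM δ g h β γ * bU (-β) := by
  have e : bM δ g h β γ = bN (β.map δ) + (fromBlocks g 0 0 hᵀ).map δ * fromBlocks h 0 0 gᵀ
      + fromBlocks g 0 0 hᵀ * fromBlocks 0 0 (γ.map δ) 0 * fromBlocks h 0 0 gᵀ := by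
    have e2 : (hᵀ).map δ * gᵀ = - (g.map δ * h)ᵀ := by
      rw [md_transpose, md_inv δ gh hg, ← transpose_mul, mul_neg, ← mul_assoc, ← mul_assoc, gh,
        one_mul, transpose_neg]
    have e0 : ((0 : Matrix ι ι A)).map δ = 0 := by ext; simp
    simp only [bM, bN, fromBlocks_map, fromBlocks_multiply, fromBlocks_add, e2, e0]
    simp
  have e1 : (fromBlocks g 0 0 hᵀ : Matrix (ι ⊕ ι) (ι ⊕ ι) A) * fromBlocks h 0 0 gᵀ = 1 := by
    simp [fromBlocks_multiply, gh, tr_inv gh]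
  rw [bG_eq, bH_eq, md_mul, md_mul, bU_map, bV_map, e]
  generalize fromBlocks 0 0 (γ.map δ) 0 = P
  generalize bN (β.map δ) = N
  generalize (fromBlocks g 0 0 hᵀ : Matrix (ι ⊕ ι) (ι ⊕ ι) A).map δ = Q
  generalize (fromBlocks g 0 0 hᵀ : Matrix (ι ⊕ ι) (ι ⊕ ι) A) = D1 at e1 ⊢
  generalize (fromBlocks h 0 0 gᵀ : Matrix (ι ⊕ ι) (ι ⊕ ι) A) = D2 at e1 ⊢
  have hV := bV_inv γ
  generalize bV γ = V at *
  generalize bV (-γ) = V' at *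
  calc _ = bU β * (N * (D1 * (V * V') * D2) + Q * (V * V') * D2 + D1 * P * (V * V') * D2) * bU (-β) := by
        simp only [add_mul, mul_add, mul_assoc]
    _ = _ := by rw [hV]; simp only [mul_one, e1]

theorem bflow {g h β γ : Matrix ι ι A} (gh : g * h = 1) (hg : h * g = 1)
    (hβ : βᵀ = -β) (hγ : γᵀ = -γ) (dt : Derivation ℂ A A) (d D : ι → Derivation ℂ A A)
    (fg : g.map dt = ∑ i, ((g.map (d i)).map (D i) - g.map (d i) * h * g.map (D i))
      + ∑ i, β.map (D i) * hᵀ * γ.map (d i))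
    (fβ : β.map dt = ∑ i, ((β.map (d i)).map (D i) - g.map (d i) * h * β.map (D i)
      - β.map (D i) * (g.map (d i) * h)ᵀ))
    (fγ : γ.map dt = ∑ i, ((γ.map (d i)).map (D i) - γ.map (d i) * h * g.map (D i)
      - (h * g.map (D i))ᵀ * γ.map (d i))) :
    (bG g h β γ).map dt = ∑ i, (((bG g h β γ).map (d i)).map (D i)
      - (bG g h β γ).map (d i) * bH g h β γ * (bG g h β γ).map (D i)) := by
  have GH := bG_mul_bH gh β γ
  have HG : bH g h β γ * bG g h β γ = 1 := mul_eq_one_comm.mp GH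
  have key : (bG g h β γ).map dt * bH g h β γ
      = ∑ i, ((bG g h β γ).map (d i) * bH g h β γ).map (D i) := by
    simp only [bΓ gh hg]
    have e1 : ∀ i, (bU β * bM (d i) g h β γ * bU (-β)).map (D i)
        = bU β * (bN (β.map (D i)) * bM (d i) g h β γ + (bM (d i) g h β γ).map (D i)
          - bM (d i) g h β γ * bN (β.map (D i))) * bU (-β) := by
      intro i
      rw [md_mul, md_mul, bU_map, bUi_map]
      simp only [add_mul, mul_add, mul_sub, sub_mul, mul_neg, mul_assoc]
      abel
    simp only [e1]
    rw [← Finset.sum_mul, ← Finset.mul_sum]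
    congr 2
    have c11 : g.map dt * h = ∑ i, (β.map (D i) * (hᵀ * γ.map (d i) * h) + (g.map (d i) * h).map (D i)) := by
      rw [fg, add_mul, Finset.sum_mul, Finset.sum_mul, Finset.sum_add_distrib, add_comm]
      congr 1
      · exact Finset.sum_congr rfl fun i _ => by simp only [mul_assoc]
      · refine Finset.sum_congr rfl fun i _ => ?_
        rw [md_mul, md_inv (D i) gh hg, sub_mul, mul_neg]
        simp only [mul_assoc]; abel
    have c12 : β.map dt = ∑ i, (β.map (D i) * (-(g.map (d i) * h)ᵀ) + (β.map (d i)).map (D i)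
        - g.map (d i) * h * β.map (D i)) := by
      rw [fβ]
      refine Finset.sum_congr rfl fun i _ => ?_
      rw [mul_neg]; abel
    have c21 : hᵀ * γ.map dt * h = ∑ i, (hᵀ * γ.map (d i) * h).map (D i) := by
      rw [fγ, Finset.mul_sum, Finset.sum_mul]
      refine Finset.sum_congr rfl fun i _ => ?_
      rw [md_mul, md_mul, md_inv (D i) gh hg, md_transpose, md_inv (D i) gh hg]
      simp only [transpose_mul, transpose_neg, mul_sub, sub_mul, add_mul, mul_add, mul_neg, neg_mul,
        mul_assoc]
      abel
    have c22 : -(g.map dt * h)ᵀ = ∑ i, ((-(g.map (d i) * h)ᵀ).map (D i)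
        - (hᵀ * γ.map (d i) * h) * β.map (D i)) := by
      rw [c11, transpose_sum, ← Finset.sum_neg_distrib]
      refine Finset.sum_congr rfl fun i _ => ?_
      have t1 : (γ.map (d i))ᵀ = - γ.map (d i) := by rw [← md_transpose, hγ, md_neg]
      have t2 : (β.map (D i))ᵀ = - β.map (D i) := by rw [← md_transpose, hβ, md_neg]
      rw [md_neg, md_transpose, transpose_add]
      simp only [transpose_mul, t1, t2, transpose_transpose, mul_neg, neg_mul, mul_assoc, neg_neg]
      abel
    have e0 : ∀ i, ((0 : Matrix ι ι A)).map (D i) = 0 := by intro i; ext; simp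
    have e2 : ∀ i, (bN (β.map (D i)) * bM (d i) g h β γ + (bM (d i) g h β γ).map (D i)
          - bM (d i) g h β γ * bN (β.map (D i))) = fromBlocks
          (β.map (D i) * (hᵀ * γ.map (d i) * h) + (g.map (d i) * h).map (D i))
          (β.map (D i) * (-(g.map (d i) * h)ᵀ) + (β.map (d i)).map (D i)
              - g.map (d i) * h * β.map (D i))
          ((hᵀ * γ.map (d i) * h).map (D i))
          ((-(g.map (d i) * h)ᵀ).map (D i) - (hᵀ * γ.map (d i) * h) * β.map (D i)) := by
      intro i
      simp only [bN, bM, fromBlocks_multiply, fromBlocks_map, fromBlocks_add, sub_eq_add_neg,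
        fromBlocks_neg]
      simp
    simp only [e2]
    rw [bM, c22, c11, c12, c21]
    ext (a | a) (b | b) <;> simp [Matrix.sum_apply]
  have : (bG g h β γ).map dt = (bG g h β γ).map dt * bH g h β γ * bG g h β γ := by
    rw [mul_assoc, HG, mul_one]
  rw [this, key, Finset.sum_mul]
  refine Finset.sum_congr rfl fun i _ => ?_
  rw [md_mul, md_inv (D i) GH HG, add_mul, mul_assoc, HG, mul_one, mul_neg, neg_mul]
  have e3 : (bG g h β γ).map (d i) * (bH g h β γ * (bG g h β γ).map (D i) * bH g h β γ) * bG g h β γ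
    = (bG g h β γ).map (d i) * bH g h β γ * (bG g h β γ).map (D i) * (bH g h β γ * bG g h β γ) := by
    simp only [mul_assoc]
  rw [e3, HG, mul_one]; abel

end blocks
end Calabi


namespace Calabi
set_option linter.all false
section smooth
open TopologicalSpace
variable {V : Type*} [NormedAddCommGroup V] [NormedSpace ℝ V]

open Classical in
/-- extension by zero -/
def xt {U : Opens V} (f : U → ℂ) : V → ℂ := fun q => if h : q ∈ U then f ⟨q, h⟩ else 0

lemma xt_apply {U : Opens V} (f : U → ℂ) (p : U) : xt f p = f p := by
  simp [xt]
lemma xt_of_mem {U : Opens V} (f : U → ℂ) {p : V} (hp : p ∈ U) : xt f p = f ⟨p, hp⟩ := by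
  simp [xt, hp]

/-- the star algebra of smooth functions on an open set -/
def SA (U : Opens V) : StarSubalgebra ℂ (U → ℂ) where
  carrier := {f | ContDiffOn ℝ (⊤ : ℕ∞) (xt f) U}
  mul_mem' {f g} hf hg := (ContDiffOn.mul hf hg).congr fun p hp => by
    simp [xt_of_mem _ (show p ∈ U from hp)]
  add_mem' {f g} hf hg := (ContDiffOn.add hf hg).congr fun p hp => by
    simp [xt_of_mem _ (show p ∈ U from hp)]
  algebraMap_mem' c := (contDiffOn_const (c := c)).congr fun p hp => by
    simp [xt_of_mem _ (show p ∈ U from hp), Pi.algebraMap_apply]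
  star_mem' {f} hf := by
    have : ContDiffOn ℝ (⊤ : ℕ∞) (fun p => Complex.conjCLE (xt f p)) U :=
      Complex.conjCLE.contDiff.comp_contDiffOn hf
    exact this.congr fun p hp => by simp [xt_of_mem _ (show p ∈ U from hp)]

variable {U : Opens V}

lemma SA.cd (f : SA U) : ContDiffOn ℝ (⊤ : ℕ∞) (xt f.1) U := f.2
lemma SA.cda (f : SA U) (p : U) : ContDiffAt ℝ (⊤ : ℕ∞) (xt f.1) p :=
  (SA.cd f).contDiffAt (U.isOpen.mem_nhds p.2)
lemma SA.da (f : SA U) (p : U) : DifferentiableAt ℝ (xt f.1) p :=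
  (SA.cda f p).differentiableAt (by simp)

def mkA (F : V → ℂ) (hF : ContDiffOn ℝ (⊤ : ℕ∞) F U) : SA U :=
  ⟨fun p => F p, hF.congr fun p hp => by simp [xt_of_mem _ (show p ∈ U from hp)]⟩

lemma mkA_apply (F : V → ℂ) (hF : ContDiffOn ℝ (⊤ : ℕ∞) F U) (p : U) : (mkA F hF).1 p = F p := rfl

/-- if `F` agrees with `f` on `U` then their derivatives agree -/
lemma fderiv_xt (f : SA U) (F : V → ℂ) (h : ∀ p : U, F p = f.1 p) (p : U) :
    fderiv ℝ F p = fderiv ℝ (xt f.1) p := by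
  apply Filter.EventuallyEq.fderiv_eq
  filter_upwards [U.isOpen.mem_nhds p.2] with q hq
  rw [xt_of_mem _ (show q ∈ U from hq)]
  exact h ⟨q, hq⟩

lemma cd_fderiv (f : SA U) (v : V) : ContDiffOn ℝ (⊤ : ℕ∞) (fun p => fderiv ℝ (xt f.1) p v) U := by
  have := (SA.cd f).fderiv_of_isOpen (m := (⊤ : ℕ∞)) U.isOpen (by simp)
  exact this.clm_apply contDiffOn_const

/-- directional derivative as a derivation -/
def der (v : V) : Derivation ℂ (SA U) (SA U) :=
  Derivation.mk' 
    { toFun := fun f => mkA (fun p => fderiv ℝ (xt f.1) p v) (cd_fderiv f v)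
      map_add' := by
        intro f g
        apply Subtype.ext; funext p
        change fderiv ℝ (xt (f + g).1) p v = fderiv ℝ (xt f.1) p v + fderiv ℝ (xt g.1) p v
        rw [← fderiv_xt (f + g) (fun q => xt f.1 q + xt g.1 q) (by intro p; simp [xt_apply]) p]
        rw [fderiv_fun_add (SA.da f p) (SA.da g p)]; rfl
      map_smul' := by
        intro c f
        apply Subtype.ext; funext p
        change fderiv ℝ (xt (c • f).1) p v = c • fderiv ℝ (xt f.1) p v
        rw [← fderiv_xt (c • f) (fun q => c • xt f.1 q) (by intro p; simp [xt_apply]) p]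
        rw [fderiv_fun_const_smul (SA.da f p)]; rfl }
    (by
        intro f g
        apply Subtype.ext; funext p
        change fderiv ℝ (xt (f * g).1) p v = f.1 p * fderiv ℝ (xt g.1) p v + g.1 p * fderiv ℝ (xt f.1) p v
        rw [← fderiv_xt (f * g) (fun q => xt f.1 q * xt g.1 q) (by intro p; simp [xt_apply]) p]
        rw [fderiv_fun_mul (SA.da f p) (SA.da g p)]
        simp [xt_apply])

lemma der_apply (v : V) (f : SA U) (p : U) : (der v f).1 p = fderiv ℝ (xt f.1) p v := rfl

lemma der_der (v w : V) (f : SA U) : der v (der w f) = der w (der v f) := by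
  have key : ∀ v w : V, ∀ p : U, (der v (der w f)).1 p = fderiv ℝ (fderiv ℝ (xt f.1)) p v w := by
    intro v w p
    rw [der_apply, ← fderiv_xt (der w f) (fun q => fderiv ℝ (xt f.1) q w) (fun _ => rfl) p]
    have h2 : DifferentiableAt ℝ (fderiv ℝ (xt f.1)) p :=
      ((SA.cda f p).fderiv_right (m := 1) (by norm_cast)).differentiableAt (by simp)
    rw [fderiv_clm_apply h2 (differentiableAt_const _)]
    simp
  apply Subtype.ext; funext p
  rw [key, key]
  have := (SA.cda f p).isSymmSndFDerivAt (by
    rw [minSmoothness_of_isRCLikeNormedField]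
    exact WithTop.coe_le_coe.2 (le_top : (2:ℕ∞) ≤ ⊤))
  exact this v w

lemma der_star (v : V) (f : SA U) : der v (star f) = star (der v f) := by
  apply Subtype.ext; funext p
  change fderiv ℝ (xt (star f).1) p v = (starRingEnd ℂ) (fderiv ℝ (xt f.1) p v)
  rw [← fderiv_xt (star f) (fun q => Complex.conjCLE (xt f.1 q)) (by intro p; simp [xt_apply]) p]
  have := (Complex.conjCLE.hasFDerivAt (x := xt f.1 p)).comp (p : V) (SA.da f p).hasFDerivAt
  rw [show (fun q => Complex.conjCLE (xt f.1 q)) = Complex.conjCLE ∘ xt f.1 from rfl, this.fderiv]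
  simp

end smooth

section wirt
open TopologicalSpace
variable {n : ℕ} {U : Opens (ℝ × (Fin n → ℂ))}

def wD (i : Fin n) : Derivation ℂ (SA U) (SA U) :=
  (1 / 2 : ℂ) • (der (0, Pi.single i 1) - Complex.I • der (0, Pi.single i Complex.I))
def wB (i : Fin n) : Derivation ℂ (SA U) (SA U) :=
  (1 / 2 : ℂ) • (der (0, Pi.single i 1) + Complex.I • der (0, Pi.single i Complex.I))
def wT : Derivation ℂ (SA U) (SA U) := der (1, 0)

lemma wD_eq (i : Fin n) (f : SA U) : wD i f
    = (1 / 2 : ℂ) • (der (0, Pi.single i 1) f - Complex.I • der (0, Pi.single i Complex.I) f) := rfl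
lemma wB_eq (i : Fin n) (f : SA U) : wB i f
    = (1 / 2 : ℂ) • (der (0, Pi.single i 1) f + Complex.I • der (0, Pi.single i Complex.I) f) := rfl

lemma wD_apply (i : Fin n) (f : SA U) (F : ℝ × (Fin n → ℂ) → ℂ) (h : ∀ p : U, F p.1 = f.1 p) (p : U) :
    wdP i F p = (wD i f).1 p := by
  rw [wdP, fderiv_xt f F h, wD_eq]
  change _ = (1 / 2 : ℂ) * (fderiv ℝ (xt f.1) p _ - Complex.I * fderiv ℝ (xt f.1) p _)
  ring
lemma wB_apply (i : Fin n) (f : SA U) (F : ℝ × (Fin n → ℂ) → ℂ) (h : ∀ p : U, F p.1 = f.1 p) (p : U) :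
    wdbP i F p = (wB i f).1 p := by
  rw [wdbP, fderiv_xt f F h, wB_eq]
  change _ = (1 / 2 : ℂ) * (fderiv ℝ (xt f.1) p _ + Complex.I * fderiv ℝ (xt f.1) p _)
  ring
lemma wT_apply (f : SA U) (F : ℝ × (Fin n → ℂ) → ℂ) (h : ∀ p : U, F p.1 = f.1 p) (p : U) :
    dtP F p = (wT f).1 p := by
  rw [dtP, fderiv_xt f F h]; rfl

lemma wD_wD (i j : Fin n) (f : SA U) : wD i (wD j f) = wD j (wD i f) := by
  simp only [wD_eq, map_smul, map_sub, map_add, Derivation.map_smul]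
  simp only [der_der ((0, Pi.single i 1) : ℝ × (Fin n → ℂ)), der_der ((0, Pi.single i Complex.I) : ℝ × (Fin n → ℂ)), smul_sub, smul_add]
  module
lemma wD_wB (i j : Fin n) (f : SA U) : wD i (wB j f) = wB j (wD i f) := by
  simp only [wD_eq, wB_eq, map_smul, map_sub, map_add, Derivation.map_smul]
  simp only [der_der ((0, Pi.single i 1) : ℝ × (Fin n → ℂ)), der_der ((0, Pi.single i Complex.I) : ℝ × (Fin n → ℂ)), smul_sub, smul_add]
  module
lemma wB_wB (i j : Fin n) (f : SA U) : wB i (wB j f) = wB j (wB i f) := by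
  simp only [wD_eq, wB_eq, map_smul, map_sub, map_add, Derivation.map_smul]
  simp only [der_der ((0, Pi.single i 1) : ℝ × (Fin n → ℂ)), der_der ((0, Pi.single i Complex.I) : ℝ × (Fin n → ℂ)), smul_sub, smul_add]
  module
lemma wT_wD (i : Fin n) (f : SA U) : wT (wD i f) = wD i (wT f) := by
  simp only [wD_eq, wB_eq, wT, map_smul, map_sub, map_add, Derivation.map_smul]
  simp only [der_der ((1, 0) : ℝ × (Fin n → ℂ))]
lemma wT_wB (i : Fin n) (f : SA U) : wT (wB i f) = wB i (wT f) := by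
  simp only [wD_eq, wB_eq, wT, map_smul, map_sub, map_add, Derivation.map_smul]
  simp only [der_der ((1, 0) : ℝ × (Fin n → ℂ))]

lemma wD_star (i : Fin n) (f : SA U) : star (wD i f) = wB i (star f) := by
  simp only [wD_eq, wB_eq, der_star, star_smul, star_sub]
  simp [sub_eq_add_neg]
lemma wB_star (i : Fin n) (f : SA U) : star (wB i f) = wD i (star f) := by
  simp only [wD_eq, wB_eq, der_star, star_smul, star_add]
  simp [sub_eq_add_neg]
lemma wT_star (f : SA U) : star (wT f) = wT (star f) := by
  simp only [wT, der_star]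

end wirt
end Calabi


namespace Calabi
set_option linter.all false
section quad
variable {A : Type*} [CommRing A] [StarRing A]
variable {σ κ : Type*} [Fintype σ] [Fintype κ]

/-- weighted trace form -/
def Q (K : Matrix σ σ A) (H G : Matrix κ κ A) (v w : σ → Matrix κ κ A) : A :=
  ∑ s, ∑ t, K t s * trace (v s * G * (w t)ᴴ * H)

lemma Q_map {A' : Type*} [CommRing A'] [StarRing A'] (e : A →+* A') (he : ∀ x, e (star x) = star (e x))
    (K : Matrix σ σ A) (H G : Matrix κ κ A) (v w : σ → Matrix κ κ A) :
    e (Q K H G v w) = Q (K.map e) (H.map e) (G.map e) (fun i => (v i).map e) (fun i => (w i).map e) := by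
  have h1 : ∀ M : Matrix κ κ A, e (trace M) = trace (M.map e) := by
    intro M; simp [Matrix.trace]
  have h2 : ∀ M : Matrix κ κ A, (Mᴴ).map e = (M.map e)ᴴ := by
    intro M; ext a b; simp [he]
  simp only [Q, map_sum, map_mul, h1, Matrix.map_mul, h2, Matrix.map_apply]
end quad

section quadC
variable {σ κ : Type*} [Fintype σ] [Fintype κ] [DecidableEq σ] [DecidableEq κ]

open scoped MatrixOrder Matrix.Norms.L2Operator in
lemma psd_factor {H : Matrix κ κ ℂ} (hH : H.PosSemidef) : ∃ E : Matrix κ κ ℂ, H = Eᴴ * E := by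
  obtain ⟨E, hE⟩ := CStarAlgebra.nonneg_iff_eq_star_mul_self.mp hH.nonneg
  exact ⟨E, hE⟩

lemma trace_pos {H G : Matrix κ κ ℂ} (hH : H.PosSemidef) (hG : G.PosSemidef) (w : Matrix κ κ ℂ) :
    0 ≤ trace (w * G * wᴴ * H) := by
  obtain ⟨E, rfl⟩ := psd_factor hH
  have h2 : trace (w * G * wᴴ * (Eᴴ * E)) = trace ((E * w) * G * (E * w)ᴴ) := by
    rw [conjTranspose_mul, ← mul_assoc, trace_mul_comm]
    simp only [mul_assoc]
  rw [h2]
  exact (hG.mul_mul_conjTranspose_same (E * w)).trace_nonneg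

lemma Q_factor (C : Matrix σ σ ℂ) (H G : Matrix κ κ ℂ) (v w : σ → Matrix κ κ ℂ) :
    Q (Cᴴ * C) H G v w = ∑ u, trace ((∑ s, C u s • v s) * G * (∑ s, C u s • w s)ᴴ * H) := by
  have : ∀ u, trace ((∑ s, C u s • v s) * G * (∑ s, C u s • w s)ᴴ * H)
      = ∑ s, ∑ t, star (C u t) * C u s * trace (v s * G * (w t)ᴴ * H) := by
    intro u
    simp only [Finset.sum_mul, conjTranspose_sum, conjTranspose_smul, Matrix.smul_mul, Finset.mul_sum,
      Matrix.mul_smul, trace_sum, trace_smul, smul_eq_mul]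
    rw [Finset.sum_comm]
    exact Finset.sum_congr rfl fun _ _ => Finset.sum_congr rfl fun _ _ => by ring
  rw [Finset.sum_congr rfl fun u _ => this u]
  simp only [Q, Matrix.mul_apply, conjTranspose_apply, Finset.sum_mul]
  symm
  rw [Finset.sum_comm]
  refine Finset.sum_congr rfl fun s _ => ?_
  rw [Finset.sum_comm]

lemma Q_nonneg {K : Matrix σ σ ℂ} {H G : Matrix κ κ ℂ} (hK : K.PosSemidef) (hH : H.PosSemidef)
    (hG : G.PosSemidef) (v : σ → Matrix κ κ ℂ) : 0 ≤ Q K H G v v := by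
  obtain ⟨C, rfl⟩ := psd_factor hK
  rw [Q_factor]
  exact Finset.sum_nonneg fun u _ => trace_pos hH hG _

lemma Q_sub_le {K : Matrix σ σ ℂ} {H G : Matrix κ κ ℂ} (hK : K.PosSemidef) (hH : H.PosSemidef)
    (hG : G.PosSemidef) (v w : σ → Matrix κ κ ℂ) :
    Q K H G (v - w) (v - w) ≤ 2 * Q K H G v v + 2 * Q K H G w w := by
  have h1 := Q_nonneg hK hH hG (v + w)
  have h2 : Q K H G (v - w) (v - w) + Q K H G (v + w) (v + w) = 2 * Q K H G v v + 2 * Q K H G w w := by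
    simp only [Q, Finset.mul_sum, ← Finset.sum_add_distrib]
    refine Finset.sum_congr rfl fun _ _ => Finset.sum_congr rfl fun _ _ => ?_
    simp only [Pi.sub_apply, Pi.add_apply, conjTranspose_sub, conjTranspose_add, sub_mul, add_mul,
      mul_sub, mul_add, trace_add, trace_sub]
    ring
  rw [← h2]
  exact le_add_of_nonneg_right h1

lemma Q_sub_H (K : Matrix σ σ ℂ) (H H' G : Matrix κ κ ℂ) (v w : σ → Matrix κ κ ℂ) :
    Q K (H - H') G v w = Q K H G v w - Q K H' G v w := by
  simp only [Q, mul_sub, trace_sub, Finset.sum_sub_distrib]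
lemma Q_sub_G (K : Matrix σ σ ℂ) (H G G' : Matrix κ κ ℂ) (v w : σ → Matrix κ κ ℂ) :
    Q K H (G - G') v w = Q K H G v w - Q K H G' v w := by
  simp only [Q, mul_sub, sub_mul, trace_sub, Finset.sum_sub_distrib]
lemma Q_smul_H (K : Matrix σ σ ℂ) (c : ℂ) (H G : Matrix κ κ ℂ) (v w : σ → Matrix κ κ ℂ) :
    Q K (c • H) G v w = c * Q K H G v w := by
  simp only [Q, Matrix.mul_smul, trace_smul, Finset.mul_sum, smul_eq_mul]
  exact Finset.sum_congr rfl fun _ _ => Finset.sum_congr rfl fun _ _ => by ring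
lemma Q_smul_G (K : Matrix σ σ ℂ) (c : ℂ) (H G : Matrix κ κ ℂ) (v w : σ → Matrix κ κ ℂ) :
    Q K H (c • G) v w = c * Q K H G v w := by
  simp only [Q, Matrix.mul_smul, Matrix.smul_mul, trace_smul, Finset.mul_sum, smul_eq_mul]
  exact Finset.sum_congr rfl fun _ _ => Finset.sum_congr rfl fun _ _ => by ring

lemma trace_sub_psd {P : Matrix κ κ ℂ} (hP : P.PosSemidef) :
    (trace P • (1 : Matrix κ κ ℂ) - P).PosSemidef := by
  obtain ⟨E, rfl⟩ := psd_factor hP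
  have ht : trace (Eᴴ * E) = ((∑ u, ∑ a, ‖E u a‖ ^ 2 : ℝ) : ℂ) := by
    simp only [trace, diag, Matrix.mul_apply, conjTranspose_apply]
    rw [Finset.sum_comm]
    push_cast
    refine Finset.sum_congr rfl fun _ _ => Finset.sum_congr rfl fun _ _ => ?_
    rw [← Complex.conj_mul']; rfl
  refine Matrix.PosSemidef.of_dotProduct_mulVec_nonneg ?_ ?_
  · rw [IsHermitian, conjTranspose_sub, ht]
    simp
  · intro x
    have e1 : star x ⬝ᵥ ((Eᴴ * E) *ᵥ x) = ((∑ u, ‖(E *ᵥ x) u‖ ^ 2 : ℝ) : ℂ) := by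
      rw [← Matrix.mulVec_mulVec, Matrix.dotProduct_mulVec, ← Matrix.star_mulVec]
      simp only [dotProduct]
      push_cast
      refine Finset.sum_congr rfl fun _ _ => ?_
      rw [← Complex.conj_mul']; rfl
    have e2 : star x ⬝ᵥ x = ((∑ a, ‖x a‖ ^ 2 : ℝ) : ℂ) := by
      simp only [dotProduct]
      push_cast
      refine Finset.sum_congr rfl fun _ _ => ?_
      rw [← Complex.conj_mul']; rfl
    rw [sub_mulVec, smul_mulVec, one_mulVec, dotProduct_sub, dotProduct_smul, e1, e2, ht, smul_eq_mul,
      ← Complex.ofReal_mul, ← Complex.ofReal_sub]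
    rw [Complex.zero_le_real, sub_nonneg, Finset.sum_mul]
    refine Finset.sum_le_sum fun u _ => ?_
    have h1 : ‖(E *ᵥ x) u‖ ≤ ∑ a, ‖E u a‖ * ‖x a‖ := by
      simp only [mulVec, dotProduct]
      exact (norm_sum_le _ _).trans (Finset.sum_le_sum fun a _ => (norm_mul _ _).le)
    calc ‖(E *ᵥ x) u‖ ^ 2 ≤ (∑ a, ‖E u a‖ * ‖x a‖) ^ 2 := by gcongr
      _ ≤ _ := Finset.sum_mul_sq_le_sq_mul_sq _ _ _

lemma inv_sub_psd {G H : Matrix κ κ ℂ} (hG : G.PosSemidef) (hH : Hᴴ = H) (HG : H * G = 1) :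
    (trace G • H - 1).PosSemidef := by
  obtain ⟨E, rfl⟩ := psd_factor hG
  have h1 := trace_sub_psd (Matrix.posSemidef_self_mul_conjTranspose E)
  have h2 := h1.conjTranspose_mul_mul_same (E * H)
  have GH : Eᴴ * E * H = 1 := mul_eq_one_comm.mp HG
  convert h2 using 1
  rw [trace_mul_comm E Eᴴ, mul_sub, sub_mul, conjTranspose_mul, hH]
  have e1 : H * Eᴴ * (E * Eᴴ) * (E * H) = H * (Eᴴ * E) * (Eᴴ * E * H) := by simp only [mul_assoc]
  have e2 : H * Eᴴ * (E * H) = H * (Eᴴ * E) * H := by simp only [mul_assoc]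
  rw [Matrix.mul_smul, mul_one, Matrix.smul_mul, e1, e2, GH, HG]
  simp

/-- gradient form -/
def P (K : Matrix σ σ ℂ) (x y : σ → ℂ) : ℂ := ∑ s, ∑ t, K t s * (x s * star (y t))

lemma P_factor (C : Matrix σ σ ℂ) (v w : σ → ℂ) :
    P (Cᴴ * C) v w = ∑ u, (∑ s, C u s * v s) * star (∑ s, C u s * w s) := by
  have : ∀ u, (∑ s, C u s * v s) * star (∑ s, C u s * w s)
      = ∑ s, ∑ t, star (C u t) * C u s * (v s * star (w t)) := by
    intro u
    rw [star_sum, Finset.sum_mul_sum]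
    exact Finset.sum_congr rfl fun _ _ => Finset.sum_congr rfl fun _ _ => by simp; ring
  rw [Finset.sum_congr rfl fun u _ => this u]
  simp only [P, Matrix.mul_apply, conjTranspose_apply, Finset.sum_mul]
  symm
  rw [Finset.sum_comm]
  refine Finset.sum_congr rfl fun s _ => ?_
  rw [Finset.sum_comm]

lemma P_nonneg {K : Matrix σ σ ℂ} (hK : K.PosSemidef) (v : σ → ℂ) : 0 ≤ P K v v := by
  obtain ⟨C, rfl⟩ := psd_factor hK
  rw [P_factor]
  refine Finset.sum_nonneg fun u _ => ?_
  exact mul_star_self_nonneg _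

lemma P_star {K : Matrix σ σ ℂ} (hK : Kᴴ = K) (v w : σ → ℂ) : P K w v = star (P K v w) := by
  have : ∀ s t, star (K s t) = K t s := fun s t => by
    have := congrFun (congrFun hK t) s; simpa using this
  simp only [P, star_sum, star_mul', this, star_star]
  rw [Finset.sum_comm]
  exact Finset.sum_congr rfl fun _ _ => Finset.sum_congr rfl fun _ _ => by ring

lemma P_amgm {K : Matrix σ σ ℂ} (hK : K.PosSemidef) (v w : σ → ℂ) {e : ℝ} (he : 0 < e) :
    2 * (P K v w).re ≤ e * (P K v v).re + e⁻¹ * (P K w w).re := by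
  have h1 := (Complex.le_def.1 (P_nonneg hK (fun s => (e : ℂ) * v s - w s))).1
  have h2 : P K (fun s => (e : ℂ) * v s - w s) (fun s => (e : ℂ) * v s - w s)
      = (e : ℂ) ^ 2 * P K v v - e * (P K v w) - e * P K w v + P K w w := by
    simp only [P, Finset.mul_sum, ← Finset.sum_sub_distrib, ← Finset.sum_add_distrib]
    refine Finset.sum_congr rfl fun _ _ => Finset.sum_congr rfl fun _ _ => ?_
    simp
    ring
  rw [h2, P_star hK.1 v w] at h1
  have h3 : 0 ≤ e ^ 2 * (P K v v).re - 2 * e * (P K v w).re + (P K w w).re := by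
    have : ((e : ℂ) ^ 2 * P K v v).re = e ^ 2 * (P K v v).re := by
      rw [← Complex.ofReal_pow, Complex.re_ofReal_mul]
    simp [Complex.re_ofReal_mul, this] at h1
    linarith
  have h4 : 0 ≤ e⁻¹ * (e ^ 2 * (P K v v).re - 2 * e * (P K v w).re + (P K w w).re) := by positivity
  have h5 : e⁻¹ * (e ^ 2 * (P K v v).re - 2 * e * (P K v w).re + (P K w w).re)
    = e * (P K v v).re - 2 * (P K v w).re + e⁻¹ * (P K w w).re := by field_simp
  linarith

lemma P_trace_le {K : Matrix σ σ ℂ} (hK : K.PosSemidef) (v : σ → Matrix κ κ ℂ) :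
    P K (fun s => trace (v s)) (fun s => trace (v s)) ≤ (Fintype.card κ : ℂ) * Q K 1 1 v v := by
  obtain ⟨C, rfl⟩ := psd_factor hK
  rw [P_factor, Q_factor, Finset.mul_sum]
  refine Finset.sum_le_sum fun u _ => ?_
  have h0 : ∑ s, C u s * trace (v s) = trace (∑ s, C u s • v s) := by simp [trace_sum]
  rw [h0, mul_one, mul_one]
  generalize ∑ s, C u s • v s = w
  have e1 : trace w * star (trace w) = ((‖trace w‖ ^ 2 : ℝ) : ℂ) := by
    push_cast; rw [← Complex.mul_conj']; rfl
  have e2 : trace (w * wᴴ) = ((∑ a, ∑ b, ‖w a b‖ ^ 2 : ℝ) : ℂ) := by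
    simp only [trace, diag, Matrix.mul_apply, conjTranspose_apply]
    push_cast
    refine Finset.sum_congr rfl fun _ _ => Finset.sum_congr rfl fun _ _ => ?_
    rw [← Complex.mul_conj']; rfl
  rw [e1, e2]
  have : ‖trace w‖ ^ 2 ≤ Fintype.card κ * ∑ a, ∑ b, ‖w a b‖ ^ 2 := by
    calc ‖trace w‖ ^ 2 ≤ (∑ a, ‖w a a‖) ^ 2 := by gcongr; exact norm_sum_le _ _
      _ ≤ Fintype.card κ * ∑ a, ‖w a a‖ ^ 2 := by
        have := sq_sum_le_card_mul_sum_sq (s := Finset.univ) (f := fun a => ‖w a a‖)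
        simpa using this
      _ ≤ _ := by
        gcongr with a
        exact Finset.single_le_sum (f := fun b => ‖w a b‖ ^ 2) (fun _ _ => by positivity) (Finset.mem_univ a)
  exact_mod_cast this

/-- `f ≤ tr H · (-Lu)` -/
lemma Q_le_trace {K : Matrix σ σ ℂ} {H : Matrix κ κ ℂ} (hK : K.PosSemidef) (hH : H.PosSemidef)
    (v : σ → Matrix κ κ ℂ) : Q K H H v v ≤ trace H * Q K 1 H v v := by
  have := Q_nonneg hK (trace_sub_psd hH) hH v
  rw [Q_sub_H, Q_smul_H] at this
  exact sub_nonneg.1 this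

lemma P_le_Q {K : Matrix σ σ ℂ} {G H : Matrix κ κ ℂ} (hK : K.PosSemidef) (hG : G.PosSemidef)
    (hH : H.PosSemidef) (HG : H * G = 1) (v : σ → Matrix κ κ ℂ) :
    P K (fun s => trace (v s)) (fun s => trace (v s))
      ≤ (Fintype.card κ : ℂ) * (trace G * (trace G * Q K H H v v)) := by
  refine (P_trace_le hK v).trans ?_
  have ht := hG.trace_nonneg
  have h1 := Q_nonneg hK (inv_sub_psd hG hH.1 HG) Matrix.PosSemidef.one v
  have h2 := Q_nonneg hK hH (inv_sub_psd hG hH.1 HG) v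
  rw [Q_sub_H, Q_smul_H, sub_nonneg] at h1
  rw [Q_sub_G, Q_smul_G, sub_nonneg] at h2
  have h3 : trace G * Q K H 1 v v ≤ trace G * (trace G * Q K H H v v) := mul_le_mul_of_nonneg_left h2 ht
  exact mul_le_mul_of_nonneg_left (h1.trans h3) (by positivity)

lemma P_le_trace {K : Matrix σ σ ℂ} (hK : K.PosSemidef) (v : σ → ℂ) :
    P K v v ≤ trace K * ((∑ a, ‖v a‖ ^ 2 : ℝ) : ℂ) := by
  have h := (trace_sub_psd hK).dotProduct_mulVec_nonneg v
  have e2 : star v ⬝ᵥ v = ((∑ a, ‖v a‖ ^ 2 : ℝ) : ℂ) := by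
    simp only [dotProduct]
    push_cast
    refine Finset.sum_congr rfl fun _ _ => ?_
    rw [← Complex.conj_mul']; rfl
  have e1 : star v ⬝ᵥ (K *ᵥ v) = P K v v := by
    simp only [P, dotProduct, mulVec, Finset.mul_sum]
    rw [Finset.sum_comm]
    exact Finset.sum_congr rfl fun _ _ => Finset.sum_congr rfl fun _ _ => by simp; ring
  rw [sub_mulVec, smul_mulVec, one_mulVec, dotProduct_sub, dotProduct_smul, e1, e2] at h
  exact sub_nonneg.1 h
end quadC
end Calabi


namespace Calabi
set_option linter.all false
section pt
variable {A : Type*} [CommRing A] [Algebra ℂ A] [StarRing A]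
variable {ι κ : Type*} [Fintype ι] [DecidableEq ι] [Fintype κ] [DecidableEq κ]
namespace Fl
variable {S : Fl ι κ A}

lemma Herm.f_eq (hS : S.Herm) : S.f = Q S.h S.H S.G S.Γ S.Γ := by
  simp only [f, Q]
  refine Finset.sum_congr rfl fun k _ => ?_
  rw [hS.Γb_eq, Finset.mul_sum, trace_sum]
  refine Finset.sum_congr rfl fun l _ => ?_
  rw [Matrix.mul_smul, trace_smul, smul_eq_mul, mul_assoc (S.Γ k), mul_assoc (S.Γ k)]

lemma Herm.f_eq' (hS : S.Herm) :
    S.f = Q S.h S.H S.H (fun i => S.G.map (S.d i)) (fun i => S.G.map (S.d i)) := by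
  rw [hS.f_eq]
  simp only [Q]
  refine Finset.sum_congr rfl fun k _ => Finset.sum_congr rfl fun l _ => ?_
  congr 2
  rw [Γ, Γ, conjTranspose_mul, hS.H]
  calc _ = S.G.map (S.d k) * S.H * (S.G * S.H) * (S.G.map (S.d l))ᴴ * S.H := by simp only [mul_assoc]
    _ = _ := by rw [S.GH, mul_one]

lemma Herm.XW (hS : S.Herm) : ∑ i, ∑ k, trace (S.X i k * (S.Γb k).map (S.D i))
    = Q (Matrix.kroneckerMap (· * ·) S.h S.h) S.H S.G (fun s : ι × ι => S.X s.1 s.2) (fun s => S.X s.1 s.2) := by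
  simp only [Q, Fintype.sum_prod_type, kroneckerMap_apply]
  refine Finset.sum_congr rfl fun i _ => Finset.sum_congr rfl fun k _ => ?_
  rw [hS.W_eq, Finset.mul_sum, trace_sum]
  refine Finset.sum_congr rfl fun j _ => ?_
  rw [Finset.mul_sum, trace_sum]
  refine Finset.sum_congr rfl fun l _ => ?_
  rw [Matrix.mul_smul, trace_smul, smul_eq_mul, mul_assoc (S.X i k), mul_assoc (S.X i k)]

lemma Herm.YZ (hS : S.Herm) : ∑ l, ∑ k, trace (S.Y l k * S.Z k l)
    = Q (Matrix.kroneckerMap (· * ·) S.h S.hᵀ) S.H S.G (fun s : ι × ι => S.y s.1 s.2) (fun s => S.y s.1 s.2) := by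
  simp only [Q, Fintype.sum_prod_type, kroneckerMap_apply, transpose_apply]
  refine Finset.sum_congr rfl fun l _ => ?_
  have : ∀ k, trace (S.Y l k * S.Z k l) = ∑ i, ∑ m, S.h m l * S.h i k * trace (S.y l i * S.G * (S.y m k)ᴴ * S.H) := by
    intro k
    rw [Y_eq, hS.Z_eq, Finset.sum_mul, trace_sum]
    refine Finset.sum_congr rfl fun i _ => ?_
    rw [Finset.mul_sum, trace_sum]
    refine Finset.sum_congr rfl fun m _ => ?_
    rw [Matrix.mul_smul, Matrix.smul_mul, trace_smul, trace_smul, smul_eq_mul, smul_eq_mul]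
    rw [← mul_assoc, ← mul_assoc, mul_assoc (S.h m l)]
    simp only [mul_assoc]
  rw [Finset.sum_congr rfl fun k _ => this k, Finset.sum_comm]
  refine Finset.sum_congr rfl fun i _ => ?_
  rw [Finset.sum_comm]

variable (S) in
def u : A := trace S.G

lemma Herm.u_evol (hS : S.Herm) (hG : S.FlowG) : S.dt S.u - S.Δ S.u
    = - Q S.h 1 S.H (fun i => S.G.map (S.d i)) (fun i => S.G.map (S.d i)) := by
  rw [u, md_trace, hG, trace_sum, Δ, ← Finset.sum_sub_distrib, Q, ← Finset.sum_neg_distrib]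
  refine Finset.sum_congr rfl fun i _ => ?_
  rw [md_trace, md_trace, trace_sub, sub_sub_cancel_left, S.md_D, Finset.mul_sum, trace_sum]
  congr 1
  refine Finset.sum_congr rfl fun j _ => ?_
  rw [Matrix.mul_smul, trace_smul, smul_eq_mul, mul_one, hS.md_d, hS.G]

section ev
variable (e : A →+* ℂ)

lemma Herm.Lf_le (he : ∀ x, e (star x) = star (e x)) (hS : S.Herm) (hG : S.FlowG) (hg : S.Flowg) (ph : (S.h.map e).PosSemidef)
    (pG : (S.G.map e).PosSemidef) (pH : (S.H.map e).PosSemidef) :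
    e (S.dt S.f - S.Δ S.f) ≤ 0 := by
  rw [evol_f hG hg, hS.XW, hS.YZ, map_sub, map_neg, Q_map e he, Q_map e he]
  have e1 : (Matrix.kroneckerMap (· * ·) S.h S.h).map e = Matrix.kroneckerMap (· * ·) (S.h.map e) (S.h.map e) := by
    ext; simp
  have e2 : (Matrix.kroneckerMap (· * ·) S.h S.hᵀ).map e = Matrix.kroneckerMap (· * ·) (S.h.map e) (S.h.map e)ᵀ := by
    ext; simp
  rw [e1, e2]
  have h1 := Q_nonneg (ph.kronecker ph) pH pG (fun s : ι × ι => (S.X s.1 s.2).map e)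
  have h2 := Q_nonneg (ph.kronecker ph.transpose) pH pG (fun s : ι × ι => (S.y s.1 s.2).map e)
  have := add_nonneg h1 h2
  rw [← neg_nonpos] at this
  refine le_of_eq_of_le ?_ this
  ring

lemma Herm.f_nonneg (he : ∀ x, e (star x) = star (e x)) (hS : S.Herm) (ph : (S.h.map e).PosSemidef)
    (pG : (S.G.map e).PosSemidef) (pH : (S.H.map e).PosSemidef) : 0 ≤ e S.f := by
  rw [hS.f_eq, Q_map e he]
  exact Q_nonneg ph pH pG _

lemma map_dd (he : ∀ x, e (star x) = star (e x)) (d : Derivation ℂ A A) : (S.G.map d).map e = S.G.map (fun x => e (d x)) := rfl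

lemma Herm.f_le (he : ∀ x, e (star x) = star (e x)) (hS : S.Herm) (hG : S.FlowG) (ph : (S.h.map e).PosSemidef)
    (pH : (S.H.map e).PosSemidef) : e S.f ≤ trace (S.H.map e) * - e (S.dt S.u - S.Δ S.u) := by
  rw [hS.f_eq', hS.u_evol hG, map_neg, neg_neg, Q_map e he, Q_map e he]
  have e1 : (1 : Matrix κ κ A).map e = 1 := by simp
  rw [e1]
  exact Q_le_trace ph pH _

lemma Herm.du_le (he : ∀ x, e (star x) = star (e x)) (hS : S.Herm) (ph : (S.h.map e).PosSemidef)
    (pG : (S.G.map e).PosSemidef) (pH : (S.H.map e).PosSemidef) :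
    P (S.h.map e) (fun i => e (S.d i S.u)) (fun i => e (S.d i S.u))
     ≤ (Fintype.card κ : ℂ) * (trace (S.G.map e) * (trace (S.G.map e) * e S.f)) := by
  have HG : S.H.map e * S.G.map e = 1 := by
    rw [← Matrix.map_mul, S.HG]; simp
  have := P_le_Q ph pG pH HG (fun i => (S.G.map (S.d i)).map e)
  rw [hS.f_eq', Q_map e he]
  refine le_of_eq_of_le ?_ this
  congr 1 <;>
  · funext i
    rw [u, md_trace]; simp [Matrix.trace]
end ev

section prod
lemma Δ_mul (x y : A) : S.Δ (x * y) = x * S.Δ y + y * S.Δ x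
    + ∑ i, ∑ j, S.h j i * (S.d i x * S.db j y) + ∑ i, ∑ j, S.h j i * (S.d i y * S.db j x) := by
  simp only [Δ, S.D_apply, Finset.mul_sum, ← Finset.sum_add_distrib]
  refine Finset.sum_congr rfl fun i _ => Finset.sum_congr rfl fun j _ => ?_
  simp only [Derivation.leibniz, smul_eq_mul, map_add]
  ring

/-- for real `y`, the mixed gradient term is the gradient form -/
lemma Herm.grad (hS : S.Herm) (e : A →+* ℂ) (he : ∀ x, e (star x) = star (e x)) (x y : A) (hy : star y = y) :
    e (∑ i, ∑ j, S.h j i * (S.d i x * S.db j y)) = P (S.h.map e) (fun i => e (S.d i x)) (fun i => e (S.d i y)) := by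
  simp only [P, map_sum, map_mul, Matrix.map_apply, ← he, hS.sd, hy]
end prod
end Fl
end pt
end Calabi


namespace Calabi
set_option linter.all false
section maxp
open TopologicalSpace Filter Topology
variable {V : Type*} [NormedAddCommGroup V] [NormedSpace ℝ V] {U : Opens V}

lemma line_deriv (F : SA U) (p : V) (hp : p ∈ U) (v : V) (s : ℝ) (hs : p + s • v ∈ U) :
    HasDerivAt (fun s : ℝ => (xt F.1 (p + s • v)).re) ((xt (der v F).1 (p + s • v)).re) s := by
  have h1 : HasFDerivAt (xt F.1) (fderiv ℝ (xt F.1) (p + s • v)) (p + s • v) :=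
    (SA.da F ⟨_, hs⟩).hasFDerivAt
  have h2 : HasDerivAt (fun s : ℝ => p + s • v) v s := by
    simpa using ((hasDerivAt_id s).smul_const v).const_add p
  have h3 := h1.comp_hasDerivAt s h2
  have h4 := (Complex.reCLM.hasFDerivAt).comp_hasDerivAt s h3
  rw [xt_of_mem _ hs]
  exact h4

lemma line_mem (p : V) (hp : p ∈ U) (v : V) : ∀ᶠ s : ℝ in 𝓝 0, p + s • v ∈ U := by
  have : ContinuousAt (fun s : ℝ => p + s • v) 0 := by fun_prop
  apply this.eventually
  apply U.isOpen.mem_nhds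
  simpa using hp

lemma max_space (F : SA U) (p : V) (hp : p ∈ U) (v : V)
    (hmax : ∀ᶠ s : ℝ in 𝓝 0, (xt F.1 (p + s • v)).re ≤ (xt F.1 p).re) :
    ((der v F).1 ⟨p, hp⟩).re = 0 ∧ ((der v (der v F)).1 ⟨p, hp⟩).re ≤ 0 := by
  set φ : ℝ → ℝ := fun s => (xt F.1 (p + s • v)).re with hφ
  have hloc : IsLocalMax φ 0 := by
    filter_upwards [hmax] with s hs
    simpa [hφ] using hs
  have d1 : HasDerivAt φ ((der v F).1 ⟨p, hp⟩).re 0 := by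
    have := line_deriv F p hp v 0 (by simpa using hp)
    simpa [xt_of_mem _ hp] using this
  have d2 : HasDerivAt (deriv φ) ((der v (der v F)).1 ⟨p, hp⟩).re 0 := by
    have := line_deriv (der v F) p hp v 0 (by simpa using hp)
    simp only [zero_smul, add_zero, xt_of_mem _ hp] at this
    refine this.congr_of_eventuallyEq ?_
    filter_upwards [line_mem p hp v] with s hs
    exact (line_deriv F p hp v s hs).deriv
  have z1 : ((der v F).1 ⟨p, hp⟩).re = 0 := hloc.hasDerivAt_eq_zero d1
  refine ⟨z1, ?_⟩
  by_contra hc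
  push Not at hc
  have hmin : IsLocalMin φ 0 := by
    apply isLocalMin_of_deriv_deriv_pos
    · rw [d2.deriv]; exact hc
    · rw [d1.deriv, z1]
    · exact d1.continuousAt
  have hconst : φ =ᶠ[𝓝 0] fun _ => φ 0 := by
    filter_upwards [hloc, hmin] with s h1 h2
    exact le_antisymm h1 h2
  have h5 : deriv φ =ᶠ[𝓝 0] deriv fun _ => φ 0 := hconst.deriv
  have h6 : HasDerivAt (deriv fun _ : ℝ => φ 0) ((der v (der v F)).1 ⟨p, hp⟩).re 0 :=
    d2.congr_of_eventuallyEq h5.symm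
  have h7 : (deriv fun _ : ℝ => φ 0) = fun _ => 0 := by funext; simp
  rw [h7] at h6
  have := h6.unique (hasDerivAt_const 0 (0:ℝ))
  exact hc.ne' this

lemma max_time (F : SA U) (p : V) (hp : p ∈ U) (v : V)
    (hmax : ∀ᶠ s : ℝ in 𝓝[<] 0, (xt F.1 (p + s • v)).re ≤ (xt F.1 p).re) :
    0 ≤ ((der v F).1 ⟨p, hp⟩).re := by
  set φ : ℝ → ℝ := fun s => (xt F.1 (p + s • v)).re with hφ
  have d1 : HasDerivAt φ ((der v F).1 ⟨p, hp⟩).re 0 := by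
    have := line_deriv F p hp v 0 (by simpa using hp)
    simpa [xt_of_mem _ hp] using this
  have h2 := (hasDerivAt_iff_tendsto_slope.1 d1).mono_left (nhdsWithin_mono (0:ℝ) (show Set.Iio (0:ℝ) ⊆ {0}ᶜ from fun x (hx : x < 0) => ne_of_lt hx))
  refine ge_of_tendsto h2 ?_
  filter_upwards [hmax, self_mem_nhdsWithin] with s hs hs0
  have hs0 : s < 0 := hs0
  rw [slope_def_field]
  apply div_nonneg_of_nonpos
  · simp only [hφ, zero_smul, add_zero]; linarith
  · linarith
end maxp

section lin
open TopologicalSpace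
variable {V : Type*} [NormedAddCommGroup V] [NormedSpace ℝ V] {U : Opens V}
/-- a linear function as a smooth function -/
def lin (L : V →L[ℝ] ℂ) : SA U := mkA L L.contDiff.contDiffOn
lemma lin_apply (L : V →L[ℝ] ℂ) (p : U) : (lin L : SA U).1 p = L p := rfl
lemma der_lin (L : V →L[ℝ] ℂ) (v : V) : der v (lin L : SA U) = algebraMap ℂ (SA U) (L v) := by
  apply Subtype.ext; funext p
  rw [der_apply, ← fderiv_xt (lin L) L (fun _ => rfl) p, L.fderiv]
  rfl
end lin

section coord
open TopologicalSpace
variable {n : ℕ} {U : Opens (ℝ × (Fin n → ℂ))}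
def cz (i : Fin n) : SA U :=
  lin ((ContinuousLinearMap.proj (R := ℝ) (φ := fun _ : Fin n => ℂ) i).comp (ContinuousLinearMap.snd ℝ ℝ (Fin n → ℂ)))
def ct : SA U := lin (Complex.ofRealCLM.comp (ContinuousLinearMap.fst ℝ ℝ (Fin n → ℂ)))
lemma cz_apply (i : Fin n) (p : U) : (cz i : SA U).1 p = p.1.2 i := rfl
lemma ct_apply (p : U) : (ct : SA U).1 p = (p.1.1 : ℂ) := rfl
lemma half_aux : (1 / 2 : ℂ) • (1 - Complex.I * Complex.I) = 1 := by
  rw [Complex.I_mul_I]; norm_num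
lemma wD_cz (i j : Fin n) : wD i (cz j : SA U) = if i = j then 1 else 0 := by
  rw [wD_eq, cz, der_lin, der_lin]
  simp only [ContinuousLinearMap.comp_apply, ContinuousLinearMap.coe_snd', ContinuousLinearMap.proj_apply]
  by_cases h : i = j
  · subst h
    simp only [Pi.single_eq_same, if_true]
    apply Subtype.ext; funext p
    change (1 / 2 : ℂ) * (1 - Complex.I * Complex.I) = 1
    rw [Complex.I_mul_I]; norm_num
  · rw [Pi.single_eq_of_ne (Ne.symm h), Pi.single_eq_of_ne (Ne.symm h)]
    simp [h]
lemma wB_cz (i j : Fin n) : wB i (cz j : SA U) = 0 := by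
  rw [wB_eq, cz, der_lin, der_lin]
  simp only [ContinuousLinearMap.comp_apply, ContinuousLinearMap.coe_snd', ContinuousLinearMap.proj_apply]
  by_cases h : i = j
  · subst h
    simp only [Pi.single_eq_same]
    apply Subtype.ext; funext p
    change (1 / 2 : ℂ) * (1 + Complex.I * Complex.I) = 0
    rw [Complex.I_mul_I]; norm_num
  · rw [Pi.single_eq_of_ne (Ne.symm h), Pi.single_eq_of_ne (Ne.symm h)]
    simp
lemma wT_cz (j : Fin n) : wT (cz j : SA U) = 0 := by
  rw [wT, cz, der_lin]; simp
lemma wT_ct : wT (ct : SA U) = 1 := by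
  rw [wT, ct, der_lin]; simp
lemma wD_ct (i : Fin n) : wD i (ct : SA U) = 0 := by
  rw [wD_eq, ct, der_lin, der_lin]; simp
lemma wB_ct (i : Fin n) : wB i (ct : SA U) = 0 := by
  rw [wB_eq, ct, der_lin, der_lin]; simp
lemma ct_star : star (ct : SA U) = ct := by
  apply Subtype.ext; funext p
  change (starRingEnd ℂ) (p.1.1 : ℂ) = _
  rw [Complex.conj_ofReal]; rfl

/-- evaluation -/
def ev (p : U) : SA U →+* ℂ := (Pi.evalRingHom (fun _ : U => ℂ) p).comp (SA U).subtype.toRingHom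
lemma ev_apply (p : U) (f : SA U) : ev p f = f.1 p := rfl
lemma ev_star (p : U) (f : SA U) : ev p (star f) = star (ev p f) := rfl

lemma dir_dec (w : Fin n → ℂ) : ((0, w) : ℝ × (Fin n → ℂ))
    = ∑ i, ((w i).re • ((0, Pi.single i 1) : ℝ × (Fin n → ℂ)) + (w i).im • ((0, Pi.single i Complex.I) : ℝ × (Fin n → ℂ))) := by
  apply Prod.ext
  · simp [Prod.fst_sum]
  · funext k
    simp only [Prod.snd_sum, Finset.sum_apply, Prod.snd_add, Prod.smul_snd, Pi.add_apply, Pi.smul_apply]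
    rw [Finset.sum_eq_single k]
    · simp
    · intro b _ hb
      simp [Pi.single_eq_of_ne (Ne.symm hb)]
    · simp

lemma der_dec (w : Fin n → ℂ) (F : SA U) (p : U) : ev p (der (0, w) F)
    = ∑ i, (((w i).re : ℂ) * ev p (der (0, Pi.single i 1) F) + ((w i).im : ℂ) * ev p (der (0, Pi.single i Complex.I) F)) := by
  rw [ev_apply, der_apply, dir_dec w, map_sum]
  simp only [map_add, map_smul]
  rfl

lemma sum_wD (w : Fin n → ℂ) (F : SA U) : ∑ i, w i • wD i F
    = (1 / 2 : ℂ) • (der (0, w) F - Complex.I • der (0, Complex.I • w) F) := by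
  apply Subtype.ext; funext p
  have h1 : ∀ G : SA U, G.1 p = ev p G := fun _ => rfl
  have h2 : ∀ (c : ℂ) (G : SA U), ev p (c • G) = c * ev p G := fun _ _ => rfl
  rw [h1, h1]
  simp only [map_sum, h2, map_sub]
  rw [der_dec w, der_dec (Complex.I • w)]
  simp only [Finset.mul_sum, ← Finset.sum_sub_distrib]
  refine Finset.sum_congr rfl fun i _ => ?_
  rw [wD_eq]
  simp only [h2, map_sub]
  generalize ev p (der (0, Pi.single i 1) F) = a
  generalize ev p (der (0, Pi.single i Complex.I) F) = b
  have : w i = (w i).re + (w i).im * Complex.I := (Complex.re_add_im _).symm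
  have e1 : (((Complex.I • w) i).re : ℂ) = - (w i).im := by simp
  have e2 : (((Complex.I • w) i).im : ℂ) = (w i).re := by simp
  rw [e1, e2]
  conv_lhs => rw [this]
  linear_combination (-(1/2) * (w i).im * b : ℂ) * Complex.I_mul_I

lemma sum_wB (w : Fin n → ℂ) (F : SA U) : ∑ i, star (w i) • wB i F
    = (1 / 2 : ℂ) • (der (0, w) F + Complex.I • der (0, Complex.I • w) F) := by
  have h := congrArg star (sum_wD w (star F))
  simp only [star_sum, star_smul, wD_star, star_star, star_sub, der_star] at h
  rw [h]
  simp [sub_eq_add_neg]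

/-- complex Hessian direction -/
lemma hess (w : Fin n → ℂ) (F : SA U) (p : U) :
    ∑ i, ∑ j, w i * star (w j) * ev p (wB j (wD i F))
      = (1 / 4 : ℂ) * (ev p (der (0, w) (der (0, w) F)) + ev p (der (0, Complex.I • w) (der (0, Complex.I • w) F))) := by
  have h2 : ∀ (c : ℂ) (G : SA U), ev p (c • G) = c * ev p G := fun _ _ => rfl
  have h3 : ∑ i, ∑ j, w i * star (w j) * ev p (wB j (wD i F))
      = ev p (∑ j, star (w j) • wB j (∑ i, w i • wD i F)) := by
    simp only [map_sum, h2, Derivation.map_smul, Finset.mul_sum]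
    rw [Finset.sum_comm]
    exact Finset.sum_congr rfl fun _ _ => Finset.sum_congr rfl fun _ _ => by ring
  rw [h3, sum_wB, sum_wD]
  simp only [Derivation.map_smul, map_sub, h2, map_add]
  rw [der_der ((0, Complex.I • w) : ℝ × (Fin n → ℂ)) ((0, w) : ℝ × (Fin n → ℂ))]
  generalize ev p (der (0, w) (der (0, w) F)) = a
  generalize ev p (der (0, w) (der (0, Complex.I • w) F)) = b
  generalize ev p (der (0, Complex.I • w) (der (0, Complex.I • w) F)) = c
  linear_combination (-(1/4) * c : ℂ) * Complex.I_mul_I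

/-- the Laplacian with a positive weight is nonpositive at a spatial maximum -/
lemma lap_le (K : Matrix (Fin n) (Fin n) ℂ) (hK : K.PosSemidef) (F : SA U) (p : U)
    (h : ∀ w : Fin n → ℂ, (ev p (der (0, w) (der (0, w) F))).re ≤ 0) :
    (∑ i, ∑ j, K j i * ev p (wB j (wD i F))).re ≤ 0 := by
  obtain ⟨C, rfl⟩ := psd_factor hK
  have : ∑ i, ∑ j, (Cᴴ * C) j i * ev p (wB j (wD i F))
      = ∑ u, ∑ i, ∑ j, C u i * star (C u j) * ev p (wB j (wD i F)) := by
    simp only [Matrix.mul_apply, conjTranspose_apply, Finset.sum_mul]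
    symm
    rw [Finset.sum_comm]
    refine Finset.sum_congr rfl fun s _ => ?_
    rw [Finset.sum_comm]
    exact Finset.sum_congr rfl fun _ _ => Finset.sum_congr rfl fun _ _ => by ring
  rw [this, Complex.re_sum]
  refine Finset.sum_nonpos fun u _ => ?_
  rw [hess, show (1 / 4 : ℂ) = ((1 / 4 : ℝ) : ℂ) by norm_num, Complex.re_ofReal_mul, Complex.add_re]
  have h1 := h (fun i => C u i)
  have h2 := h (Complex.I • fun i => C u i)
  nlinarith

/-- the gradient vanishes at a spatial maximum -/
lemma wD_zero (F : SA U) (hF : star F = F) (p : U)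
    (h : ∀ w : Fin n → ℂ, (ev p (der (0, w) F)).re = 0) (i : Fin n) : ev p (wD i F) = 0 := by
  have h2 : ∀ (c : ℂ) (G : SA U), ev p (c • G) = c * ev p G := fun _ _ => rfl
  have h0 : ∀ w : Fin n → ℂ, ev p (der (0, w) F) = 0 := by
    intro w
    have : star (ev p (der (0, w) F)) = ev p (der (0, w) F) := by
      rw [← ev_star, ← der_star, hF]
    apply Complex.ext
    · exact h w
    · exact Complex.conj_eq_iff_im.1 this
  rw [wD_eq, h2, map_sub, h2, h0, h0]; simp
end coord
end Calabi


namespace Calabi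
set_option linter.all false
section scal

lemma scalar {f ψ ψ' φ q Δφ Lf Lu Ruφ Rfφ du2 M N R : ℝ} (hf : 0 ≤ f) (hψ : 0 ≤ ψ) (hψR : ψ ≤ R ^ 2)
    (hψ0 : 0 ≤ ψ') (hψ1 : ψ' ≤ 1) (hφ : 0 < φ) (hφ1 : φ ≤ 1) (hq : 0 ≤ q) (hq1 : q * R ^ 2 ≤ 2 * M)
    (hΔ : - Δφ * R ^ 2 ≤ 2 * M) (hLf : Lf ≤ 0) (hLu : f ≤ M * (- Lu)) (hdu : du2 ≤ N * M ^ 2 * f)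
    (hM : 1 ≤ M) (hN : 1 ≤ N) (hR : 0 < R)
    (ham : 4 * φ * Ruφ ≤ φ ^ 2 * du2 / (2 * N * M ^ 3) + 8 * N * M ^ 3 * q)
    (h1 : 0 ≤ ψ' * φ ^ 2 * f + ψ * φ ^ 2 * Lf - ψ * f * (2 * φ * Δφ + 2 * q) - 4 * ψ * φ * Rfφ + 36 * M ^ 2 * Lu)
    (h2 : ψ * φ ^ 2 * Rfφ = - (36 * M ^ 2) * Ruφ - 2 * ψ * f * φ * q) :
    ψ * φ ^ 2 * f ≤ 576 * N * M ^ 5 := by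
  have hM0 : 0 < M := by linarith
  have hN0 : 0 < N := by linarith
  have e1 : 0 ≤ φ ^ 2 * (ψ' * φ ^ 2 * f + ψ * φ ^ 2 * Lf - ψ * f * (2 * φ * Δφ + 2 * q) + 36 * M ^ 2 * Lu)
      + 36 * M ^ 2 * (4 * φ * Ruφ) + 8 * ψ * f * φ ^ 2 * q := by
    have := mul_nonneg (sq_nonneg φ) h1
    have h3 : 4 * φ * (ψ * φ ^ 2 * Rfφ) = 4 * φ * (- (36 * M ^ 2) * Ruφ - 2 * ψ * f * φ * q) := by rw [h2]
    linarith
  have e2 : φ ^ 2 * du2 / (2 * N * M ^ 3) ≤ φ ^ 2 * f / (2 * M) := by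
    rw [div_le_div_iff₀ (by positivity) (by positivity)]
    have : φ ^ 2 * du2 * (2 * M) ≤ φ ^ 2 * (N * M ^ 2 * f) * (2 * M) := by gcongr
    linarith
  have a1 : ψ' * φ ^ 2 * f ≤ M * f := by
    have : ψ' * φ ^ 2 ≤ 1 * 1 := mul_le_mul hψ1 (pow_le_one₀ hφ.le hφ1) (by positivity) (by norm_num)
    exact mul_le_mul_of_nonneg_right (by linarith) hf
  have a2 : ψ * φ ^ 2 * Lf ≤ 0 := mul_nonpos_of_nonneg_of_nonpos (by positivity) hLf
  have a3 : - (ψ * f * (2 * φ * Δφ)) ≤ 4 * M * f := by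
    have b : ψ * (-Δφ) ≤ 2 * M := by
      by_cases hh : 0 ≤ -Δφ
      · calc ψ * (-Δφ) ≤ R ^ 2 * (-Δφ) := by gcongr
          _ ≤ _ := by linarith
      · have : ψ * (-Δφ) ≤ 0 := mul_nonpos_of_nonneg_of_nonpos hψ (by linarith)
        linarith
    have b2 : φ * (ψ * (-Δφ)) ≤ 2 * M := by
      by_cases hh : 0 ≤ ψ * (-Δφ)
      · nlinarith
      · nlinarith
    nlinarith
  have a4 : ψ * f * q ≤ 2 * M * f := by
    have : ψ * q ≤ R ^ 2 * q := by gcongr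
    nlinarith
  have a5 : 36 * M ^ 2 * Lu ≤ - (36 * M * f) := by nlinarith
  have a6 : 0 ≤ 17 * M * (φ ^ 2 * f) - 36 * M * (φ ^ 2 * f) + 36 * M ^ 2 * (φ ^ 2 * f / (2 * M)) + 36 * M ^ 2 * (8 * N * M ^ 3 * q) := by
    have c1 : φ ^ 2 * (ψ' * φ ^ 2 * f + ψ * φ ^ 2 * Lf - ψ * f * (2 * φ * Δφ + 2 * q) + 36 * M ^ 2 * Lu + 8 * (ψ * f * q))
        ≤ φ ^ 2 * (17 * M * f - 36 * M * f) := by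
      apply mul_le_mul_of_nonneg_left _ (sq_nonneg φ)
      linarith
    have c2 : 36 * M ^ 2 * (4 * φ * Ruφ) ≤ 36 * M ^ 2 * (φ ^ 2 * f / (2 * M) + 8 * N * M ^ 3 * q) := by
      gcongr
      linarith
    linarith
  have a7 : 36 * M ^ 2 * (φ ^ 2 * f / (2 * M)) = 18 * M * (φ ^ 2 * f) := by field_simp; ring
  rw [a7] at a6
  have a8 : M * (φ ^ 2 * f) ≤ M * (288 * N * M ^ 4 * q) := by linarith
  have a9 := le_of_mul_le_mul_left a8 hM0
  calc ψ * φ ^ 2 * f = ψ * (φ ^ 2 * f) := by ring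
    _ ≤ R ^ 2 * (288 * N * M ^ 4 * q) := mul_le_mul hψR a9 (by positivity) (by positivity)
    _ = 288 * N * M ^ 4 * (q * R ^ 2) := by ring
    _ ≤ 288 * N * M ^ 4 * (2 * M) := by gcongr
    _ = _ := by ring
end scal

section re
variable {A : Type*} [CommRing A] [Algebra ℂ A] [StarRing A]
variable {ι κ : Type*} [Fintype ι] [DecidableEq ι] [Fintype κ] [DecidableEq κ]
namespace Fl
variable {S : Fl ι κ A}
variable (e : A →+* ℂ)
lemma real_e (he : ∀ x, e (star x) = star (e x)) {x : A} (hx : star x = x) : e x = ((e x).re : ℂ) := by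
  have : star (e x) = e x := by rw [← he, hx]
  exact (Complex.conj_eq_iff_re.1 this).symm

lemma Herm.reΔ_mul (he : ∀ x, e (star x) = star (e x)) (hS : S.Herm) (x y : A) (hx : star x = x) (hy : star y = y) :
    (e (S.Δ (x * y))).re = (e x).re * (e (S.Δ y)).re + (e y).re * (e (S.Δ x)).re
      + 2 * (P (S.h.map e) (fun i => e (S.d i x)) (fun i => e (S.d i y))).re := by
  rw [Δ_mul, map_add, map_add, map_add, map_mul, map_mul, hS.grad e he x y hy, hS.grad e he y x hx,
    real_e e he hx, real_e e he hy]
  have hh : (S.h.map e)ᴴ = S.h.map e := by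
    ext a b
    have := congrFun (congrFun hS.h a) b
    simp only [conjTranspose_apply, Matrix.map_apply] at this ⊢
    rw [← he, this]
  rw [P_star hh (fun i => e (S.d i x)) (fun i => e (S.d i y))]
  simp [Complex.re_ofReal_mul]
  ring
end Fl
end re

section core
open TopologicalSpace Filter Topology
variable {n : ℕ} {κ : Type*} [Fintype κ] [DecidableEq κ]

lemma cont_ns : Continuous fun z : Fin n → ℂ => ∑ i, Complex.normSq (z i) := by
  refine continuous_finsetSum _ fun i _ => ?_
  exact Complex.continuous_normSq.comp (continuous_apply i)

lemma isOpen_eball (R : ℝ) : IsOpen (eball (n := n) R) := isOpen_lt cont_ns continuous_const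

/-- the space-time domain -/
def Uo (n : ℕ) (τ R : ℝ) : Opens (ℝ × (Fin n → ℂ)) :=
  ⟨Set.Ioo 0 τ ×ˢ eball R, isOpen_Ioo.prod (isOpen_eball R)⟩

variable {U : Opens (ℝ × (Fin n → ℂ))}
/-- spatial cutoff -/
def cφ (c : ℝ) : SA U := 1 - (c : ℂ) • ∑ i, cz i * star (cz i)
/-- time cutoff -/
def cψ (m s : ℝ) : SA U := (m : ℂ) • (ct - algebraMap ℂ (SA U) (s : ℂ))

lemma cφ_apply (c : ℝ) (p : U) : ev p (cφ c) = ((1 - c * ∑ i, Complex.normSq (p.1.2 i) : ℝ) : ℂ) := by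
  have h2 : ∀ (c : ℂ) (G : SA U), ev p (c • G) = c * ev p G := fun _ _ => rfl
  rw [cφ, map_sub, h2, map_sum, map_one]
  push_cast
  congr 2
  refine Finset.sum_congr rfl fun i _ => ?_
  rw [map_mul, ev_star, ev_apply, cz_apply, ← Complex.mul_conj]; rfl
lemma cψ_apply (m s : ℝ) (p : U) : ev p (cψ m s) = ((m * (p.1.1 - s) : ℝ) : ℂ) := by
  have h2 : ∀ (c : ℂ) (G : SA U), ev p (c • G) = c * ev p G := fun _ _ => rfl
  rw [cψ, h2, map_sub, ev_apply, ct_apply]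
  push_cast
  rfl
lemma cφ_star (c : ℝ) : star (cφ c : SA U) = cφ c := by
  simp only [cφ, star_sub, star_one, star_smul, star_sum, star_mul', star_star]
  congr 2
  · exact Complex.conj_ofReal c
  · exact Finset.sum_congr rfl fun i _ => mul_comm _ _
lemma cψ_star (m s : ℝ) : star (cψ m s : SA U) = cψ m s := by
  apply Subtype.ext; funext p
  change star (ev p (cψ m s)) = ev p (cψ m s)
  rw [cψ_apply]; exact Complex.conj_ofReal _

lemma wD_zs (i j : Fin n) : wD i (star (cz j : SA U)) = 0 := by rw [← wB_star, wB_cz, star_zero]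
lemma wB_zs (i j : Fin n) : wB i (star (cz j : SA U)) = if i = j then 1 else 0 := by
  rw [← wD_star, wD_cz]; split_ifs <;> simp
lemma wT_zs (j : Fin n) : wT (star (cz j : SA U)) = 0 := by rw [← wT_star, wT_cz, star_zero]

lemma wD_cφ (c : ℝ) (i : Fin n) : wD i (cφ c : SA U) = - ((c : ℂ) • star (cz i)) := by
  rw [cφ, map_sub, Derivation.map_one_eq_zero, Derivation.map_smul, map_sum]
  simp only [Derivation.leibniz, wD_zs, wD_cz]
  simp
lemma wBD_cφ (c : ℝ) (i j : Fin n) : wB j (wD i (cφ c : SA U)) = - ((c : ℂ) • if j = i then 1 else 0) := by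
  rw [wD_cφ, map_neg, Derivation.map_smul, wB_zs]
lemma wT_cφ (c : ℝ) : wT (cφ c : SA U) = 0 := by
  rw [cφ, map_sub, Derivation.map_one_eq_zero, Derivation.map_smul, map_sum]
  simp only [Derivation.leibniz, wT_zs, wT_cz]
  simp
lemma wD_cψ (m s : ℝ) (i : Fin n) : wD i (cψ m s : SA U) = 0 := by
  rw [cψ, Derivation.map_smul, map_sub, wD_ct, Derivation.map_algebraMap]; simp
lemma wB_cψ (m s : ℝ) (i : Fin n) : wB i (cψ m s : SA U) = 0 := by
  rw [cψ, Derivation.map_smul, map_sub, wB_ct, Derivation.map_algebraMap]; simp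
lemma wT_cψ (m s : ℝ) : wT (cψ m s : SA U) = (m : ℂ) • 1 := by
  rw [cψ, Derivation.map_smul, map_sub, wT_ct, Derivation.map_algebraMap]; simp

end core
end Calabi


namespace Calabi
set_option linter.all false
section core2
open TopologicalSpace Filter Topology
variable {n : ℕ} {κ : Type*} [Fintype κ] [DecidableEq κ]
variable {U : Opens (ℝ × (Fin n → ℂ))}

lemma SA_real {x : SA U} (h : ∀ p, 0 ≤ ev p x) : star x = x := by
  apply Subtype.ext; funext p
  change (starRingEnd ℂ) (ev p x) = ev p x
  exact Complex.conj_eq_iff_im.2 (Complex.le_def.1 (h p)).2.symm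

lemma u_star {S : Fl (Fin n) κ (SA U)} (hS : S.Herm) : star S.u = S.u := by
  have : star (trace S.G) = trace S.Gᴴ := (trace_conjTranspose S.G).symm
  rw [Fl.u, this, hS.G]

/-- the test function -/
def FF (S : Fl (Fin n) κ (SA U)) (A c m s : ℝ) : SA U :=
  cψ m s * (cφ c * cφ c * S.f) + (A : ℂ) • S.u

set_option maxHeartbeats 4000000 in
lemma at_max (S : Fl (Fin n) κ (SA U)) (hS : S.Herm) (hG : S.FlowG) (hg : S.Flowg)
    (hdt : S.dt = wT) (hd : S.d = wD) (hdb : S.db = wB) {M N R m s c : ℝ} (hM : 1 ≤ M) (hN : 1 ≤ N)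
    (hcard : (Fintype.card κ : ℝ) ≤ N)
    (hfr : star S.f = S.f) (p : U)
    (ph : (S.h.map (ev p)).PosSemidef) (pG : (S.G.map (ev p)).PosSemidef)
    (pH : (S.H.map (ev p)).PosSemidef) (th : (trace (S.h.map (ev p))).re ≤ M)
    (tG : (trace (S.G.map (ev p))).re ≤ M) (tH : (trace (S.H.map (ev p))).re ≤ M)
    (hR : 0 < R) (hc : 0 ≤ c) (hcR : c * R ^ 2 ≤ 2) (hm0 : 0 ≤ m) (hm1 : m ≤ 1) (hψ : 0 ≤ m * (p.1.1 - s))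
    (hψR : m * (p.1.1 - s) ≤ R ^ 2) (hφ : 0 < 1 - c * ∑ i, Complex.normSq (p.1.2 i))
    (hgrad : ∀ i, ev p (wD i (FF S (36 * M ^ 2) c m s)) = 0)
    (hLap : (ev p (S.Δ (FF S (36 * M ^ 2) c m s))).re ≤ 0)
    (hT : 0 ≤ (ev p (wT (FF S (36 * M ^ 2) c m s))).re) :
    (m * (p.1.1 - s)) * (1 - c * ∑ i, Complex.normSq (p.1.2 i)) ^ 2 * (ev p S.f).re ≤ 576 * N * M ^ 5 := by
  have h2 : ∀ (c : ℂ) (G : SA U), ev p (c • G) = c * ev p G := fun _ _ => rfl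
  have he := ev_star p
  have hns : 0 ≤ ∑ i, Complex.normSq (p.1.2 i) := Finset.sum_nonneg fun i _ => Complex.normSq_nonneg _
  set φ : ℝ := 1 - c * ∑ i, Complex.normSq (p.1.2 i) with hφd
  set ψ : ℝ := m * (p.1.1 - s) with hψd
  have eφ : ev p (cφ c) = (φ : ℂ) := cφ_apply c p
  have eψ : ev p (cψ m s) = (ψ : ℂ) := cψ_apply m s p
  have hf0 := hS.f_nonneg (ev p) he ph pG pH
  have ef : ev p S.f = ((ev p S.f).re : ℂ) := Fl.real_e (ev p) he hfr
  have eth : trace (S.h.map (ev p)) = ((trace (S.h.map (ev p))).re : ℂ) := by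
    apply Complex.ext
    · simp
    · simpa using (Complex.le_def.1 ph.trace_nonneg).2.symm
  have etG : trace (S.G.map (ev p)) = ((trace (S.G.map (ev p))).re : ℂ) := by
    apply Complex.ext
    · simp
    · simpa using (Complex.le_def.1 pG.trace_nonneg).2.symm
  have etH : trace (S.H.map (ev p)) = ((trace (S.H.map (ev p))).re : ℂ) := by
    apply Complex.ext
    · simp
    · simpa using (Complex.le_def.1 pH.trace_nonneg).2.symm
  have th0 : 0 ≤ (trace (S.h.map (ev p))).re := (Complex.le_def.1 ph.trace_nonneg).1
  have tG0 : 0 ≤ (trace (S.G.map (ev p))).re := (Complex.le_def.1 pG.trace_nonneg).1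
  have tH0 : 0 ≤ (trace (S.H.map (ev p))).re := (Complex.le_def.1 pH.trace_nonneg).1
  have hfre : 0 ≤ (ev p S.f).re := (Complex.le_def.1 hf0).1
  set K := S.h.map (ev p) with hK
  set dφ : Fin n → ℂ := fun i => ev p (S.d i (cφ c)) with hdφ
  set du : Fin n → ℂ := fun i => ev p (S.d i S.u) with hdu
  set df : Fin n → ℂ := fun i => ev p (S.d i S.f) with hdf
  have vφ : ∀ i, dφ i = - (c * star (p.1.2 i)) := by
    intro i
    rw [hdφ]; simp only [hd, wD_cφ, map_neg, h2, ev_star]; rfl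
  -- |dφ|²
  have q0 : 0 ≤ (P K dφ dφ).re := (Complex.le_def.1 (P_nonneg ph dφ)).1
  have q1 : (P K dφ dφ).re * R ^ 2 ≤ 2 * M := by
    have h := (Complex.le_def.1 (P_le_trace ph dφ)).1
    rw [eth, ← Complex.ofReal_mul, Complex.ofReal_re] at h
    have hs : ∑ a, ‖dφ a‖ ^ 2 = c * (c * ∑ i, Complex.normSq (p.1.2 i)) := by
      rw [Finset.mul_sum, Finset.mul_sum]
      refine Finset.sum_congr rfl fun i _ => ?_
      rw [vφ, norm_neg, norm_mul, norm_star, Complex.normSq_eq_norm_sq, Complex.norm_real, Real.norm_eq_abs,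
        mul_pow, sq_abs]
      ring
    rw [hs] at h
    have hcs : c * ∑ i, Complex.normSq (p.1.2 i) ≤ 1 := by linarith
    have hcs0 : 0 ≤ c * ∑ i, Complex.normSq (p.1.2 i) := by positivity
    have h3 : (P K dφ dφ).re ≤ M * c := by
      calc (P K dφ dφ).re ≤ _ := h
        _ ≤ M * (c * 1) := by gcongr
        _ = M * c := by ring
    calc (P K dφ dφ).re * R ^ 2 ≤ M * c * R ^ 2 := by gcongr
      _ = M * (c * R ^ 2) := by ring
      _ ≤ M * 2 := by gcongr
      _ = _ := by ring
  -- Δφ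
  have eΔφ : ev p (S.Δ (cφ c)) = ((- (c * (trace K).re) : ℝ) : ℂ) := by
    simp only [Fl.Δ, Fl.D_apply, hd, hdb, wBD_cφ]
    push_cast
    rw [← eth]
    simp only [map_sum, map_mul, map_neg, h2, trace, diag, hK, Matrix.map_apply, Finset.mul_sum, ← Finset.sum_neg_distrib]
    refine Finset.sum_congr rfl fun i _ => ?_
    rw [Finset.sum_eq_single i]
    · simp; ring
    · intro b _ hb; simp [hb]
    · simp
  have d1 : - (ev p (S.Δ (cφ c))).re * R ^ 2 ≤ 2 * M := by
    rw [eΔφ, Complex.ofReal_re]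
    calc - -(c * (trace K).re) * R ^ 2 = (c * R ^ 2) * (trace K).re := by ring
      _ ≤ 2 * M := by gcongr
  -- Lf, Lu
  have Lf := (Complex.le_def.1 (hS.Lf_le (ev p) he hG hg ph pG pH)).1
  rw [map_sub, Complex.sub_re, Complex.zero_re] at Lf
  have hLu : (ev p S.f).re ≤ M * (-(ev p (S.dt S.u - S.Δ S.u)).re) := by
    have h := (Complex.le_def.1 (hS.f_le (ev p) he hG ph pH)).1
    rw [etH, Complex.re_ofReal_mul, Complex.neg_re] at h
    by_cases hh : 0 ≤ -(ev p (S.dt S.u - S.Δ S.u)).re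
    · exact h.trans (mul_le_mul_of_nonneg_right tH hh)
    · push Not at hh
      have h4 := hS.u_evol hG
      exfalso
      have h5 : 0 ≤ ev p (Q S.h 1 S.H (fun i => S.G.map (S.d i)) (fun i => S.G.map (S.d i))) := by
        rw [Q_map (ev p) he]
        have e1 : (1 : Matrix κ κ (SA U)).map (ev p) = 1 := by simp
        rw [e1]
        exact Q_nonneg ph PosSemidef.one pH _
      rw [h4, map_neg, Complex.neg_re, neg_neg] at hh
      exact absurd (Complex.le_def.1 h5).1 (not_le.2 hh)
  rw [map_sub, Complex.sub_re] at hLu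
  have hdu2 : (P K du du).re ≤ N * M ^ 2 * (ev p S.f).re := by
    have h := (Complex.le_def.1 (hS.du_le (ev p) he ph pG pH)).1
    rw [etG, ef, ← Complex.ofReal_natCast, ← Complex.ofReal_mul, ← Complex.ofReal_mul, ← Complex.ofReal_mul,
      Complex.ofReal_re] at h
    refine h.trans ?_
    calc _ ≤ N * (M * (M * (ev p S.f).re)) := by gcongr
      _ = _ := by ring
  have hM0 : 0 < M := by linarith
  have hN0 : 0 < N := by linarith
  have ham : 4 * φ * (P K du dφ).re ≤ φ ^ 2 * (P K du du).re / (2 * N * M ^ 3) + 8 * N * M ^ 3 * (P K dφ dφ).re := by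
    have h := P_amgm ph du dφ (e := φ / (4 * N * M ^ 3)) (by positivity)
    have h3 := mul_le_mul_of_nonneg_left h (show 0 ≤ 2 * φ by positivity)
    calc _ = 2 * φ * (2 * (P K du dφ).re) := by ring
      _ ≤ _ := h3
      _ = _ := by field_simp; ring
  -- structural computation
  have sφφ : star (cφ c * cφ c : SA U) = cφ c * cφ c := by simp only [star_mul', cφ_star]
  have dφφ : ∀ i, ev p (S.d i (cφ c * cφ c)) = 2 * φ * dφ i := by
    intro i
    rw [Derivation.leibniz, map_add, smul_eq_mul, map_mul, eφ]; ring
  have P2 : P K (fun i => ev p (S.d i (cφ c * cφ c))) df = 2 * φ * P K dφ df := by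
    simp only [dφφ, P, Finset.mul_sum]
    exact Finset.sum_congr rfl fun _ _ => Finset.sum_congr rfl fun _ _ => by ring
  have Rs : (P K dφ df).re = (P K df dφ).re := by
    rw [P_star ph.1 df dφ]; simp
  have Δψ : S.Δ (FF S (36 * M ^ 2) c m s) = cψ m s * S.Δ (cφ c * cφ c * S.f) + ((36 * M ^ 2 : ℝ) : ℂ) • S.Δ S.u := by
    have : ∀ x y : SA U, S.Δ (x + y) = S.Δ x + S.Δ y := by
      intro x y; simp [Fl.Δ, Finset.sum_add_distrib]
    rw [FF, this, Fl.Δ_mul]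
    have z1 : S.Δ (cψ m s) = 0 := by simp [Fl.Δ, hd, wD_cψ]
    rw [z1]
    have z2 : S.Δ (((36 * M ^ 2 : ℝ) : ℂ) • S.u) = ((36 * M ^ 2 : ℝ) : ℂ) • S.Δ S.u := by
      simp [Fl.Δ, Derivation.map_smul, Finset.smul_sum]
    rw [z2]
    simp [hd, hdb, wD_cψ, wB_cψ]
  have hΔre : (ev p (S.Δ (FF S (36 * M ^ 2) c m s))).re
      = ψ * (φ ^ 2 * (ev p (S.Δ S.f)).re + (ev p S.f).re * (2 * φ * (ev p (S.Δ (cφ c))).re + 2 * (P K dφ dφ).re)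
        + 4 * φ * (P K df dφ).re) + 36 * M ^ 2 * (ev p (S.Δ S.u)).re := by
    rw [Δψ, map_add, map_mul, h2, eψ, Complex.add_re, Complex.re_ofReal_mul, Complex.re_ofReal_mul,
      hS.reΔ_mul (ev p) he _ _ sφφ hfr, hS.reΔ_mul (ev p) he _ _ (cφ_star c) (cφ_star c), map_mul, eφ]
    rw [P2, ← Complex.ofReal_mul, Complex.ofReal_re, Complex.ofReal_re]
    rw [show (2 : ℂ) * φ * P K dφ df = ((2 * φ : ℝ) : ℂ) * P K dφ df by push_cast; ring, Complex.re_ofReal_mul, Rs]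
    ring
  have hTre : (ev p (wT (FF S (36 * M ^ 2) c m s))).re
      = m * (φ ^ 2 * (ev p S.f).re) + ψ * φ ^ 2 * (ev p (S.dt S.f)).re + 36 * M ^ 2 * (ev p (S.dt S.u)).re := by
    rw [FF, map_add, Derivation.leibniz, Derivation.leibniz, Derivation.leibniz, Derivation.map_smul, wT_cφ, wT_cψ, hdt]
    simp only [smul_eq_mul, mul_zero, add_zero, map_add, map_mul, h2, eφ, eψ, map_one, mul_one, Complex.add_re]
    rw [ef]
    simp only [← Complex.ofReal_mul, Complex.re_ofReal_mul, Complex.ofReal_re]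
    ring
  have hgr : ∀ i, ψ * φ ^ 2 * df i = - (36 * M ^ 2 * du i) - 2 * ψ * (ev p S.f).re * φ * dφ i := by
    intro i
    have h := hgrad i
    rw [FF, map_add, Derivation.leibniz, Derivation.leibniz, Derivation.map_smul, wD_cψ, ← hd] at h
    simp only [smul_eq_mul, mul_zero, add_zero, map_add, map_mul, h2, eφ, eψ, dφφ] at h
    rw [ef] at h
    push_cast at h
    linear_combination h
  have h22 : ψ * φ ^ 2 * (P K df dφ).re = - (36 * M ^ 2) * (P K du dφ).re
      - 2 * ψ * (ev p S.f).re * φ * (P K dφ dφ).re := by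
    have : ((ψ * φ ^ 2 : ℝ) : ℂ) * P K df dφ = ((- (36 * M ^ 2) : ℝ) : ℂ) * P K du dφ
      - ((2 * ψ * (ev p S.f).re * φ : ℝ) : ℂ) * P K dφ dφ := by
      simp only [P, Finset.mul_sum, ← Finset.sum_sub_distrib]
      refine Finset.sum_congr rfl fun i _ => Finset.sum_congr rfl fun j _ => ?_
      have := hgr i
      push_cast
      linear_combination (K j i * star (dφ j)) * this
    have := congrArg Complex.re this
    rw [Complex.sub_re, Complex.re_ofReal_mul, Complex.re_ofReal_mul, Complex.re_ofReal_mul] at this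
    exact this
  refine scalar (Lf := (ev p (S.dt S.f)).re - (ev p (S.Δ S.f)).re) (q := (P K dφ dφ).re)
    (Δφ := (ev p (S.Δ (cφ c))).re) (ψ' := m) (R := R)
    (Lu := (ev p (S.dt S.u)).re - (ev p (S.Δ S.u)).re) (Ruφ := (P K du dφ).re) (Rfφ := (P K df dφ).re)
    (du2 := (P K du du).re)
    hfre hψ hψR hm0 hm1 hφ ?_ q0 q1 d1 Lf hLu hdu2 hM hN hR ham ?_ h22
  · have : 0 ≤ c * ∑ i, Complex.normSq (p.1.2 i) := by positivity
    linarith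
  · have := sub_nonneg.2 (hLap.trans hT)
    rw [hTre, hΔre] at this
    linarith
end core2
end Calabi


namespace Calabi
set_option linter.all false
section core3
open TopologicalSpace Filter Topology
variable {n : ℕ} {κ : Type*} [Fintype κ] [DecidableEq κ]

lemma compact_ball (r : ℝ) : IsCompact {z : Fin n → ℂ | ∑ i, Complex.normSq (z i) ≤ r} := by
  apply Metric.isCompact_of_isClosed_isBounded
  · exact isClosed_le cont_ns continuous_const
  · refine (Metric.isBounded_closedBall (x := (0 : Fin n → ℂ)) (r := Real.sqrt r)).subset ?_
    intro z hz
    rw [mem_closedBall_zero_iff]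
    refine (pi_norm_le_iff_of_nonneg (Real.sqrt_nonneg _)).2 fun i => ?_
    apply Real.le_sqrt_of_sq_le
    rw [← Complex.normSq_eq_norm_sq]
    exact (Finset.single_le_sum (f := fun i => Complex.normSq (z i)) (fun i _ => Complex.normSq_nonneg _)
      (Finset.mem_univ i)).trans hz

lemma FF_re {U : Opens (ℝ × (Fin n → ℂ))} (S : Fl (Fin n) κ (SA U)) (A c m s : ℝ) (p : U) :
    (ev p (FF S A c m s)).re = (m * (p.1.1 - s)) * (1 - c * ∑ i, Complex.normSq (p.1.2 i)) ^ 2 * (ev p S.f).re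
      + A * (trace (S.G.map (ev p))).re := by
  have h2 : ∀ (c : ℂ) (G : SA U), ev p (c • G) = c * ev p G := fun _ _ => rfl
  have hu : ev p S.u = trace (S.G.map (ev p)) := by
    simp [Fl.u, trace]
  rw [FF, map_add, map_mul, map_mul, map_mul, h2, cφ_apply, cψ_apply, hu, ← Complex.ofReal_mul, ← mul_assoc,
    ← Complex.ofReal_mul, Complex.add_re, Complex.re_ofReal_mul, Complex.re_ofReal_mul]
  ring

set_option maxHeartbeats 4000000 in
theorem core {τ R M N : ℝ} (S : Fl (Fin n) κ (SA (Uo n τ R))) (hS : S.Herm) (hG : S.FlowG) (hg : S.Flowg)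
    (hdt : S.dt = wT) (hd : S.d = wD) (hdb : S.db = wB) (hM : 1 ≤ M) (hN : 1 ≤ N)
    (hcard : (Fintype.card κ : ℝ) ≤ N) (hR : 0 < R) (hR1 : R ≤ 1)
    (ph : ∀ p, (S.h.map (ev p)).PosSemidef) (pG : ∀ p, (S.G.map (ev p)).PosSemidef)
    (pH : ∀ p, (S.H.map (ev p)).PosSemidef) (th : ∀ p, (trace (S.h.map (ev p))).re ≤ M)
    (tG : ∀ p, (trace (S.G.map (ev p))).re ≤ M) (tH : ∀ p, (trace (S.H.map (ev p))).re ≤ M)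
    (q : Uo n τ R) (hq : q.1.2 ∈ eball (n := n) (R / 2)) :
    (ev q S.f).re ≤ 8 * (576 * N * M ^ 5 + 36 * M ^ 3) * (1 / q.1.1 + R⁻¹ ^ 4) := by
  have hf0 : ∀ p, 0 ≤ ev p S.f := fun p => hS.f_nonneg (ev p) (ev_star p) (ph p) (pG p) (pH p)
  have hfr : star S.f = S.f := SA_real hf0
  have hq1 : 0 < q.1.1 ∧ q.1.1 < τ := q.2.1
  obtain ⟨ht0, htτ⟩ := hq1
  set t := q.1.1 with htd
  set c : ℝ := 16 / (9 * R ^ 2) with hc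
  have hc0 : 0 < c := by positivity
  set μ : ℝ := min t (R ^ 2) with hμ
  have hμ0 : 0 < μ := lt_min ht0 (by positivity)
  set m : ℝ := μ / t with hm
  have hm0 : 0 < m := by positivity
  have hm1 : m ≤ 1 := (div_le_one ht0).2 (min_le_left _ _)
  have hmt : m * t = μ := by rw [hm]; field_simp
  set F := FF S (36 * M ^ 2) c m (t / 2) with hF
  have hFs : star F = F := by
    rw [hF, FF, star_add, star_mul', star_mul', star_mul', cφ_star, cψ_star, hfr, star_smul, u_star hS]
    congr 2
    exact Complex.conj_ofReal _
  set C4 : ℝ := 576 * N * M ^ 5 + 36 * M ^ 3 with hC4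
  let Kc : Set (ℝ × (Fin n → ℂ)) := Set.Icc (t / 2) t ×ˢ {z : Fin n → ℂ | ∑ i, Complex.normSq (z i) ≤ 9 * R ^ 2 / 16}
  have hKU : ∀ p ∈ Kc, p ∈ Uo n τ R := by
    rintro p ⟨⟨h1, h2⟩, h3⟩
    refine ⟨⟨by linarith, by linarith⟩, ?_⟩
    have h3 : ∑ i, Complex.normSq (p.2 i) ≤ 9 * R ^ 2 / 16 := h3
    change ∑ i, Complex.normSq (p.2 i) < R ^ 2
    have : 0 < R ^ 2 := by positivity
    linarith
  have hKc : IsCompact Kc := isCompact_Icc.prod (compact_ball _)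
  have hqK : q.1 ∈ Kc := by
    refine ⟨⟨by linarith, le_rfl⟩, ?_⟩
    have h1 : ∑ i, Complex.normSq (q.1.2 i) < (R / 2) ^ 2 := hq
    change ∑ i, Complex.normSq (q.1.2 i) ≤ 9 * R ^ 2 / 16
    have : 0 < R ^ 2 := by positivity
    nlinarith
  have hcont : ContinuousOn (fun p => (xt F.1 p).re) Kc :=
    Complex.continuous_re.comp_continuousOn ((SA.cd F).continuousOn.mono hKU)
  obtain ⟨p0, hp0, hmax⟩ := hKc.exists_isMaxOn ⟨_, hqK⟩ hcont
  have hpU := hKU p0 hp0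
  set p : Uo n τ R := ⟨p0, hpU⟩ with hp
  have hmax' : ∀ p' ∈ Kc, (xt F.1 p').re ≤ (xt F.1 p0).re := fun p' hp' => hmax hp'
  obtain ⟨⟨ht1, ht2⟩, ht3⟩ := hp0
  have hM0 : 0 < M := by linarith
  have hN0 : 0 < N := by linarith
  have hu : 36 * M ^ 2 * (trace (S.G.map (ev p))).re ≤ 36 * M ^ 3 := by
    calc _ ≤ 36 * M ^ 2 * M := by gcongr; exact tG p
      _ = _ := by ring
  have hcR : c * R ^ 2 = 16 / 9 := by rw [hc]; field_simp
  have hφ0 : 0 ≤ 1 - c * ∑ i, Complex.normSq (p.1.2 i) := by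
    have : c * ∑ i, Complex.normSq (p.1.2 i) ≤ c * (9 * R ^ 2 / 16) := mul_le_mul_of_nonneg_left ht3 hc0.le
    have : c * (9 * R ^ 2 / 16) = 1 := by linear_combination 9 / 16 * hcR
    linarith
  have hC : (ev p F).re ≤ C4 := by
    rw [hF, FF_re, hC4]
    refine add_le_add ?_ hu
    have hpos : 0 ≤ 576 * N * M ^ 5 := by positivity
    by_cases hz : 1 - c * ∑ i, Complex.normSq (p.1.2 i) = 0
    · rw [hz]; simpa using hpos
    by_cases hz2 : p.1.1 = t / 2
    · rw [hz2]; simpa using hpos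
    have hφ : 0 < 1 - c * ∑ i, Complex.normSq (p.1.2 i) := lt_of_le_of_ne hφ0 (Ne.symm hz)
    have htt : t / 2 < p0.1 := lt_of_le_of_ne ht1 (Ne.symm hz2)
    have hin : ∑ i, Complex.normSq (p0.2 i) < 9 * R ^ 2 / 16 := by
      refine lt_of_le_of_ne ht3 fun h => hz ?_
      change 1 - c * ∑ i, Complex.normSq (p0.2 i) = 0
      rw [h]; linear_combination -(9 / 16) * hcR
    have hsp : ∀ w : Fin n → ℂ, ((der (0, w) F).1 p).re = 0 ∧ ((der (0, w) (der (0, w) F)).1 p).re ≤ 0 := by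
      intro w
      apply max_space F p0 hpU
      have hca : ContinuousAt (fun s : ℝ => ∑ i, Complex.normSq ((p0.2 + s • w) i)) 0 := by
        apply Continuous.continuousAt
        exact cont_ns.comp (by fun_prop)
      have : ∀ᶠ s : ℝ in 𝓝 0, ∑ i, Complex.normSq ((p0.2 + s • w) i) < 9 * R ^ 2 / 16 := by
        have h0 : ∑ i, Complex.normSq ((p0.2 + (0 : ℝ) • w) i) < 9 * R ^ 2 / 16 := by simpa using hin
        exact hca.eventually (isOpen_Iio.mem_nhds h0)
      filter_upwards [this] with s hs
      apply hmax'
      refine ⟨?_, ?_⟩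
      · simpa using ⟨ht1, ht2⟩
      · simpa using hs.le
    have htm : 0 ≤ ((wT F).1 p).re := by
      apply max_time F p0 hpU
      have h1 : ∀ᶠ s : ℝ in 𝓝[<] 0, t / 2 - p0.1 < s := by
        apply nhdsWithin_le_nhds
        apply lt_mem_nhds
        linarith
      filter_upwards [h1, self_mem_nhdsWithin] with s hs hs2
      apply hmax'
      have hs2 : s < 0 := hs2
      refine ⟨?_, ?_⟩
      · simp only [Prod.fst_add, Prod.smul_fst, smul_eq_mul, mul_one]
        exact ⟨by linarith, by linarith⟩
      · simpa using ht3
    have hps : 0 ≤ m * (p.1.1 - t / 2) := mul_nonneg hm0.le (by change 0 ≤ p0.1 - _; linarith)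
    refine at_max S hS hG hg hdt hd hdb hM hN hcard hfr p (ph p) (pG p) (pH p) (th p) (tG p) (tH p) hR hc0.le
      (by rw [hcR]; norm_num) hm0.le hm1 hps ?_ hφ ?_ ?_ htm
    · have : m * (p.1.1 - t / 2) ≤ m * t := mul_le_mul_of_nonneg_left (by change p0.1 - _ ≤ _; linarith) hm0.le
      rw [hmt] at this
      exact this.trans (min_le_right _ _)
    · exact wD_zero F hFs p fun w => (hsp w).1
    · have := lap_le (S.h.map (ev p)) (ph p) F p fun w => (hsp w).2
      simpa [Fl.Δ, Fl.D_apply, hd, hdb] using this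
  have hq2 : (ev q F).re ≤ C4 := by
    have := hmax' q.1 hqK
    rw [xt_apply, xt_of_mem _ hpU] at this
    exact this.trans hC
  rw [hF, FF_re] at hq2
  have hu0 : 0 ≤ (trace (S.G.map (ev q))).re := (Complex.le_def.1 (pG q).trace_nonneg).1
  have hfq : 0 ≤ (ev q S.f).re := (Complex.le_def.1 (hf0 q)).1
  have e1 : m * (q.1.1 - t / 2) = μ / 2 := by rw [← htd]; linear_combination hmt / 2
  have e2 : 1 / 2 ≤ 1 - c * ∑ i, Complex.normSq (q.1.2 i) := by
    have h1 : ∑ i, Complex.normSq (q.1.2 i) < (R / 2) ^ 2 := hq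
    have h2 : c * ∑ i, Complex.normSq (q.1.2 i) ≤ c * (R / 2) ^ 2 := mul_le_mul_of_nonneg_left h1.le hc0.le
    have h3 : c * (R / 2) ^ 2 = 4 / 9 := by linear_combination hcR / 4
    linarith
  rw [e1] at hq2
  have e3 : μ / 2 * (1 / 2) ^ 2 * (ev q S.f).re ≤ C4 := by
    have : μ / 2 * (1 / 2) ^ 2 * (ev q S.f).re ≤ μ / 2 * (1 - c * ∑ i, Complex.normSq (q.1.2 i)) ^ 2 * (ev q S.f).re := by
      gcongr
    have h4 : 0 ≤ 36 * M ^ 2 * (trace (S.G.map (ev q))).re := by positivity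
    linarith
  have hC40 : 0 ≤ C4 := by positivity
  have e4 : 1 / μ ≤ 1 / t + R⁻¹ ^ 4 := by
    have hRi : 1 ≤ R⁻¹ := (one_le_inv₀ hR).2 hR1
    rcases min_choice t (R ^ 2) with h | h
    · rw [hμ, h]; have : 0 ≤ R⁻¹ ^ 4 := by positivity
      linarith
    · rw [hμ, h]
      have h5 : 1 / R ^ 2 = R⁻¹ ^ 2 := by simp
      have h6 : R⁻¹ ^ 2 ≤ R⁻¹ ^ 4 := pow_le_pow_right₀ hRi (by norm_num)
      have : 0 ≤ 1 / t := by positivity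
      linarith
  calc (ev q S.f).re ≤ 8 * C4 * (1 / μ) := by
        rw [mul_one_div, le_div_iff₀ hμ0]; linarith
    _ ≤ _ := by gcongr
end core3
end Calabi


namespace Calabi
set_option linter.all false
section alg
variable {A : Type*} [CommRing A] [Algebra ℂ A] [StarRing A]
variable {ι : Type*} [Fintype ι] [DecidableEq ι]

lemma conj_tr (M : Matrix ι ι A) : Mᵀᴴ = Mᴴᵀ := rfl

lemma bG_herm {g h β : Matrix ι ι A} (hg : gᴴ = g) (hh : hᴴ = h) : (bG g h β βᴴ)ᴴ = bG g h β βᴴ := by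
  simp only [bG, fromBlocks_conjTranspose, conjTranspose_add, conjTranspose_mul, conjTranspose_conjTranspose,
    conj_tr, hg, hh, mul_assoc]
lemma bH_herm {g h β : Matrix ι ι A} (hg : gᴴ = g) (hh : hᴴ = h) : (bH g h β βᴴ)ᴴ = bH g h β βᴴ := by
  simp only [bH, fromBlocks_conjTranspose, conjTranspose_add, conjTranspose_mul, conjTranspose_conjTranspose,
    conjTranspose_neg, conj_tr, hg, hh, mul_assoc]

lemma inv_herm {g h : Matrix ι ι A} (gh : g * h = 1) (hg : gᴴ = g) : hᴴ = h := by
  have h1 : hᴴ * g = 1 := by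
    have := congrArg conjTranspose gh
    rwa [conjTranspose_mul, hg, conjTranspose_one] at this
  calc hᴴ = hᴴ * (g * h) := by rw [gh, mul_one]
    _ = h := by rw [← mul_assoc, h1, one_mul]

lemma md_D' (S : Fl ι (ι ⊕ ι) A) (i : ι) (M : Matrix ι ι A) : M.map (S.D i) = ∑ j, S.h j i • M.map (S.db j) := by
  ext a b; simp [Fl.D_apply, Matrix.sum_apply]

lemma mk_Herm (S : Fl ι (ι ⊕ ι) A) {β : Matrix ι ι A} (eG : S.G = bG S.g S.h β βᴴ) (eH : S.H = bH S.g S.h β βᴴ)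
    (sd : ∀ i x, star (S.d i x) = S.db i (star x)) (sdb : ∀ i x, star (S.db i x) = S.d i (star x))
    (hg : S.gᴴ = S.g) : S.Herm := by
  have hh := inv_herm S.gh hg
  exact ⟨sd, sdb, hg, hh, by rw [eG, bG_herm hg hh], by rw [eH, bH_herm hg hh]⟩

lemma T2_eq (S : Fl ι (ι ⊕ ι) A) (hS : S.Herm) {β : Matrix ι ι A}
    (ht : ∀ i j k, S.db k (β i j) = S.T i j k) :
    S.T2 = ∑ i, β.map (S.D i) * S.hᵀ * βᴴ.map (S.d i) := by
  ext a b
  simp only [Fl.T2, Matrix.of_apply, Matrix.sum_apply, Matrix.mul_apply, Matrix.map_apply, Fl.D_apply,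
    conjTranspose_apply, ← hS.sdb, ht, transpose_apply, Finset.sum_mul]
  -- both sides are sums over k l m r in different orders
  calc _ = ∑ k, ∑ m, ∑ l, ∑ r, S.T a l r * star (S.T b k m) * S.h k l * S.h r m :=
        Finset.sum_congr rfl fun k _ => Finset.sum_comm
    _ = ∑ m, ∑ k, ∑ l, ∑ r, S.T a l r * star (S.T b k m) * S.h k l * S.h r m := Finset.sum_comm
    _ = _ := by
      refine Finset.sum_congr rfl fun m _ => Finset.sum_congr rfl fun k _ => Finset.sum_congr rfl fun l _ =>
        Finset.sum_congr rfl fun r _ => ?_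
      ring

lemma mk_FlowG (S : Fl ι (ι ⊕ ι) A) (hS : S.Herm) {β : Matrix ι ι A} (eG : S.G = bG S.g S.h β βᴴ)
    (eH : S.H = bH S.g S.h β βᴴ) (hβ : βᵀ = -β) (sdt : ∀ x, star (S.dt x) = S.dt (star x))
    (ht : ∀ i j k, S.db k (β i j) = S.T i j k)
    (fg : S.g.map S.dt = ∑ i, ((S.g.map (S.d i)).map (S.D i) - S.g.map (S.d i) * S.h * S.g.map (S.D i)) + S.T2)
    (fβ : β.map S.dt = ∑ i, ((β.map (S.d i)).map (S.D i) - S.g.map (S.d i) * S.h * β.map (S.D i)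
      - β.map (S.D i) * (S.g.map (S.d i) * S.h)ᵀ)) : S.FlowG := by
  have hγ : βᴴᵀ = -βᴴ := by rw [← conj_tr, hβ, conjTranspose_neg]
  rw [T2_eq S hS ht] at fg
  have st : ∀ i j, star (S.h j i) = S.h i j := fun i j => by
    have := congrFun (congrFun hS.h i) j; simpa using this
  have key : ∀ F : ι → Matrix ι ι A → Matrix ι ι A, True := fun _ => trivial
  have eD : ∀ (i : ι) (M : Matrix ι ι A), (M.map (S.D i))ᴴ = ∑ j, S.h i j • Mᴴ.map (S.d j) := by
    intro i M
    rw [md_D', conjTranspose_sum]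
    refine Finset.sum_congr rfl fun j _ => ?_
    rw [conjTranspose_smul, hS.md_db, st]
  have fγ : βᴴ.map S.dt = ∑ i, ((βᴴ.map (S.d i)).map (S.D i) - βᴴ.map (S.d i) * S.h * S.g.map (S.D i)
      - (S.h * S.g.map (S.D i))ᵀ * βᴴ.map (S.d i)) := by
    have e1 : βᴴ.map S.dt = (β.map S.dt)ᴴ := by
      ext a b; simp [conjTranspose_apply, sdt]
    rw [e1, fβ, conjTranspose_sum]
    have e2 : ∀ i, ((β.map (S.d i)).map (S.D i) - S.g.map (S.d i) * S.h * β.map (S.D i)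
      - β.map (S.D i) * (S.g.map (S.d i) * S.h)ᵀ)ᴴ = ∑ j, S.h i j • ((βᴴ.map (S.db i)).map (S.d j)
        - βᴴ.map (S.d j) * S.h * S.g.map (S.db i) - (S.h * S.g.map (S.db i))ᵀ * βᴴ.map (S.d j)) := by
      intro i
      rw [conjTranspose_sub, conjTranspose_sub, conjTranspose_mul, conjTranspose_mul, conjTranspose_mul,
        conj_tr, conjTranspose_mul, eD, eD, hS.md_d, hS.md_d, hS.g, hS.h, Finset.sum_mul, Finset.mul_sum,
        ← Finset.sum_sub_distrib, ← Finset.sum_sub_distrib]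
      refine Finset.sum_congr rfl fun j _ => ?_
      rw [Matrix.smul_mul, Matrix.mul_smul, smul_sub, smul_sub, mul_assoc]
    have e3 : ∀ i, (βᴴ.map (S.d i)).map (S.D i) - βᴴ.map (S.d i) * S.h * S.g.map (S.D i)
      - (S.h * S.g.map (S.D i))ᵀ * βᴴ.map (S.d i) = ∑ j, S.h j i • ((βᴴ.map (S.db j)).map (S.d i)
        - βᴴ.map (S.d i) * S.h * S.g.map (S.db j) - (S.h * S.g.map (S.db j))ᵀ * βᴴ.map (S.d i)) := by
      intro i
      rw [md_D', md_D', Finset.mul_sum, Finset.mul_sum, transpose_sum, Finset.sum_mul,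
        ← Finset.sum_sub_distrib, ← Finset.sum_sub_distrib]
      refine Finset.sum_congr rfl fun j _ => ?_
      rw [Matrix.mul_smul, Matrix.mul_smul, transpose_smul, Matrix.smul_mul, smul_sub, smul_sub]
      congr 3
      ext a b
      simp [S.d_db]
    simp only [e2, e3]
    exact Finset.sum_comm
  rw [Fl.FlowG, eG, eH]
  exact bflow S.gh S.hg hβ hγ S.dt S.d S.D fg fβ fγ
end alg
end Calabi


namespace Calabi
set_option linter.all false
section idx
variable {A : Type*} [CommRing A] [Algebra ℂ A] [StarRing A]
variable {ι : Type*} [Fintype ι] [DecidableEq ι]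

lemma idx_g (S : Fl ι (ι ⊕ ι) A) (a b : ι) :
    (∑ i, ((S.g.map (S.d i)).map (S.D i) - S.g.map (S.d i) * S.h * S.g.map (S.D i))) a b
      = ∑ i, ∑ j, S.h j i * (S.d i (S.db j (S.g a b))
        - ∑ c, ∑ e, S.d i (S.g a c) * S.h c e * S.db j (S.g e b)) := by
  rw [Matrix.sum_apply]
  refine Finset.sum_congr rfl fun i _ => ?_
  simp only [Matrix.sub_apply, Matrix.map_apply, Fl.D_apply, Matrix.mul_apply, mul_sub, Finset.sum_sub_distrib, S.d_db]
  congr 1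
  simp only [Finset.mul_sum, Finset.sum_mul]
  calc _ = ∑ e, ∑ j, ∑ c, S.d i (S.g a c) * S.h c e * (S.h j i * S.db j (S.g e b)) := by rfl
    _ = ∑ j, ∑ e, ∑ c, S.d i (S.g a c) * S.h c e * (S.h j i * S.db j (S.g e b)) := Finset.sum_comm
    _ = ∑ j, ∑ c, ∑ e, S.d i (S.g a c) * S.h c e * (S.h j i * S.db j (S.g e b)) :=
        Finset.sum_congr rfl fun _ _ => Finset.sum_comm
    _ = _ := Finset.sum_congr rfl fun _ _ => Finset.sum_congr rfl fun _ _ => Finset.sum_congr rfl fun _ _ => by ring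

lemma idx_β (S : Fl ι (ι ⊕ ι) A) (β : Matrix ι ι A) (a b : ι) :
    (∑ i, ((β.map (S.d i)).map (S.D i) - S.g.map (S.d i) * S.h * β.map (S.D i)
      - β.map (S.D i) * (S.g.map (S.d i) * S.h)ᵀ)) a b
      = ∑ i, ∑ j, S.h j i * (S.d i (S.db j (β a b))
        - ∑ k, ∑ l, S.h k l * S.d i (S.g a k) * S.db j (β l b)
        - ∑ k, ∑ l, S.h k l * S.d i (S.g b k) * S.db j (β a l)) := by
  rw [Matrix.sum_apply]
  refine Finset.sum_congr rfl fun i _ => ?_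
  simp only [Matrix.sub_apply, Matrix.map_apply, Fl.D_apply, Matrix.mul_apply, transpose_apply, mul_sub,
    Finset.sum_sub_distrib, S.d_db]
  congr 1
  · congr 1
    simp only [Finset.mul_sum, Finset.sum_mul]
    rw [Finset.sum_comm]
    refine Finset.sum_congr rfl fun j _ => ?_
    rw [Finset.sum_comm]
    exact Finset.sum_congr rfl fun _ _ => Finset.sum_congr rfl fun _ _ => by ring
  · simp only [Finset.mul_sum, Finset.sum_mul]
    calc _ = ∑ l, ∑ j, ∑ k, S.h j i * S.db j (β a l) * (S.d i (S.g b k) * S.h k l) :=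
          Finset.sum_congr rfl fun _ _ => Finset.sum_comm
      _ = ∑ j, ∑ l, ∑ k, S.h j i * S.db j (β a l) * (S.d i (S.g b k) * S.h k l) := Finset.sum_comm
      _ = ∑ j, ∑ k, ∑ l, S.h j i * S.db j (β a l) * (S.d i (S.g b k) * S.h k l) :=
          Finset.sum_congr rfl fun _ _ => Finset.sum_comm
      _ = _ := Finset.sum_congr rfl fun _ _ => Finset.sum_congr rfl fun _ _ => Finset.sum_congr rfl fun _ _ => by ring
end idx

section conc
open TopologicalSpace
variable {n : ℕ} {U : Opens (ℝ × (Fin n → ℂ))}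

lemma SA_ext {x y : SA U} (h : ∀ p, ev p x = ev p y) : x = y := by
  apply Subtype.ext; funext p; exact h p

/-- a smooth matrix function as a matrix of smooth functions -/
def mA (g : ℝ × (Fin n → ℂ) → Matrix (Fin n) (Fin n) ℂ)
    (hg : ∀ a b, ContDiffOn ℝ (⊤ : ℕ∞) (fun q => g q a b) (U : Set (ℝ × (Fin n → ℂ)))) :
    Matrix (Fin n) (Fin n) (SA U) := Matrix.of fun a b => mkA (fun q => g q a b) (hg a b)

lemma mA_ev (g : ℝ × (Fin n → ℂ) → Matrix (Fin n) (Fin n) ℂ)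
    (hg : ∀ a b, ContDiffOn ℝ (⊤ : ℕ∞) (fun q => g q a b) (U : Set (ℝ × (Fin n → ℂ)))) (p : U) :
    (mA g hg).map (ev p) = g p.1 := rfl

lemma SA_inv (x : SA U) (hx : ∀ p, ev p x ≠ 0) : ∃ y : SA U, x * y = 1 := by
  have h : ContDiffOn ℝ (⊤ : ℕ∞) (fun q => (xt x.1 q)⁻¹) U := by
    refine ContDiffOn.inv (SA.cd x) fun q hq => ?_
    rw [xt_of_mem _ (show q ∈ U from hq)]; exact hx ⟨q, hq⟩
  refine ⟨mkA _ h, SA_ext fun p => ?_⟩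
  rw [map_mul, map_one]
  change ev p x * (xt x.1 p)⁻¹ = 1
  rw [xt_apply]
  exact mul_inv_cancel₀ (hx p)

lemma mA_inv (g : Matrix (Fin n) (Fin n) (SA U)) (hg : ∀ p, (g.map (ev p)).PosDef) :
    ∃ h : Matrix (Fin n) (Fin n) (SA U), g * h = 1 ∧ ∀ p, h.map (ev p) = (g.map (ev p))⁻¹ := by
  obtain ⟨y, hy⟩ := SA_inv g.det (by
    intro p
    have : ev p g.det = (g.map (ev p)).det := by rw [RingHom.map_det]; rfl
    rw [this]
    exact ((Matrix.isUnit_iff_isUnit_det _).1 (hg p).isUnit).ne_zero)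
  have h1 : g * (y • g.adjugate) = 1 := by
    rw [Matrix.mul_smul, mul_adjugate, smul_smul, mul_comm, hy, one_smul]
  refine ⟨_, h1, fun p => ?_⟩
  symm
  apply Matrix.inv_eq_right_inv
  rw [← Matrix.map_mul, h1]
  simp

lemma wd_ev (i : Fin n) (f : SA U) (F : (Fin n → ℂ) → ℂ) (h : ∀ p : U, F p.1.2 = f.1 p) (p : U) :
    wd i F p.1.2 = ev p (wD i f) ∧ wdb i F p.1.2 = ev p (wB i f) := by
  have hd : DifferentiableAt ℝ (fun q : ℝ × (Fin n → ℂ) => F q.2) p.1 := by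
    refine (SA.da f p).congr_of_eventuallyEq ?_
    filter_upwards [U.isOpen.mem_nhds p.2] with q hq
    rw [xt_of_mem _ (show q ∈ U from hq)]
    exact h ⟨q, hq⟩
  have key : ∀ v, fderiv ℝ F p.1.2 v = fderiv ℝ (fun q : ℝ × (Fin n → ℂ) => F q.2) p.1 (0, v) := by
    intro v
    have h1 : HasFDerivAt (fun z : Fin n → ℂ => ((p.1.1, z) : ℝ × (Fin n → ℂ)))
        (ContinuousLinearMap.inr ℝ ℝ (Fin n → ℂ)) p.1.2 := hasFDerivAt_prodMk_right _ _
    have h2 : HasFDerivAt F _ p.1.2 := HasFDerivAt.comp (g := fun q : ℝ × (Fin n → ℂ) => F q.2) p.1.2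
      (by exact hd.hasFDerivAt) h1
    rw [h2.fderiv]; rfl
  rw [ev_apply, ev_apply, ← wD_apply i f (fun q => F q.2) h p, ← wB_apply i f (fun q => F q.2) h p]
  simp only [wd, wdb, wdP, wdbP, key, and_self]

/-- the flow data attached to a smooth solution -/
theorem exists_fl (g β : ℝ × (Fin n → ℂ) → Matrix (Fin n) (Fin n) ℂ)
    (sg : ∀ a b, ContDiffOn ℝ (⊤ : ℕ∞) (fun q => g q a b) (U : Set (ℝ × (Fin n → ℂ))))
    (sβ : ∀ a b, ContDiffOn ℝ (⊤ : ℕ∞) (fun q => β q a b) (U : Set (ℝ × (Fin n → ℂ))))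
    (pg : ∀ q ∈ U, (g q).PosDef) (aβ : ∀ q ∈ U, (β q)ᵀ = -(β q))
    (tor : ∀ q ∈ U, ∀ i j k : Fin n, wdbP k (fun r => β r i j) q = torsionP g i j k q)
    (fg : ∀ q ∈ U, ∀ i j : Fin n, dtP (fun r => g r i j) q = - traceChernP g g i j q + torsionSqP g i j q)
    (fβ : ∀ q ∈ U, ∀ i j : Fin n, dtP (fun r => β r i j) q = lapBetaP g β i j q) :
    ∃ S : Fl (Fin n) (Fin n ⊕ Fin n) (SA U), S.Herm ∧ S.FlowG ∧ S.Flowg ∧ S.dt = wT ∧ S.d = wD ∧ S.db = wB ∧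
      S.g = mA g sg ∧ S.G = bG S.g S.h (mA β sβ) (mA β sβ)ᴴ ∧ S.H = bH S.g S.h (mA β sβ) (mA β sβ)ᴴ := by
  obtain ⟨h, gh, eh⟩ := mA_inv (mA g sg) (fun p => by rw [mA_ev]; exact pg p.1 p.2)
  have hg : h * mA g sg = 1 := mul_eq_one_comm.mp gh
  have GH := bG_mul_bH gh (mA β sβ) (mA β sβ)ᴴ
  let S : Fl (Fin n) (Fin n ⊕ Fin n) (SA U) :=
    { dt := wT, d := wD, db := wB, d_d := wD_wD, d_db := wD_wB, db_db := wB_wB, dt_d := wT_wD, dt_db := wT_wB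
      g := mA g sg, h := h, G := bG (mA g sg) h (mA β sβ) (mA β sβ)ᴴ, H := bH (mA g sg) h (mA β sβ) (mA β sβ)ᴴ
      gh := gh, hg := hg, GH := GH, HG := mul_eq_one_comm.mp GH }
  have r1 : ∀ a b i (p : U), wdP i (fun q => g q a b) p.1 = ev p (wD i (mA g sg a b)) :=
    fun a b i p => wD_apply i (mA g sg a b) _ (fun _ => rfl) p
  have r2 : ∀ a b i (p : U), wdbP i (fun q => g q a b) p.1 = ev p (wB i (mA g sg a b)) :=
    fun a b i p => wB_apply i (mA g sg a b) _ (fun _ => rfl) p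
  have r3 : ∀ a b i j (p : U), wdP i (fun q => wdbP j (fun r => g r a b) q) p.1 = ev p (wD i (wB j (mA g sg a b))) :=
    fun a b i j p => wD_apply i (wB j (mA g sg a b)) _ (fun p => r2 a b j p) p
  have r4 : ∀ a b (p : U), dtP (fun q => g q a b) p.1 = ev p (wT (mA g sg a b)) :=
    fun a b p => wT_apply (mA g sg a b) _ (fun _ => rfl) p
  have s2 : ∀ a b i (p : U), wdbP i (fun q => β q a b) p.1 = ev p (wB i (mA β sβ a b)) :=
    fun a b i p => wB_apply i (mA β sβ a b) _ (fun _ => rfl) p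
  have s3 : ∀ a b i j (p : U), wdP i (fun q => wdbP j (fun r => β r a b) q) p.1 = ev p (wD i (wB j (mA β sβ a b))) :=
    fun a b i j p => wD_apply i (wB j (mA β sβ a b)) _ (fun p => s2 a b j p) p
  have s4 : ∀ a b (p : U), dtP (fun q => β q a b) p.1 = ev p (wT (mA β sβ a b)) :=
    fun a b p => wT_apply (mA β sβ a b) _ (fun _ => rfl) p
  have r5 : ∀ a b (p : U), (g p.1)⁻¹ a b = ev p (h a b) := by
    intro a b p
    have := congrFun (congrFun (eh p) a) b
    rw [mA_ev] at this
    exact this.symm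
  have eT : ∀ a b k (p : U), torsionP g a b k p.1 = ev p (S.T a b k) := by
    intro a b k p
    rw [torsionP, r1, r1, ← map_sub]; rfl
  have hgs : S.gᴴ = S.g := by
    refine Matrix.ext fun a b => ?_
    refine SA_ext fun p => ?_
    rw [conjTranspose_apply, ev_star]
    exact congrFun (congrFun (pg p.1 p.2).1 a) b
  have hS : S.Herm := mk_Herm S rfl rfl wD_star wB_star hgs
  have hβs : (mA β sβ)ᵀ = - mA β sβ := by
    refine Matrix.ext fun a b => ?_
    refine SA_ext fun p => ?_
    exact congrFun (congrFun (aβ p.1 p.2) a) b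
  have ht : ∀ i j k, S.db k (mA β sβ i j) = S.T i j k := by
    intro i j k
    refine SA_ext fun p => ?_
    rw [← eT, ← tor p.1 p.2, s2]
  have hfg : S.g.map S.dt = ∑ i, ((S.g.map (S.d i)).map (S.D i) - S.g.map (S.d i) * S.h * S.g.map (S.D i)) + S.T2 := by
    refine Matrix.ext fun a b => ?_
    refine SA_ext fun p => ?_
    rw [Matrix.add_apply, idx_g]
    have h0 := fg p.1 p.2 a b
    rw [r4] at h0
    refine h0.trans ?_
    rw [map_add]
    congr 1
    · simp only [traceChernP, chernP, r1, r2, r3, r5, map_sum, map_mul, map_sub, ← Finset.sum_neg_distrib]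
      refine Finset.sum_congr rfl fun i _ => Finset.sum_congr rfl fun j _ => ?_
      change -(ev p (h j i) * (- ev p (wD i (wB j (mA g sg a b))) + ∑ c, ∑ d, _)) = ev p (h j i) * (ev p (wD i (wB j (mA g sg a b))) - ∑ c, ∑ d, _)
      ring
    · simp only [torsionSqP, Fl.T2, Matrix.of_apply, eT, r5, map_sum, map_mul, ev_star]
      rfl
  have hfβ : (mA β sβ).map S.dt = ∑ i, (((mA β sβ).map (S.d i)).map (S.D i) - S.g.map (S.d i) * S.h * (mA β sβ).map (S.D i)
      - (mA β sβ).map (S.D i) * (S.g.map (S.d i) * S.h)ᵀ) := by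
    refine Matrix.ext fun a b => ?_
    refine SA_ext fun p => ?_
    rw [idx_β]
    have h0 := fβ p.1 p.2 a b
    rw [s4] at h0
    refine h0.trans ?_
    simp only [lapBetaP, nabla2betaP, r1, s2, s3, r5, map_sum, map_mul, map_sub]
    rfl
  exact ⟨S, hS, mk_FlowG S hS rfl rfl hβs wT_star ht hfg hfβ, hS.flowg hfg, rfl, rfl, rfl, rfl, rfl, rfl⟩
end conc
end Calabi


namespace Calabi
set_option linter.all false
section cm
variable {ι κ σ : Type*} [Fintype ι] [DecidableEq ι] [Fintype κ] [DecidableEq κ] [Fintype σ] [DecidableEq σ]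

lemma bG_map {A A' : Type*} [CommRing A] [Algebra ℂ A] [CommRing A'] [Algebra ℂ A'] (e : A →+* A')
    (g h β γ : Matrix ι ι A) :
    (bG g h β γ).map e = bG (g.map e) (h.map e) (β.map e) (γ.map e) := by
  simp only [bG, fromBlocks_map, Matrix.map_add _ e.map_add, Matrix.map_mul, transpose_map]
lemma bH_map {A A' : Type*} [CommRing A] [Algebra ℂ A] [CommRing A'] [Algebra ℂ A'] (e : A →+* A')
    (g h β γ : Matrix ι ι A) :
    (bH g h β γ).map e = bH (g.map e) (h.map e) (β.map e) (γ.map e) := by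
  have hn : ∀ M : Matrix ι ι A, (-M).map e = -(M.map e) := fun M => by ext; simp
  simp only [bH, fromBlocks_map, Matrix.map_add _ e.map_add, Matrix.map_mul, transpose_map, hn]

lemma conj_inv {n : ℕ} {g : Matrix (Fin n) (Fin n) ℂ} (hg : g.PosDef) :
    (g⁻¹).map (starRingEnd ℂ) = (g⁻¹)ᵀ := by
  have h : (g⁻¹)ᴴ = g⁻¹ := hg.inv.1
  ext a b
  have := congrFun (congrFun h b) a
  simpa [conjTranspose_apply] using this

lemma genMetric_eq {n : ℕ} {g : Matrix (Fin n) (Fin n) ℂ} (hg : g.PosDef) (β : Matrix (Fin n) (Fin n) ℂ) :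
    genMetric g β = bG g g⁻¹ β βᴴ := by
  rw [genMetric, conj_inv hg, bG]

lemma gen_mul_inv {n : ℕ} {g : Matrix (Fin n) (Fin n) ℂ} (hg : g.PosDef) : g * g⁻¹ = 1 :=
  Matrix.mul_nonsing_inv _ ((Matrix.isUnit_iff_isUnit_det _).1 hg.isUnit)

lemma genMetric_inv {n : ℕ} {g : Matrix (Fin n) (Fin n) ℂ} (hg : g.PosDef) (β : Matrix (Fin n) (Fin n) ℂ) :
    (genMetric g β)⁻¹ = bH g g⁻¹ β βᴴ := by
  rw [genMetric_eq hg]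
  exact Matrix.inv_eq_right_inv (bG_mul_bH (gen_mul_inv hg) β βᴴ)

lemma genMetric_psd {n : ℕ} {g : Matrix (Fin n) (Fin n) ℂ} (hg : g.PosDef) (β : Matrix (Fin n) (Fin n) ℂ) :
    (genMetric g β).PosSemidef := by
  have hD : (g⁻¹)ᵀ.PosDef := hg.inv.transpose
  letI : Invertible (g⁻¹)ᵀ := hD.isUnit.invertible
  have h := Matrix.PosDef.fromBlocks₂₂ (g + β * (g⁻¹)ᵀ * βᴴ) (β * (g⁻¹)ᵀ) hD
  rw [genMetric_eq hg, bG]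
  have e : (β * (g⁻¹)ᵀ)ᴴ = (g⁻¹)ᵀ * βᴴ := by rw [conjTranspose_mul, hD.1]
  rw [e] at h
  rw [h]
  have e2 : β * (g⁻¹)ᵀ * ((g⁻¹)ᵀ)⁻¹ * ((g⁻¹)ᵀ * βᴴ) = β * (g⁻¹)ᵀ * βᴴ := by
    rw [mul_assoc β, Matrix.mul_nonsing_inv _ ((Matrix.isUnit_iff_isUnit_det _).1 hD.isUnit), mul_one, mul_assoc]
  rw [e2, add_sub_cancel_right]
  exact hg.posSemidef

/-- inversion is antitone -/
lemma loewner_inv {X Xi G H : Matrix κ κ ℂ} (hXi : Xi.PosSemidef) (hH : H.PosSemidef)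
    (hX : X * Xi = 1) (hG : G * H = 1) (hP : (G - X).PosSemidef) : (Xi - H).PosSemidef := by
  have HG : H * G = 1 := mul_eq_one_comm.mp hG
  have XX : Xi * X = 1 := mul_eq_one_comm.mp hX
  have e : Xi - H = H * (G - X) * Hᴴ + (H * (G - X)) * Xi * (H * (G - X))ᴴ := by
    rw [conjTranspose_mul, hP.1, hH.1]
    have h1 : H * (G - X) = 1 - H * X := by rw [mul_sub, HG]
    have h2 : (G - X) * H = 1 - X * H := by rw [sub_mul, hG]
    rw [h2, h1, sub_mul, sub_mul, mul_sub, one_mul, one_mul, mul_one, mul_assoc H X Xi, hX, mul_one, sub_mul,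
      ← mul_assoc Xi X H, XX, one_mul, mul_assoc]
    abel
  rw [e]
  exact (hP.mul_mul_conjTranspose_same H).add (hXi.mul_mul_conjTranspose_same _)

lemma trace_re_le {X Y : Matrix κ κ ℂ} (h : (Y - X).PosSemidef) : (trace X).re ≤ (trace Y).re := by
  have := (Complex.le_def.1 h.trace_nonneg).1
  rw [trace_sub, Complex.sub_re, Complex.zero_re] at this
  linarith

lemma Q_one (K : Matrix σ σ ℂ) (v : σ → Matrix κ κ ℂ) :
    Q K 1 1 v v = ∑ a, ∑ b, P K (fun s => v s a b) (fun s => v s a b) := by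
  have h : ∀ s t, trace (v s * 1 * (v t)ᴴ * 1) = ∑ a, ∑ b, v s a b * star (v t a b) := by
    intro s t
    rw [mul_one, mul_one]
    rfl
  rw [Q]
  simp only [h]
  rw [Finset.sum_comm]
  have h2 : ∀ a b, P K (fun s => v s a b) (fun s => v s a b)
      = ∑ s, ∑ t, K t s * (v s a b * star (v t a b)) := by
    intro a b
    rw [P]
  simp only [h2, Finset.mul_sum]
  calc ∑ t, ∑ s, ∑ a, ∑ b, K t s * (v s a b * star (v t a b))
      = ∑ s, ∑ t, ∑ a, ∑ b, K t s * (v s a b * star (v t a b)) := Finset.sum_comm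
    _ = ∑ s, ∑ a, ∑ t, ∑ b, K t s * (v s a b * star (v t a b)) :=
        Finset.sum_congr rfl fun _ _ => Finset.sum_comm
    _ = ∑ a, ∑ s, ∑ t, ∑ b, K t s * (v s a b * star (v t a b)) := Finset.sum_comm
    _ = ∑ a, ∑ s, ∑ b, ∑ t, K t s * (v s a b * star (v t a b)) :=
        Finset.sum_congr rfl fun _ _ => Finset.sum_congr rfl fun _ _ => Finset.sum_comm
    _ = ∑ a, ∑ b, ∑ s, ∑ t, K t s * (v s a b * star (v t a b)) :=
        Finset.sum_congr rfl fun _ _ => Finset.sum_comm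

lemma re_tr {K : Matrix κ κ ℂ} (h : K.PosSemidef) : trace K = ((trace K).re : ℂ) := by
  apply Complex.ext
  · simp
  · simpa using (Complex.le_def.1 h.trace_nonneg).2.symm

lemma Q_bound {K : Matrix σ σ ℂ} {H G : Matrix κ κ ℂ} (hK : K.PosSemidef) (hH : H.PosSemidef)
    (hG : G.PosSemidef) (v : σ → Matrix κ κ ℂ) {M b : ℝ} (tK : (trace K).re ≤ M) (tH : (trace H).re ≤ M)
    (tG : (trace G).re ≤ M) (hb : ∀ s x y, ‖v s x y‖ ≤ b) :
    (Q K H G v v).re ≤ M ^ 3 * (Fintype.card κ ^ 2 * Fintype.card σ * b ^ 2) := by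
  have tH0 := (Complex.le_def.1 hH.trace_nonneg).1
  have tG0 := (Complex.le_def.1 hG.trace_nonneg).1
  have tK0 := (Complex.le_def.1 hK.trace_nonneg).1
  simp only [Complex.zero_re] at tH0 tG0 tK0
  have h1 := (Complex.le_def.1 (Q_nonneg hK (trace_sub_psd hH) hG v)).1
  have h2 := (Complex.le_def.1 (Q_nonneg hK PosSemidef.one (trace_sub_psd hG) v)).1
  have h3 := (Complex.le_def.1 (Q_nonneg hK PosSemidef.one hG v)).1
  have h4 := (Complex.le_def.1 (Q_nonneg hK PosSemidef.one (PosSemidef.one (n := κ)) v)).1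
  rw [Q_sub_H, Q_smul_H, re_tr hH, Complex.sub_re, Complex.re_ofReal_mul] at h1
  rw [Q_sub_G, Q_smul_G, re_tr hG, Complex.sub_re, Complex.re_ofReal_mul] at h2
  simp only [Complex.zero_re] at h1 h2 h3 h4
  have hM : 0 ≤ M := tK0.trans tK
  have h5 : (Q K 1 1 v v).re ≤ M * (Fintype.card κ ^ 2 * Fintype.card σ * b ^ 2) := by
    rw [Q_one, Complex.re_sum]
    calc _ ≤ ∑ x : κ, ∑ y : κ, M * (Fintype.card σ * b ^ 2) := by
          refine Finset.sum_le_sum fun x _ => ?_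
          rw [Complex.re_sum]
          refine Finset.sum_le_sum fun y _ => ?_
          have h := (Complex.le_def.1 (P_le_trace hK (fun s => v s x y))).1
          rw [re_tr hK, ← Complex.ofReal_mul, Complex.ofReal_re] at h
          refine h.trans ?_
          have : ∑ s, ‖v s x y‖ ^ 2 ≤ ∑ s : σ, b ^ 2 :=
            Finset.sum_le_sum fun s _ => pow_le_pow_left₀ (norm_nonneg _) (hb s x y) 2
          rw [Finset.sum_const, Finset.card_univ, nsmul_eq_mul] at this
          gcongr
      _ = _ := by simp; ring
  calc (Q K H G v v).re ≤ (trace H).re * (Q K 1 G v v).re := by linarith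
    _ ≤ M * (M * (M * (Fintype.card κ ^ 2 * Fintype.card σ * b ^ 2))) := by
        refine mul_le_mul tH ?_ h3 hM
        refine le_trans (b := (trace G).re * (Q K 1 1 v v).re) (by linarith) ?_
        exact mul_le_mul tG h5 h4 hM
    _ = _ := by ring

/-- entrywise bound -/
def EB (b : ℝ) (M : Matrix κ ι ℂ) : Prop := ∀ x y, ‖M x y‖ ≤ b

lemma EB.mono {b c : ℝ} {M : Matrix κ ι ℂ} (h : EB b M) (hbc : b ≤ c) : EB c M := fun x y => (h x y).trans hbc
lemma EB.add {b c : ℝ} {M N : Matrix κ ι ℂ} (h : EB b M) (h' : EB c N) : EB (b + c) (M + N) :=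
  fun x y => (norm_add_le _ _).trans (add_le_add (h x y) (h' x y))
lemma EB.neg {b : ℝ} {M : Matrix κ ι ℂ} (h : EB b M) : EB b (-M) := fun x y => by
  rw [Matrix.neg_apply, norm_neg]; exact h x y
lemma EB.tr {b : ℝ} {M : Matrix κ ι ℂ} (h : EB b M) : EB b Mᵀ := fun x y => h y x
lemma EB.ct {b : ℝ} {M : Matrix κ ι ℂ} (h : EB b M) : EB b Mᴴ := fun x y => by
  rw [conjTranspose_apply, norm_star]; exact h y x
lemma EB.mul {b c : ℝ} {M N : Matrix κ κ ℂ} (hb : 0 ≤ b) (h : EB b M) (h' : EB c N) :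
    EB (Fintype.card κ * b * c) (M * N) := by
  intro x y
  rw [Matrix.mul_apply]
  refine (norm_sum_le _ _).trans ?_
  calc _ ≤ ∑ z : κ, b * c := Finset.sum_le_sum fun z _ => by
        rw [norm_mul]; exact mul_le_mul (h x z) (h' z y) (norm_nonneg _) hb
    _ = _ := by simp; ring
lemma EB.blocks {b : ℝ} {A B C D : Matrix ι ι ℂ} (hA : EB b A) (hB : EB b B) (hC : EB b C) (hD : EB b D) :
    EB b (fromBlocks A B C D) := by
  rintro (x | x) (y | y)
  · exact hA x y
  · exact hB x y
  · exact hC x y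
  · exact hD x y
lemma EB.trace_le {b : ℝ} {M : Matrix κ κ ℂ} (h : EB b M) : (trace M).re ≤ Fintype.card κ * b := by
  rw [trace, Complex.re_sum]
  calc _ ≤ ∑ z : κ, b := Finset.sum_le_sum fun z _ => (Complex.re_le_norm _).trans (h z z)
    _ = _ := by simp

def c1 (N B : ℝ) : ℝ := B + 2 * N * B ^ 2 + 3 * N ^ 2 * B ^ 3

lemma EB_bG {g h β γ : Matrix ι ι ℂ} {B : ℝ} (hB : 0 ≤ B) (eg : EB B g) (eh : EB B h) (eβ : EB B β) (eγ : EB B γ) :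
    EB (c1 (Fintype.card ι) B) (bG g h β γ) := by
  have p2 : (0 : ℝ) ≤ Fintype.card ι * B ^ 2 := by positivity
  have p3 : (0 : ℝ) ≤ (Fintype.card ι : ℝ) ^ 2 * B ^ 3 := by positivity
  have p1 : 0 ≤ Fintype.card ι * B * B := by positivity
  refine EB.blocks ?_ ?_ ?_ ?_
  · exact (eg.add ((eβ.mul hB eh.tr).mul p1 eγ)).mono (by rw [c1]; nlinarith)
  · exact (eβ.mul hB eh.tr).mono (by rw [c1]; nlinarith)
  · exact (eh.tr.mul hB eγ).mono (by rw [c1]; nlinarith)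
  · exact eh.tr.mono (by rw [c1]; nlinarith)

lemma EB_bH {g h β γ : Matrix ι ι ℂ} {B : ℝ} (hB : 0 ≤ B) (eg : EB B g) (eh : EB B h) (eβ : EB B β) (eγ : EB B γ) :
    EB (c1 (Fintype.card ι) B) (bH g h β γ) := by
  have p2 : (0 : ℝ) ≤ Fintype.card ι * B ^ 2 := by positivity
  have p3 : (0 : ℝ) ≤ (Fintype.card ι : ℝ) ^ 2 * B ^ 3 := by positivity
  have p1 : 0 ≤ Fintype.card ι * B * B := by positivity
  refine EB.blocks ?_ ?_ ?_ ?_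
  · exact eh.mono (by rw [c1]; nlinarith)
  · exact (eh.mul hB eβ).neg.mono (by rw [c1]; nlinarith)
  · exact (eγ.mul hB eh).neg.mono (by rw [c1]; nlinarith)
  · exact (eg.tr.add ((eγ.mul hB eh).mul p1 eβ)).mono (by rw [c1]; nlinarith)

/-- bound on the derivative of the generalized metric -/
lemma EB_dG {A : Type*} [CommRing A] [Algebra ℂ A] (e : A →+* ℂ) (δ : Derivation ℂ A A) {g h β γ : Matrix ι ι A}
    {B : ℝ} (hB : 0 ≤ B) (eh : EB B (h.map e)) (eβ : EB B (β.map e)) (eγ : EB B (γ.map e))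
    (dg : EB B ((g.map δ).map e)) (dh : EB B ((h.map δ).map e)) (dβ : EB B ((β.map δ).map e))
    (dγ : EB B ((γ.map δ).map e)) : EB (c1 (Fintype.card ι) B) (((bG g h β γ).map δ).map e) := by
  have p2 : (0 : ℝ) ≤ Fintype.card ι * B ^ 2 := by positivity
  have p3 : (0 : ℝ) ≤ (Fintype.card ι : ℝ) ^ 2 * B ^ 3 := by positivity
  have p1 : 0 ≤ Fintype.card ι * B * B := by positivity
  have p11 : 0 ≤ Fintype.card ι * B * B + Fintype.card ι * B * B := by positivity
  simp only [bG, fromBlocks_map, md_add, md_mul, md_transpose, Matrix.map_add _ e.map_add, Matrix.map_mul,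
    transpose_map]
  have t1 := eh.tr
  have t2 := dh.tr
  rw [← transpose_map] at t1 t2
  refine EB.blocks ?_ ?_ ?_ ?_
  · refine (dg.add (((((dβ.mul hB t1)).add (eβ.mul hB t2)).mul p11 eγ).add ((eβ.mul hB t1).mul p1 dγ))).mono ?_
    rw [c1]; nlinarith
  · exact ((dβ.mul hB t1).add (eβ.mul hB t2)).mono (by rw [c1]; nlinarith)
  · exact ((t2.mul hB eγ).add (t1.mul hB dγ)).mono (by rw [c1]; nlinarith)
  · exact t2.mono (by rw [c1]; nlinarith)
end cm
end Calabi


namespace Calabi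
set_option linter.all false
section fin
open TopologicalSpace
variable {n : ℕ}

lemma upsNorm_eq (g : ℝ × (Fin n → ℂ) → Matrix (Fin n) (Fin n) ℂ)
    {κ : Type*} [Fintype κ] [DecidableEq κ]
    (G Gt H : ℝ × (Fin n → ℂ) → Matrix κ κ ℂ) (p : ℝ × (Fin n → ℂ)) :
    upsNormP g G Gt H p = Q (g p)⁻¹ (G p)⁻¹ (H p) (fun i => Matrix.of fun a d => UpsP G Gt i a d p)
      (fun i => Matrix.of fun a d => UpsP G Gt i a d p) := by
  have h : ∀ (V W X Y : Matrix κ κ ℂ), trace (V * X * Wᴴ * Y)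
      = ∑ a, ∑ b, ∑ d, ∑ e, Y b a * X d e * V a d * star (W b e) := by
    intro V W X Y
    rw [trace]
    refine Finset.sum_congr rfl fun a _ => ?_
    rw [diag_apply, Matrix.mul_apply]
    refine Finset.sum_congr rfl fun b _ => ?_
    rw [Matrix.mul_apply, Finset.sum_comm, Finset.sum_mul]
    refine Finset.sum_congr rfl fun e _ => ?_
    rw [Matrix.mul_apply, Finset.sum_mul, Finset.sum_mul]
    refine Finset.sum_congr rfl fun d _ => ?_
    rw [conjTranspose_apply]
    ring
  rw [upsNormP, Q]
  refine Finset.sum_congr rfl fun i _ => Finset.sum_congr rfl fun j _ => ?_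
  rw [h]
  simp only [Finset.mul_sum]
  refine Finset.sum_congr rfl fun a _ => Finset.sum_congr rfl fun b _ => Finset.sum_congr rfl fun d _ =>
    Finset.sum_congr rfl fun e _ => ?_
  simp only [Matrix.of_apply, starRingEnd_apply]
  ring

lemma trace_lr_le {ι : Type*} [Fintype ι] [DecidableEq ι] {A B C D : Matrix ι ι ℂ}
    (h : (fromBlocks A B C D).PosSemidef) : (trace D).re ≤ (trace (fromBlocks A B C D)).re := by
  have hA : A.PosSemidef := by
    have := h.submatrix Sum.inl
    exact this
  have e : trace (fromBlocks A B C D) = trace A + trace D := by simp [trace, Fintype.sum_sum_type]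
  rw [e, Complex.add_re]
  have := (Complex.le_def.1 hA.trace_nonneg).1
  simp only [Complex.zero_re] at this
  linarith

/-- the common bound for the traces -/
def cM (n : ℕ) (Λ B : ℝ) : ℝ := 1 + Λ * (2 * n * c1 n B)

lemma trace_bounds {Λ B : ℝ} {g β gt βt : Matrix (Fin n) (Fin n) ℂ} (hg : g.PosDef) (hgt : gt.PosDef)
    (hΛ : 1 ≤ Λ) (hB : 0 ≤ B) (eg : EB B gt) (eh : EB B gt⁻¹) (eβ : EB B βt)
    (L1 : (genMetric g β - ((Λ : ℂ))⁻¹ • genMetric gt βt).PosSemidef)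
    (L2 : ((Λ : ℂ) • genMetric gt βt - genMetric g β).PosSemidef) :
    (trace g⁻¹).re ≤ cM n Λ B ∧ (trace (genMetric g β)).re ≤ cM n Λ B ∧
      (trace (genMetric g β)⁻¹).re ≤ cM n Λ B := by
  have hΛ0 : (0 : ℝ) < Λ := by linarith
  have hc : (Fintype.card (Fin n ⊕ Fin n) : ℝ) = 2 * n := by simp; ring
  have bG1 : (trace (genMetric gt βt)).re ≤ 2 * n * c1 n B := by
    have := (EB_bG hB eg eh eβ eβ.ct).trace_le
    rw [← genMetric_eq hgt, hc, Fintype.card_fin] at this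
    exact this
  have bH1 : (trace (genMetric gt βt)⁻¹).re ≤ 2 * n * c1 n B := by
    have := (EB_bH hB eg eh eβ eβ.ct).trace_le
    rw [← genMetric_inv hgt, hc, Fintype.card_fin] at this
    exact this
  have k2 : (trace (genMetric g β)).re ≤ cM n Λ B := by
    have := trace_re_le L2
    rw [trace_smul, smul_eq_mul, Complex.re_ofReal_mul] at this
    have h2 := mul_le_mul_of_nonneg_left bG1 hΛ0.le
    rw [cM]; linarith
  have hpsd := genMetric_psd hg β
  refine ⟨le_trans ?_ k2, k2, ?_⟩
  · have := hpsd
    rw [genMetric_eq hg, bG] at this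
    have := trace_lr_le this
    rw [trace_transpose] at this
    rw [genMetric_eq hg, bG]
    exact this
  · have mi : ∀ {x : Matrix (Fin n) (Fin n) ℂ} (hx : x.PosDef) (y : Matrix (Fin n) (Fin n) ℂ),
        genMetric x y * (genMetric x y)⁻¹ = 1 := by
      intro x hx y
      rw [genMetric_inv hx, genMetric_eq hx]
      exact bG_mul_bH (gen_mul_inv hx) y yᴴ
    have hne : (Λ : ℂ) ≠ 0 := by exact_mod_cast hΛ0.ne'
    have hl : (Λ : ℂ) • (genMetric gt βt)⁻¹ - (genMetric g β)⁻¹ |>.PosSemidef := by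
      refine loewner_inv (X := ((Λ : ℂ))⁻¹ • genMetric gt βt) ?_ hpsd.inv ?_ (mi hg β) L1
      · refine (genMetric_psd hgt βt).inv.smul ?_
        exact_mod_cast hΛ0.le
      · rw [smul_mul_smul_comm, mi hgt, inv_mul_cancel₀ hne, one_smul]
    have := trace_re_le hl
    rw [trace_smul, smul_eq_mul, Complex.re_ofReal_mul] at this
    have h2 := mul_le_mul_of_nonneg_left bH1 hΛ0.le
    rw [cM]; linarith

lemma ct_ev {U : Opens (ℝ × (Fin n → ℂ))} (p : U) (β : Matrix (Fin n) (Fin n) (SA U)) :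
    (βᴴ).map (ev p) = (β.map (ev p))ᴴ := rfl

/-- the connection of the background is bounded -/
lemma back_bound {U : Opens (ℝ × (Fin n → ℂ))} {B : ℝ} (hB : 0 ≤ B) (gt βt : (Fin n → ℂ) → Matrix (Fin n) (Fin n) ℂ)
    (sg : ∀ a b, ContDiffOn ℝ (⊤ : ℕ∞) (fun q : ℝ × (Fin n → ℂ) => gt q.2 a b) (U : Set (ℝ × (Fin n → ℂ))))
    (sβ : ∀ a b, ContDiffOn ℝ (⊤ : ℕ∞) (fun q : ℝ × (Fin n → ℂ) => βt q.2 a b) (U : Set (ℝ × (Fin n → ℂ))))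
    (pg : ∀ q ∈ U, (gt q.2).PosDef)
    (hb : ∀ q ∈ U, ∀ a b, BoundedDerivs2 B (fun w => gt w a b) q.2 ∧
          BoundedDerivs2 B (fun w => (gt w)⁻¹ a b) q.2 ∧
          BoundedDerivs2 B (fun w => βt w a b) q.2) (p : U) (i : Fin n) :
    EB (2 * n * c1 n B * c1 n B) (Matrix.of fun a c => ∑ b,
      wdP i (fun q : ℝ × (Fin n → ℂ) => genMetric (gt q.2) (βt q.2) a b) p.1 * (genMetric (gt p.1.2) (βt p.1.2))⁻¹ b c) := by
  obtain ⟨h, gh, eh⟩ := mA_inv (mA (fun q => gt q.2) sg) (fun p => by rw [mA_ev]; exact pg p.1 p.2)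
  have e1 : ∀ p : U, (bG (mA (fun q => gt q.2) sg) h (mA (fun q => βt q.2) sβ) (mA (fun q => βt q.2) sβ)ᴴ).map (ev p)
      = genMetric (gt p.1.2) (βt p.1.2) := by
    intro p
    rw [bG_map, eh, ct_ev, mA_ev, mA_ev, genMetric_eq (pg p.1 p.2)]
  have e2 : ∀ a b, wdP i (fun q : ℝ × (Fin n → ℂ) => genMetric (gt q.2) (βt q.2) a b) p.1
      = ev p (wD i (bG (mA (fun q => gt q.2) sg) h (mA (fun q => βt q.2) sβ) (mA (fun q => βt q.2) sβ)ᴴ a b)) := by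
    intro a b
    exact wD_apply i _ _ (fun p => (congrFun (congrFun (e1 p) a) b).symm) p
  have c0 : 0 ≤ c1 n B := by rw [c1]; positivity
  have eh' : h.map (ev p) = (gt p.1.2)⁻¹ := by rw [eh, mA_ev]
  have b2 : EB (c1 n B) (genMetric (gt p.1.2) (βt p.1.2))⁻¹ := by
    rw [genMetric_inv (pg p.1 p.2)]
    have := EB_bH (g := gt p.1.2) (h := (gt p.1.2)⁻¹) (β := βt p.1.2) (γ := (βt p.1.2)ᴴ) hB
      (fun a b => (hb p.1 p.2 a b).1.1) (fun a b => (hb p.1 p.2 a b).2.1.1)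
      (fun a b => (hb p.1 p.2 a b).2.2.1) (EB.ct (fun a b => (hb p.1 p.2 a b).2.2.1))
    rwa [Fintype.card_fin] at this
  have b1 := EB_dG (ev p) (wD i) (g := mA (fun q => gt q.2) sg) (h := h) (β := mA (fun q => βt q.2) sβ)
    (γ := (mA (fun q => βt q.2) sβ)ᴴ) hB (by rw [eh']; exact fun a b => (hb p.1 p.2 a b).2.1.1)
    (by rw [mA_ev]; exact fun a b => (hb p.1 p.2 a b).2.2.1)
    (by rw [ct_ev, mA_ev]; exact EB.ct (fun a b => (hb p.1 p.2 a b).2.2.1))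
    (by
      intro a b
      have := ((hb p.1 p.2 a b).1.2.1 i).1
      rwa [(wd_ev i (mA (fun q => gt q.2) sg a b) (fun w => gt w a b) (fun _ => rfl) p).1] at this)
    (by
      intro a b
      have := ((hb p.1 p.2 a b).2.1.2.1 i).1
      rwa [(wd_ev i (h a b) (fun w => (gt w)⁻¹ a b) (fun p => (congrFun (congrFun (eh p) a) b).symm) p).1] at this)
    (by
      intro a b
      have := ((hb p.1 p.2 a b).2.2.2.1 i).1
      rwa [(wd_ev i (mA (fun q => βt q.2) sβ a b) (fun w => βt w a b) (fun _ => rfl) p).1] at this)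
    (by
      intro a b
      have := ((hb p.1 p.2 b a).2.2.2.1 i).2
      rw [(wd_ev i (mA (fun q => βt q.2) sβ b a) (fun w => βt w b a) (fun _ => rfl) p).2, ← norm_star, ← ev_star,
        wB_star] at this
      exact this)
  rw [Fintype.card_fin] at b1
  have hc : (Fintype.card (Fin n ⊕ Fin n) : ℝ) = 2 * n := by simp; ring
  have b3 := EB.mul c0 b1 b2
  rw [hc] at b3
  intro a c
  have := b3 a c
  rw [Matrix.mul_apply] at this
  simp only [Matrix.of_apply, e2]
  exact this

lemma eball_half {R : ℝ} (hR : 0 < R) {x : Fin n → ℂ} (hx : x ∈ eball (n := n) (R / 2)) : x ∈ eball (n := n) R := by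
  simp only [eball, Set.mem_setOf_eq] at hx ⊢
  refine hx.trans ?_
  nlinarith
end fin
end Calabi

set_option maxHeartbeats 1000000 in
/-- Proposition 4.1: Calabi-type `C¹` estimate for pluriclosed flow:
if `Λ⁻¹·G̃ ≤ G ≤ Λ·G̃` on `[0,τ) × B_R(0)` then `|Υ|² ≤ K·(1/t + R⁻⁴)` on
`(0,τ) × B_{R/2}(0)`, with `K` depending only on `n`, `Λ`, and a bound `B` for the
background and its derivatives up to order two. -/
theorem calabi_C1_estimate (n : ℕ) (hn : 0 < n) (Λ B : ℝ) (hΛ : 1 ≤ Λ) :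
    ∃ K : ℝ,
      ∀ τ R : ℝ, 0 < τ → τ ≤ 1 → 0 < R → R ≤ 1 →
      ∀ g β : ℝ × (Fin n → ℂ) → Matrix (Fin n) (Fin n) ℂ,
      ∀ gt βt : (Fin n → ℂ) → Matrix (Fin n) (Fin n) ℂ,
        -- smoothness of the solution and the background
        (∀ a b : Fin n, ContDiffOn ℝ (⊤ : ℕ∞) (fun q => g q a b) (Set.Ico 0 τ ×ˢ eball R)) →
        (∀ a b : Fin n, ContDiffOn ℝ (⊤ : ℕ∞) (fun q => β q a b) (Set.Ico 0 τ ×ˢ eball R)) →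
        (∀ a b : Fin n, ContDiffOn ℝ (⊤ : ℕ∞) (fun z => gt z a b) (eball R)) →
        (∀ a b : Fin n, ContDiffOn ℝ (⊤ : ℕ∞) (fun z => βt z a b) (eball R)) →
        (∀ q ∈ Set.Ico 0 τ ×ˢ eball (n := n) R, (g q).PosDef) →
        (∀ q ∈ Set.Ico 0 τ ×ˢ eball (n := n) R, (β q)ᵀ = -(β q)) →
        (∀ z ∈ eball (n := n) R, (gt z).PosDef) →
        (∀ z ∈ eball (n := n) R, (βt z)ᵀ = -(βt z)) →
        -- β is a torsion potential for g and the pluriclosed flow equations hold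
        (∀ q ∈ Set.Ico 0 τ ×ˢ eball (n := n) R, ∀ i j k : Fin n,
          wdbP k (fun r => β r i j) q = torsionP g i j k q) →
        (∀ q ∈ Set.Ico 0 τ ×ˢ eball (n := n) R, ∀ i j : Fin n,
          dtP (fun r => g r i j) q = - traceChernP g g i j q + torsionSqP g i j q) →
        (∀ q ∈ Set.Ico 0 τ ×ˢ eball (n := n) R, ∀ i j : Fin n,
          dtP (fun r => β r i j) q = lapBetaP g β i j q) →
        -- uniform equivalence Λ⁻¹·G̃ ≤ G ≤ Λ·G̃ of the generalized metrics
        (∀ q ∈ Set.Ico 0 τ ×ˢ eball (n := n) R,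
          (genMetric (g q) (β q) - ((Λ : ℂ))⁻¹ • genMetric (gt q.2) (βt q.2)).PosSemidef ∧
          ((Λ : ℂ) • genMetric (gt q.2) (βt q.2) - genMetric (g q) (β q)).PosSemidef) →
        -- bounds on the background up to order two
        (∀ z ∈ eball (n := n) R, ∀ a b : Fin n,
          BoundedDerivs2 B (fun w => gt w a b) z ∧
          BoundedDerivs2 B (fun w => (gt w)⁻¹ a b) z ∧
          BoundedDerivs2 B (fun w => βt w a b) z) →
        -- conclusion
        ∀ t ∈ Set.Ioo 0 τ, ∀ x ∈ eball (n := n) (R / 2),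
          (upsNormP g (fun s => genMetric (g s) (β s))
              (fun s => genMetric (gt s.2) (βt s.2)) (fun s => genMetric (g s) (β s))
              (t, x)).re ≤ K * (1 / t + R⁻¹ ^ 4) := by
  obtain hB | hB := lt_or_ge B 0
  · refine ⟨0, fun τ R hτ hτ1 hR hR1 g β gt βt sg sβ sgt sβt pg aβ pgt aβt tor fg fβ hL hb t ht x hx => ?_⟩
    exfalso
    have := (hb x (Calabi.eball_half hR hx) ⟨0, hn⟩ ⟨0, hn⟩).1.1
    exact absurd (this.trans_lt hB) (not_lt.2 (norm_nonneg _))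
  set M : ℝ := Calabi.cM n Λ B with hMd
  set CQ : ℝ := M ^ 3 * ((2 * n) ^ 2 * n * (2 * n * Calabi.c1 n B * Calabi.c1 n B) ^ 2) with hCQ
  have c0 : 0 ≤ Calabi.c1 n B := by rw [Calabi.c1]; positivity
  have hM : 1 ≤ M := by
    have : 0 ≤ Λ * (2 * n * Calabi.c1 n B) := by positivity
    rw [hMd, Calabi.cM]; linarith
  have hCQ0 : 0 ≤ CQ := by positivity
  refine ⟨2 * (8 * (576 * (2 * n) * M ^ 5 + 36 * M ^ 3)) + 2 * CQ,
    fun τ R hτ hτ1 hR hR1 g β gt βt sg sβ sgt sβt pg aβ pgt aβt tor fg fβ hL hb t ht x hx => ?_⟩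
  have hU : ((Calabi.Uo n τ R : TopologicalSpace.Opens _) : Set (ℝ × (Fin n → ℂ))) ⊆ Set.Ico 0 τ ×ˢ eball R :=
    Set.prod_mono Set.Ioo_subset_Ico_self subset_rfl
  have hU2 : Set.MapsTo (Prod.snd : ℝ × (Fin n → ℂ) → _) (Calabi.Uo n τ R : Set (ℝ × (Fin n → ℂ))) (eball R) :=
    fun q hq => hq.2
  have hxR := Calabi.eball_half hR hx
  have hp : ((t, x) : ℝ × (Fin n → ℂ)) ∈ Calabi.Uo n τ R := ⟨ht, hxR⟩
  obtain ⟨S, hS, hFG, hFg, hdt, hd, hdb, eg, eG, eH⟩ := Calabi.exists_fl (U := Calabi.Uo n τ R) g β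
    (fun a b => (sg a b).mono hU) (fun a b => (sβ a b).mono hU) (fun q hq => pg q (hU hq)) (fun q hq => aβ q (hU hq))
    (fun q hq => tor q (hU hq)) (fun q hq => fg q (hU hq)) (fun q hq => fβ q (hU hq))
  have vg : ∀ p, S.g.map (Calabi.ev p) = g p.1 := fun p => by rw [eg]; rfl
  have vh : ∀ p, S.h.map (Calabi.ev p) = (g p.1)⁻¹ := fun p => by
    symm
    apply Matrix.inv_eq_right_inv
    rw [← vg, ← Matrix.map_mul, S.gh]
    simp
  have vG : ∀ p, S.G.map (Calabi.ev p) = genMetric (g p.1) (β p.1) := fun p => by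
    rw [eG, Calabi.bG_map, vg, vh, Calabi.ct_ev, Calabi.mA_ev, Calabi.genMetric_eq (pg p.1 (hU p.2))]
  have vH : ∀ p, S.H.map (Calabi.ev p) = (genMetric (g p.1) (β p.1))⁻¹ := fun p => by
    rw [eH, Calabi.bH_map, vg, vh, Calabi.ct_ev, Calabi.mA_ev, Calabi.genMetric_inv (pg p.1 (hU p.2))]
  have tb : ∀ p : Calabi.Uo n τ R, _ := fun p => Calabi.trace_bounds (pg p.1 (hU p.2)) (pgt p.1.2 (hU2 p.2)) hΛ hB
    (fun a b => (hb p.1.2 (hU2 p.2) a b).1.1) (fun a b => (hb p.1.2 (hU2 p.2) a b).2.1.1)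
    (fun a b => (hb p.1.2 (hU2 p.2) a b).2.2.1) (hL p.1 (hU p.2)).1 (hL p.1 (hU p.2)).2
  have ph : ∀ p, (S.h.map (Calabi.ev p)).PosSemidef := fun p => by
    rw [vh]; exact (pg p.1 (hU p.2)).inv.posSemidef
  have pG : ∀ p, (S.G.map (Calabi.ev p)).PosSemidef := fun p => by
    rw [vG]; exact Calabi.genMetric_psd (pg p.1 (hU p.2)) _
  have pH : ∀ p, (S.H.map (Calabi.ev p)).PosSemidef := fun p => by
    rw [vH]; exact (Calabi.genMetric_psd (pg p.1 (hU p.2)) _).inv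
  have th : ∀ p, (trace (S.h.map (Calabi.ev p))).re ≤ M := fun p => by rw [vh]; exact (tb p).1
  have tG : ∀ p, (trace (S.G.map (Calabi.ev p))).re ≤ M := fun p => by rw [vG]; exact (tb p).2.1
  have tH : ∀ p, (trace (S.H.map (Calabi.ev p))).re ≤ M := fun p => by rw [vH]; exact (tb p).2.2
  have hn1 : (1 : ℝ) ≤ n := by exact_mod_cast hn
  have hc : (Fintype.card (Fin n ⊕ Fin n) : ℝ) = 2 * n := by simp; ring
  have key := Calabi.core S hS hFG hFg hdt hd hdb hM (by linarith : (1 : ℝ) ≤ 2 * n) hc.le hR hR1 ph pG pH th tG tH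
    ⟨(t, x), hp⟩ hx
  have bb := Calabi.back_bound (U := Calabi.Uo n τ R) hB gt βt
    (fun a b => (sgt a b).comp contDiff_snd.contDiffOn hU2) (fun a b => (sβt a b).comp contDiff_snd.contDiffOn hU2)
    (fun q hq => pgt q.2 (hU2 hq)) (fun q hq => hb q.2 (hU2 hq)) ⟨(t, x), hp⟩
  have q1 := Calabi.Q_bound (ph ⟨(t, x), hp⟩) (pH ⟨(t, x), hp⟩) (pG ⟨(t, x), hp⟩) _ (th _) (tH _) (tG _) bb
  have q2 := Calabi.Q_sub_le (ph ⟨(t, x), hp⟩) (pH ⟨(t, x), hp⟩) (pG ⟨(t, x), hp⟩)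
    (fun i => (S.Γ i).map (Calabi.ev ⟨(t, x), hp⟩)) (fun i => Matrix.of fun a c => ∑ b,
      wdP i (fun q : ℝ × (Fin n → ℂ) => genMetric (gt q.2) (βt q.2) a b) (t, x) * (genMetric (gt x) (βt x))⁻¹ b c)
  have q2 := (Complex.le_def.1 q2).1
  rw [← Calabi.Q_map _ (Calabi.ev_star _), ← hS.f_eq] at q2
  rw [Calabi.upsNorm_eq]
  have eV : (fun i => Matrix.of fun a d => UpsP (fun s => genMetric (g s) (β s))
      (fun s => genMetric (gt s.2) (βt s.2)) i a d (t, x))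
      = (fun i => (S.Γ i).map (Calabi.ev ⟨(t, x), hp⟩)) - (fun i => Matrix.of fun a c => ∑ b,
      wdP i (fun q : ℝ × (Fin n → ℂ) => genMetric (gt q.2) (βt q.2) a b) (t, x) * (genMetric (gt x) (βt x))⁻¹ b c) := by
    funext i
    ext a d
    rw [Pi.sub_apply, Matrix.sub_apply, Matrix.of_apply, Matrix.of_apply, UpsP, Finset.sum_sub_distrib]
    congr 1
    rw [Calabi.Fl.Γ, Matrix.map_mul, vH, Matrix.mul_apply]
    refine Finset.sum_congr rfl fun c _ => ?_
    congr 1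
    rw [hd]
    exact Calabi.wD_apply i (S.G a c) _ (fun p => (congrFun (congrFun (vG p) a) c).symm) ⟨(t, x), hp⟩
  rw [eV]
  rw [vh, vH, vG] at q2 q1
  refine q2.trans ?_
  rw [hc, Fintype.card_fin] at q1
  have ht1 : 1 ≤ 1 / t := by rw [le_div_iff₀ ht.1]; linarith [ht.2]
  have hR4 : 0 ≤ R⁻¹ ^ 4 := by positivity
  have q3 : CQ ≤ CQ * (1 / t + R⁻¹ ^ 4) := le_mul_of_one_le_right hCQ0 (by linarith)
  simp only [Complex.add_re, Complex.mul_re, Complex.re_ofNat, Complex.im_ofNat, zero_mul, sub_zero]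
  calc _ ≤ 2 * (8 * (576 * (2 * n) * M ^ 5 + 36 * M ^ 3) * (1 / t + R⁻¹ ^ 4)) + 2 * (CQ * (1 / t + R⁻¹ ^ 4)) :=
        add_le_add (mul_le_mul_of_nonneg_left key zero_le_two)
          (mul_le_mul_of_nonneg_left (q1.trans q3) zero_le_two)
    _ = _ := by ring
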